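/- Let Ω ⊂ ℝ² be open, bounded, simply connected with C^∞ boundary, p ∈ C^∞(Ω̄) with p > 0 on Ω, and k ≥ 1 with λ_k simple (λ_{k-1} < λ_k < λ_{k+1}, with λ₀ := −∞). Suppose the eigenfunction φ_k associated with λ_k has a zero of order 1 at b ∈ ∂Ω, i.e. φ_k is C¹ up to the boundary near b, φ_k(b) = 0 and ∇φ_k(b) ≠ 0 (no nodal line of φ_k ends at b). Then there exist C > 0 and δ > 0 such that for every a ∈ Ω with |a − b| < δ one has λ_k^a ≥ λ_k + C·dist(a,∂Ω)². -/

import Mathlib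

/-!
Write `λ = λ_k`, `φ = φ_k`, and let `Q_a(u) = ∫ |(i∇ + A_a)u|² - λ ∫ p|u|²`. By the min-max
principle for `λ_k^a` (`final_reduce`) it suffices to find, in every `k`-dimensional space `V` of test
functions on `Ω \ {a}`, some `u ≠ 0` with `dist(a, ∂Ω)² ∫ p|u|² ≤ C Q_a(u)`.

*Choice of `u`.* Since `Ω` is simply connected and the pole `a` is close to `b ∈ ∂Ω`, a gauge `J`
(a branch of `|x - a|^{1/2} / (x - a)^{1/2}`, `exists_gauge`) removes the potential `A_a` outside a
small ball around `b`. Let `f` be a compactly supported approximation of `φ` that agrees with `φ`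
near the supports of all members of `V`, with form excess at most `ω` (`Eig.approx`), and let `χ` be
a logarithmic cutoff vanishing near `b`. The map `(u, c) ↦ χ (J u + c f)` from `V × ℂ` to test
functions has a domain of dimension `k + 1`, so some `(u, c) ≠ 0` has Rayleigh quotient at least
`λ + g`, where `g` is half the gap `λ_{k+1} - λ_k` (`minmax_test`).

*Upper bounds.* Near `b` the function `φ` does not vanish in `Ω`, so there the quadratic form can be
rewritten as the ground-state energy `∫ φ² |(i∇ + A)(u/φ)|²` (`Eig.groundState`). This rewriting
together with a Hardy inequality at `b` (`Eig.hardy`) pays for the gradient of `χ`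
(`cutoff_bound`). As `φ` solves the equation, the cross terms between `J u` and `c f` vanish
(`Qo_split`). The result (`key1`) is that both the mass of `χ (J u + c f)` and the ground-state energy
of `u` near `b` are bounded by `C (Q_a(u) + 2ω|c|²)`.

*Lower bound.* The half-integer flux makes `e^{-iθ/2} u/φ` antiperiodic on circles about `a`, which
yields a Poincaré inequality without mean value on a disc of radius comparable to `φ(a)`
(`Eig.ab_ball`). Integrating along the inner normal carries this control to a rectangle at a fixed
depth (`Eig.transport`), where `J u + c f` has size at least `|c| φ` up to `|u|`. Hence
`φ(a)² |c|² ≤ C (mass + energy)` (`sink_bound`). With `ω` a small multiple of `φ(a)²` the error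
`2ω|c|²` is absorbed, and `mass_bound` turns the estimate into `φ(a)² ∫ p|u|² ≤ C Q_a(u)`
(`arith_final`), which also forces `u ≠ 0`. Finally `dist(a, ∂Ω) ≤ 2 φ(a)` once `φ` is normalised
to have inner normal derivative `1` at `b` (`exists_loc`).
-/

open MeasureTheory Real Filter Set Asymptotics

noncomputable section

/-- The open half-disk `D_r⁺(c)`: points at distance `< r` from `c` with positive
first coordinate (we identify `ℝ²` with `ℂ`). -/
def halfDisk (c : ℂ) (r : ℝ) : Set ℂ := {x : ℂ | dist x c < r ∧ 0 < x.re}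

/-- Projection onto the axis `{x₁ = 0}`: `π(a) = (0, a₂)`. -/
def proj (a : ℂ) : ℂ := (a.im : ℂ) * Complex.I

/-- First partial derivative of a complex-valued function on `ℝ² = ℂ`. -/
def pd1 (u : ℂ → ℂ) (x : ℂ) : ℂ := fderiv ℝ u x 1

/-- Second partial derivative of a complex-valued function on `ℝ² = ℂ`. -/
def pd2 (u : ℂ → ℂ) (x : ℂ) : ℂ := fderiv ℝ u x Complex.I

/-- The Aharonov–Bohm potential `A_a(x)`, encoded as the complex number whose real and
imaginary parts are its two components:
`A_a(x) = (1/2)(−(x₂−a₂)/|x−a|², (x₁−a₁)/|x−a|²) = i(x−a)/(2|x−a|²)`. -/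
def abPot (a x : ℂ) : ℂ := Complex.I * (x - a) / (2 * (‖x - a‖ : ℂ) ^ 2)

/-- First component of `A_a`. -/
def abPot1 (a x : ℂ) : ℝ := (abPot a x).re

/-- Second component of `A_a`. -/
def abPot2 (a x : ℂ) : ℝ := (abPot a x).im

/-- First component of the magnetic gradient `(i∇ + A_a)u`. -/
def mg1 (a : ℂ) (u : ℂ → ℂ) (x : ℂ) : ℂ := Complex.I * pd1 u x + (abPot1 a x : ℂ) * u x

/-- Second component of the magnetic gradient `(i∇ + A_a)u`. -/
def mg2 (a : ℂ) (u : ℂ → ℂ) (x : ℂ) : ℂ := Complex.I * pd2 u x + (abPot2 a x : ℂ) * u x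

/-- `|(i∇+A_a)u|²`. -/
def mgSq (a : ℂ) (u : ℂ → ℂ) (x : ℂ) : ℝ := ‖mg1 a u x‖ ^ 2 + ‖mg2 a u x‖ ^ 2

/-- Arclength integral of `f` over the circular part `∂D_r⁺(c)` of the boundary of a
half-disk centered at a point `c` on the axis `{x₁ = 0}`, parametrized by the angle
`θ ∈ (−π/2, π/2)`. -/
def bdryInt (c : ℂ) (r : ℝ) (f : ℂ → ℝ) : ℝ :=
  ∫ θ in Ioo (-(π / 2)) (π / 2), r * f (circleMap c r θ)

/-- `|∇u|²` for complex-valued `u`. -/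
def gradSqC (u : ℂ → ℂ) (x : ℂ) : ℝ := ‖pd1 u x‖ ^ 2 + ‖pd2 u x‖ ^ 2

/-- The `k`-th eigenvalue of the Dirichlet Laplacian with weight `p` on `Ω`, via the
min-max characterization over `k`-dimensional complex subspaces of `C_c^∞(Ω;ℂ)`. -/
def eigenvalueND (Ω : Set ℂ) (p : ℂ → ℝ) (k : ℕ) : ℝ :=
  sInf { t : ℝ | ∃ V : Submodule ℂ (ℂ → ℂ), Module.finrank ℂ V = k ∧
    (∀ u ∈ V, ContDiff ℝ (⊤ : ℕ∞) u ∧ HasCompactSupport u ∧ tsupport u ⊆ Ω) ∧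
    t = sSup { s : ℝ | ∃ u ∈ V, u ≠ 0 ∧
      s = (∫ x in Ω, gradSqC u x) / ∫ x in Ω, p x * ‖u x‖ ^ 2 } }

/-- The `k`-th magnetic (Aharonov–Bohm) eigenvalue `λ_k^a` with pole `a`, via the
min-max characterization over `k`-dimensional complex subspaces of `C_c^∞(Ω∖{a};ℂ)`. -/
def eigenvalueAB (Ω : Set ℂ) (p : ℂ → ℝ) (a : ℂ) (k : ℕ) : ℝ :=
  sInf { t : ℝ | ∃ V : Submodule ℂ (ℂ → ℂ), Module.finrank ℂ V = k ∧
    (∀ u ∈ V, ContDiff ℝ (⊤ : ℕ∞) u ∧ HasCompactSupport u ∧ tsupport u ⊆ Ω \ {a}) ∧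
    t = sSup { s : ℝ | ∃ u ∈ V, u ≠ 0 ∧
      s = (∫ x in Ω, mgSq a u x) / ∫ x in Ω, p x * ‖u x‖ ^ 2 } }

/-- The Laplacian of a real-valued function on `ℝ² = ℂ`. -/
def lapR (u : ℂ → ℝ) (x : ℂ) : ℝ :=
  fderiv ℝ (fun y => fderiv ℝ u y 1) x 1 +
    fderiv ℝ (fun y => fderiv ℝ u y Complex.I) x Complex.I

/-- A (real-valued) eigenfunction of the Dirichlet Laplacian with weight `p` on `Ω`
associated with the eigenvalue `lam`: nonzero, smooth on `Ω`, continuous on `Ω̄`,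
vanishing on `∂Ω`, with `−Δφ = lam·p·φ` in `Ω`. -/
def IsDirichletEigenfunction (Ω : Set ℂ) (p : ℂ → ℝ) (lam : ℝ) (φ : ℂ → ℝ) : Prop :=
  (∃ x ∈ Ω, φ x ≠ 0) ∧ ContDiffOn ℝ (⊤ : ℕ∞) φ Ω ∧ ContinuousOn φ (closure Ω) ∧
    (∀ x ∈ frontier Ω, φ x = 0) ∧ ∀ x ∈ Ω, - lapR φ x = lam * p x * φ x

/-- `Ω` has `C^∞` boundary: near each boundary point it is the sublevel set of a
smooth function with nonvanishing differential. -/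
def HasSmoothBoundary (Ω : Set ℂ) : Prop :=
  ∀ z ∈ frontier Ω, ∃ (U : Set ℂ) (f : ℂ → ℝ), IsOpen U ∧ z ∈ U ∧
    ContDiff ℝ (⊤ : ℕ∞) f ∧ (∀ x ∈ U, fderiv ℝ f x ≠ 0) ∧ Ω ∩ U = {x ∈ U | f x < 0}

/-- `φ` has a zero of order `m` at the boundary point `b ∈ ∂Ω`: on `Ω̄` near `b` it
coincides with a `C^m` function `g` all of whose derivatives of order `< m` vanish at
`b`, while some derivative of order `m` does not. -/
def HasBoundaryZero (Ω : Set ℂ) (φ : ℂ → ℝ) (b : ℂ) (m : ℕ) : Prop :=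
  ∃ (U : Set ℂ) (g : ℂ → ℝ), U ∈ nhds b ∧ ContDiff ℝ m g ∧
    Set.EqOn g φ (closure Ω ∩ U) ∧
    (∀ j : ℕ, j < m → iteratedFDeriv ℝ j g b = 0) ∧ iteratedFDeriv ℝ m g b ≠ 0

/-! ### Calculus preliminaries and the weak equation -/

/-- First partial derivative of a real-valued function on `ℝ² = ℂ`. -/
def d1 (f : ℂ → ℝ) (x : ℂ) : ℝ := fderiv ℝ f x 1
/-- Second partial derivative of a real-valued function on `ℝ² = ℂ`. -/
def d2 (f : ℂ → ℝ) (x : ℂ) : ℝ := fderiv ℝ f x Complex.I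

theorem fderiv_eq_d (f : ℂ → ℝ) (x v : ℂ) :
    fderiv ℝ f x v = v.re * d1 f x + v.im * d2 f x := by
  have : v = v.re • (1 : ℂ) + v.im • Complex.I := by
    simp [Complex.re_add_im]
  conv_lhs => rw [this]
  rw [map_add, map_smul, map_smul]; rfl

theorem integrable_of_compact {f : ℂ → ℝ} {K : Set ℂ} (hK : IsCompact K)
    (hf : ContinuousOn f K) (h0 : ∀ x, x ∉ K → f x = 0) : Integrable f :=
  (hf.integrableOn_compact hK).integrable_of_forall_notMem_eq_zero h0

theorem contDiff_of_compact {F : ℂ → ℝ} {K N : Set ℂ} (hK : IsCompact K) (hN : IsOpen N)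
    (hKN : K ⊆ N) {m : WithTop ℕ∞} (hF : ContDiffOn ℝ m F N) (h0 : ∀ x, x ∉ K → F x = 0) :
    ContDiff ℝ m F := by
  rw [contDiff_iff_contDiffAt]
  intro x
  by_cases hx : x ∈ K
  · exact hF.contDiffAt (hN.mem_nhds (hKN hx))
  · have : F =ᶠ[nhds x] fun _ => 0 := by
      filter_upwards [hK.isClosed.isOpen_compl.mem_nhds hx] with y hy using h0 y hy
    exact contDiffAt_const.congr_of_eventuallyEq this

theorem fderiv_zero_of_compact {E : Type*} [NormedAddCommGroup E] [NormedSpace ℝ E]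
    {F : ℂ → E} {K : Set ℂ} (hK : IsClosed K)
    (h0 : ∀ x, x ∉ K → F x = 0) {x : ℂ} (hx : x ∉ K) : fderiv ℝ F x = 0 := by
  have : F =ᶠ[nhds x] fun _ => 0 := by
    filter_upwards [hK.isOpen_compl.mem_nhds hx] with y hy using h0 y hy
  rw [this.fderiv_eq]; simp

/-- The divergence theorem for a `C¹` function vanishing outside a compact set. -/
theorem integral_fderiv_zero {F : ℂ → ℝ} {K N : Set ℂ} (hK : IsCompact K) (hN : IsOpen N)
    (hKN : K ⊆ N) (hF : ContDiffOn ℝ 1 F N) (h0 : ∀ x, x ∉ K → F x = 0) (v : ℂ) :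
    ∫ x, fderiv ℝ F x v = 0 := by
  have hC := contDiff_of_compact hK hN hKN hF h0
  have hcs : HasCompactSupport F := HasCompactSupport.intro hK h0
  have h1 : Integrable F := hC.continuous.integrable_of_hasCompactSupport hcs
  have hc2 : Continuous fun x => fderiv ℝ F x v :=
    (hC.continuous_fderiv one_ne_zero).clm_apply continuous_const
  have h2 : Integrable fun x => fderiv ℝ F x v :=
    integrable_of_compact hK hc2.continuousOn (fun x hx => by
      rw [fderiv_zero_of_compact hK.isClosed h0 hx]; rfl)
  have := integral_mul_fderiv_eq_neg_fderiv_mul_of_integrable (𝕜 := ℝ) (μ := (volume : Measure ℂ))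
    (f := fun _ : ℂ => (1 : ℝ)) (g := F) (v := v) (by simp) (by simpa using h2)
    (by simpa using h1) (fun x _ => by fun_prop)
    (fun x _ => hC.differentiable one_ne_zero x)
  simpa using this

/-- The derivative of the smooth step vanishes outside `[0, 1]`, hence is bounded. All cutoffs
below are built from this step. -/
theorem exists_smoothTransition_bound :
    ∃ M : ℝ, 1 ≤ M ∧ ∀ t, |deriv Real.smoothTransition t| ≤ M := by
  have hc : Continuous (deriv Real.smoothTransition) :=
    (Real.smoothTransition.contDiff (n := 1)).continuous_deriv le_rfl
  obtain ⟨M, hM⟩ := (isCompact_Icc (a := (0:ℝ)) (b := 1)).exists_bound_of_continuousOn hc.continuousOn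
  refine ⟨max M 1, le_max_right _ _, fun t => ?_⟩
  by_cases ht : t ∈ Icc (0:ℝ) 1
  · exact (hM t ht).trans (le_max_left _ _)
  · have hz : deriv Real.smoothTransition t = 0 := by
      rcases lt_or_ge t 0 with h | h
      · have : Real.smoothTransition =ᶠ[nhds t] fun _ => 0 := by
          filter_upwards [Iio_mem_nhds h] with y hy
          exact Real.smoothTransition.zero_of_nonpos (le_of_lt hy)
        rw [this.deriv_eq]; simp
      · have h1 : 1 < t := by
          by_contra h2; exact ht ⟨h, not_lt.1 h2⟩
        have : Real.smoothTransition =ᶠ[nhds t] fun _ => 1 := by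
          filter_upwards [Ioi_mem_nhds h1] with y hy
          exact Real.smoothTransition.one_of_one_le (le_of_lt hy)
        rw [this.deriv_eq]; simp
    rw [hz]; simp

theorem deriv_smoothTransition_nonneg (t : ℝ) : 0 ≤ deriv Real.smoothTransition t :=
  Real.smoothTransition.monotone.deriv_nonneg

theorem hasDerivAt_smoothTransition (t : ℝ) :
    HasDerivAt Real.smoothTransition (deriv Real.smoothTransition t) t :=
  ((Real.smoothTransition.contDiff (n := 1)).differentiable one_ne_zero t).hasDerivAt

/-- `φ` is a solution, possibly zero, of the weighted Dirichlet problem `-Δφ = lam p φ` on the bounded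
open set `Ω`, with `p > 0` in `Ω` and `lam ≥ 0`. The boundary condition is pointwise; no Sobolev
regularity is part of the definition. -/
structure Eig (Ω : Set ℂ) (p : ℂ → ℝ) (lam : ℝ) (φ : ℂ → ℝ) : Prop where
  isOpen : IsOpen Ω
  bdd : Bornology.IsBounded Ω
  pC : ContinuousOn p (closure Ω)
  ppos : ∀ x ∈ Ω, 0 < p x
  lam_nonneg : 0 ≤ lam
  smooth : ContDiffOn ℝ (⊤ : ℕ∞) φ Ω
  cont : ContinuousOn φ (closure Ω)
  zero : ∀ x ∈ frontier Ω, φ x = 0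
  eqn : ∀ x ∈ Ω, - lapR φ x = lam * p x * φ x

section
variable {Ω : Set ℂ} {p : ℂ → ℝ} {lam : ℝ} {φ : ℂ → ℝ}

theorem Eig.diffAt (H : Eig Ω p lam φ) {x : ℂ} (hx : x ∈ Ω) : DifferentiableAt ℝ φ x :=
  (H.smooth.contDiffAt (H.isOpen.mem_nhds hx)).differentiableAt (by simp)

theorem contDiffOn_dv {N : Set ℂ} (hN : IsOpen N) {f : ℂ → ℝ} (hf : ContDiffOn ℝ (⊤ : ℕ∞) f N)
    (v : ℂ) : ContDiffOn ℝ (⊤ : ℕ∞) (fun x => fderiv ℝ f x v) N :=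
  (hf.fderiv_of_isOpen hN (by simp)).clm_apply contDiffOn_const

theorem Eig.d1_smooth (H : Eig Ω p lam φ) : ContDiffOn ℝ (⊤ : ℕ∞) (d1 φ) Ω :=
  contDiffOn_dv H.isOpen H.smooth 1
theorem Eig.d2_smooth (H : Eig Ω p lam φ) : ContDiffOn ℝ (⊤ : ℕ∞) (d2 φ) Ω :=
  contDiffOn_dv H.isOpen H.smooth Complex.I

theorem contOn_dv {N : Set ℂ} (hN : IsOpen N) {f : ℂ → ℝ} (hf : ContDiffOn ℝ 1 f N) (v : ℂ) :
    ContinuousOn (fun x => fderiv ℝ f x v) N :=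
  (hf.continuousOn_fderiv_of_isOpen hN le_rfl).clm_apply continuousOn_const

theorem Eig.pCΩ (H : Eig Ω p lam φ) : ContinuousOn p Ω := H.pC.mono subset_closure

/-- Weak form of the equation, tested against a `C¹` function `ξ` supported in a compact subset of
`Ω`. Smoothness of `ξ` is required only near its support, so that quotients by `φ` are allowed. -/
theorem Eig.weak (H : Eig Ω p lam φ) {ξ : ℂ → ℝ} {K N : Set ℂ} (hK : IsCompact K)
    (hN : IsOpen N) (hKN : K ⊆ N) (hNΩ : N ⊆ Ω) (hξ : ContDiffOn ℝ 1 ξ N)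
    (h0 : ∀ x, x ∉ K → ξ x = 0) :
    ∫ x, (d1 φ x * d1 ξ x + d2 φ x * d2 ξ x - lam * p x * φ x * ξ x) = 0 := by
  have hA : ∀ v : ℂ, ContDiffOn ℝ 1 (fun x => ξ x * fderiv ℝ φ x v) N := fun v =>
    hξ.mul (((contDiffOn_dv H.isOpen H.smooth v).mono hNΩ).of_le (by simp))
  have hA0 : ∀ v : ℂ, ∀ x, x ∉ K → ξ x * fderiv ℝ φ x v = 0 := fun v x hx => by
    rw [h0 x hx, zero_mul]
  have h1 := integral_fderiv_zero hK hN hKN (hA 1) (hA0 1) 1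
  have h2 := integral_fderiv_zero hK hN hKN (hA Complex.I) (hA0 Complex.I) Complex.I
  have hi : ∀ v : ℂ, Integrable (fun x => fderiv ℝ (fun x => ξ x * fderiv ℝ φ x v) x v) := fun v =>
    integrable_of_compact hK ((contOn_dv hN (hA v) v).mono hKN) (fun x hx => by
      rw [fderiv_zero_of_compact hK.isClosed (hA0 v) hx]; rfl)
  rw [← add_zero (0 : ℝ)]
  nth_rewrite 1 [← h1]
  rw [← h2, ← integral_add (hi 1) (hi Complex.I)]
  congr 1
  ext x
  by_cases hx : x ∈ K
  · have hxN := hKN hx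
    have hxΩ := hNΩ hxN
    have dξ : DifferentiableAt ℝ ξ x :=
      (hξ.contDiffAt (hN.mem_nhds hxN)).differentiableAt one_ne_zero
    have hd : ∀ v : ℂ, DifferentiableAt ℝ (fun x => fderiv ℝ φ x v) x := fun v =>
      ((contDiffOn_dv H.isOpen H.smooth v).contDiffAt (H.isOpen.mem_nhds hxΩ)).differentiableAt
        (by simp)
    have e := H.eqn x hxΩ
    rw [fderiv_fun_mul dξ (hd 1), fderiv_fun_mul dξ (hd Complex.I)]
    simp only [add_apply, smul_apply, smul_eq_mul]
    simp only [lapR] at e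
    simp only [d1, d2]
    linear_combination ξ x * e
  · rw [fderiv_zero_of_compact hK.isClosed (hA0 1) hx,
      fderiv_zero_of_compact hK.isClosed (hA0 Complex.I) hx, h0 x hx]
    simp [d1, d2, fderiv_zero_of_compact hK.isClosed h0 hx]
end

/-! ### Test functions and the localized ground-state representation -/

/-- Test functions `C_c^∞(Ω; ℂ)`. -/
def Test (Ω : Set ℂ) (u : ℂ → ℂ) : Prop :=
  ContDiff ℝ (⊤ : ℕ∞) u ∧ HasCompactSupport u ∧ tsupport u ⊆ Ω

/-- The magnetic energy density `|(i∇ + A)u|²`. The potential is encoded as a complex number whose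
real and imaginary parts are its components. -/
def kin (A : ℂ → ℂ) (u : ℂ → ℂ) (x : ℂ) : ℝ :=
  ‖Complex.I * pd1 u x + ((A x).re : ℂ) * u x‖ ^ 2 +
    ‖Complex.I * pd2 u x + ((A x).im : ℂ) * u x‖ ^ 2

/-- The ground-state energy density `|(i∇ + A)u - i u ∇φ/φ|²`. Where `φ ≠ 0` it equals
`φ² |(i∇ + A)(u/φ)|²`; where `φ = 0` the quotient has the value `0`. -/
def egs (φ : ℂ → ℝ) (A : ℂ → ℂ) (u : ℂ → ℂ) (x : ℂ) : ℝ :=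
  ‖Complex.I * pd1 u x + ((A x).re : ℂ) * u x - Complex.I * u x * ((d1 φ x / φ x : ℝ) : ℂ)‖ ^ 2 +
  ‖Complex.I * pd2 u x + ((A x).im : ℂ) * u x - Complex.I * u x * ((d2 φ x / φ x : ℝ) : ℂ)‖ ^ 2

/-- The part of the quadratic form that is not covered by the ground-state energy on the region
`η = 1`: the form density weighted by `1 - η`, and the commutator term `-∇η·∇φ |u|²/φ`. -/
def Fdens (η φ : ℂ → ℝ) (lam : ℝ) (p : ℂ → ℝ) (A : ℂ → ℂ) (u : ℂ → ℂ) (x : ℂ) : ℝ :=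
  (1 - η x) * (kin A u x - lam * p x * ‖u x‖ ^ 2)
    - (d1 η x * d1 φ x + d2 η x * d2 φ x) * ‖u x‖ ^ 2 / φ x

theorem mgSq_eq_kin (a : ℂ) (u : ℂ → ℂ) : mgSq a u = kin (abPot a) u := rfl

theorem gradSqC_eq_kin (u : ℂ → ℂ) : gradSqC u = kin 0 u := by
  ext x; simp [gradSqC, kin]

theorem kin_nonneg (A u) (x) : 0 ≤ kin A u x := by unfold kin; positivity
theorem egs_nonneg (φ A u) (x) : 0 ≤ egs φ A u x := by unfold egs; positivity

theorem normsq (z : ℂ) : ‖z‖ ^ 2 = z.re ^ 2 + z.im ^ 2 := by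
  rw [Complex.sq_norm, Complex.normSq_apply]; ring

theorem fderiv_normsq {u : ℂ → ℂ} {x : ℂ} (hu : DifferentiableAt ℝ u x) (v : ℂ) :
    fderiv ℝ (fun y => ‖u y‖ ^ 2) x v =
      2 * ((u x).re * (fderiv ℝ u x v).re + (u x).im * (fderiv ℝ u x v).im) := by
  rw [hu.hasFDerivAt.norm_sq.fderiv]
  simp [Complex.inner]
  ring

theorem d1_normsq {u : ℂ → ℂ} {x : ℂ} (hu : DifferentiableAt ℝ u x) :
    d1 (fun y => ‖u y‖ ^ 2) x = 2 * ((u x).re * (pd1 u x).re + (u x).im * (pd1 u x).im) :=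
  fderiv_normsq hu 1
theorem d2_normsq {u : ℂ → ℂ} {x : ℂ} (hu : DifferentiableAt ℝ u x) :
    d2 (fun y => ‖u y‖ ^ 2) x = 2 * ((u x).re * (pd2 u x).re + (u x).im * (pd2 u x).im) :=
  fderiv_normsq hu Complex.I

/-- Completing the square: the two energy densities differ by terms that involve only `|u|²`. -/
theorem kin_sub_egs {φ : ℂ → ℝ} {A u : ℂ → ℂ} {x : ℂ} (hu : DifferentiableAt ℝ u x) :
    kin A u x - egs φ A u x =
      d1 φ x / φ x * d1 (fun y => ‖u y‖ ^ 2) x - ‖u x‖ ^ 2 * (d1 φ x / φ x) ^ 2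
      + (d2 φ x / φ x * d2 (fun y => ‖u y‖ ^ 2) x - ‖u x‖ ^ 2 * (d2 φ x / φ x) ^ 2) := by
  rw [d1_normsq hu, d2_normsq hu]
  simp only [kin, egs, normsq]
  simp
  ring

/-- A diamagnetic bound: the derivative of `|u/φ|²` in a unit direction, multiplied by `φ²`, is
controlled by the ground-state energy density, whatever the potential `A`. -/
theorem dir_bound {φ : ℂ → ℝ} {A u : ℂ → ℂ} {x n : ℂ} (hu : DifferentiableAt ℝ u x)
    (hn : ‖n‖ = 1) :
    |fderiv ℝ (fun y => ‖u y‖ ^ 2) x n - 2 * ‖u x‖ ^ 2 * (fderiv ℝ φ x n / φ x)| ≤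
      2 * (‖u x‖ * √(egs φ A u x)) := by
  rw [fderiv_eq_d, fderiv_eq_d, d1_normsq hu, d2_normsq hu]
  have hn2 : n.re ^ 2 + n.im ^ 2 = 1 := by rw [← normsq, hn]; norm_num
  set z1 := Complex.I * pd1 u x + ((A x).re : ℂ) * u x - Complex.I * u x * ((d1 φ x / φ x : ℝ) : ℂ) with hz1
  set z2 := Complex.I * pd2 u x + ((A x).im : ℂ) * u x - Complex.I * u x * ((d2 φ x / φ x : ℝ) : ℂ) with hz2
  have he : egs φ A u x = ‖z1‖ ^ 2 + ‖z2‖ ^ 2 := rfl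
  have key : n.re * (2 * ((u x).re * (pd1 u x).re + (u x).im * (pd1 u x).im))
      + n.im * (2 * ((u x).re * (pd2 u x).re + (u x).im * (pd2 u x).im))
      - 2 * ‖u x‖ ^ 2 * ((n.re * d1 φ x + n.im * d2 φ x) / φ x)
      = 2 * (((n.re : ℂ) * z1 + n.im * z2) * (starRingEnd ℂ) (Complex.I * u x)).re := by
    rw [normsq, hz1, hz2]
    simp
    ring
  rw [key, abs_mul, abs_two]
  refine mul_le_mul_of_nonneg_left ?_ (by norm_num)
  refine (Complex.abs_re_le_norm _).trans ?_
  rw [norm_mul, RCLike.norm_conj, norm_mul, Complex.norm_I, one_mul, mul_comm]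
  refine mul_le_mul_of_nonneg_left ?_ (norm_nonneg _)
  rw [he]
  apply Real.le_sqrt_of_sq_le
  have h1 : ‖(n.re : ℂ) * z1 + n.im * z2‖ ≤ |n.re| * ‖z1‖ + |n.im| * ‖z2‖ := by
    refine (norm_add_le _ _).trans ?_
    simp
  have h2 := pow_le_pow_left₀ (norm_nonneg _) h1 2
  refine h2.trans ?_
  have e1 : |n.re| ^ 2 + |n.im| ^ 2 = 1 := by rw [sq_abs, sq_abs, hn2]
  nlinarith [sq_nonneg (|n.re| * ‖z2‖ - |n.im| * ‖z1‖)]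

theorem Test.diff {Ω : Set ℂ} {u : ℂ → ℂ} (hu : Test Ω u) (x : ℂ) : DifferentiableAt ℝ u x :=
  hu.1.differentiable (by simp) x

theorem Test.compact {Ω : Set ℂ} {u : ℂ → ℂ} (hu : Test Ω u) : IsCompact (tsupport u) := hu.2.1

theorem Test.cont_pd1 {Ω : Set ℂ} {u : ℂ → ℂ} (hu : Test Ω u) : Continuous (pd1 u) :=
  (hu.1.continuous_fderiv (by simp)).clm_apply continuous_const
theorem Test.cont_pd2 {Ω : Set ℂ} {u : ℂ → ℂ} (hu : Test Ω u) : Continuous (pd2 u) :=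
  (hu.1.continuous_fderiv (by simp)).clm_apply continuous_const

theorem off_supp {u : ℂ → ℂ} {x : ℂ} (hx : x ∉ tsupport u) :
    u x = 0 ∧ pd1 u x = 0 ∧ pd2 u x = 0 := by
  have h0 : ∀ y, y ∉ tsupport u → u y = 0 := fun y hy => image_eq_zero_of_notMem_tsupport hy
  refine ⟨h0 x hx, ?_, ?_⟩ <;>
  simp [pd1, pd2, fderiv_zero_of_compact (isClosed_tsupport u) h0 hx]

theorem kin_off {A u : ℂ → ℂ} {x : ℂ} (hx : x ∉ tsupport u) : kin A u x = 0 := by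
  obtain ⟨h0, h1, h2⟩ := off_supp hx
  simp [kin, h0, h1, h2]
theorem egs_off {φ : ℂ → ℝ} {A u : ℂ → ℂ} {x : ℂ} (hx : x ∉ tsupport u) : egs φ A u x = 0 := by
  obtain ⟨h0, h1, h2⟩ := off_supp hx
  simp [egs, h0, h1, h2]

section
variable {Ω : Set ℂ} {p : ℂ → ℝ} {lam : ℝ} {φ : ℂ → ℝ}

theorem Test.kin_cont {u A : ℂ → ℂ} (hu : Test Ω u) (hA : ContinuousOn A (tsupport u)) :
    ContinuousOn (kin A u) (tsupport u) := by
  have h1 := hu.cont_pd1.continuousOn (s := tsupport u)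
  have h2 := hu.cont_pd2.continuousOn (s := tsupport u)
  have h0 := hu.1.continuous.continuousOn (s := tsupport u)
  have h3 : ContinuousOn (fun x => ((A x).re : ℂ)) (tsupport u) :=
    Complex.continuous_ofReal.comp_continuousOn (Complex.continuous_re.comp_continuousOn hA)
  have h4 : ContinuousOn (fun x => ((A x).im : ℂ)) (tsupport u) :=
    Complex.continuous_ofReal.comp_continuousOn (Complex.continuous_im.comp_continuousOn hA)
  unfold kin
  fun_prop

theorem Test.kin_int {u A : ℂ → ℂ} (hu : Test Ω u) (hA : ContinuousOn A (tsupport u)) :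
    Integrable (kin A u) :=
  integrable_of_compact hu.compact (hu.kin_cont hA) (fun x hx => kin_off hx)

theorem Test.m_cont {u : ℂ → ℂ} {f : ℂ → ℝ} (hf : ContinuousOn f Ω) (hu : Test Ω u) :
    ContinuousOn (fun x => f x * ‖u x‖ ^ 2) (tsupport u) :=
  (hf.mono hu.2.2).mul (hu.1.continuous.norm.pow 2).continuousOn

theorem Test.m_int {u : ℂ → ℂ} {f : ℂ → ℝ} (hf : ContinuousOn f Ω) (hu : Test Ω u) :
    Integrable (fun x => f x * ‖u x‖ ^ 2) :=
  integrable_of_compact hu.compact (hu.m_cont hf) (fun x hx => by simp [(off_supp hx).1])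

theorem Eig.egs_cont (H : Eig Ω p lam φ) {u A : ℂ → ℂ} (hu : Test Ω u)
    (hA : ContinuousOn A (tsupport u)) {K : Set ℂ} (hK : K ⊆ tsupport u)
    (hφ : ∀ x ∈ K, φ x ≠ 0) : ContinuousOn (egs φ A u) K := by
  have hKΩ := hK.trans hu.2.2
  have h1 := hu.cont_pd1.continuousOn (s := K)
  have h2 := hu.cont_pd2.continuousOn (s := K)
  have h0 := hu.1.continuous.continuousOn (s := K)
  have h3 : ContinuousOn (fun x => ((A x).re : ℂ)) K :=
    Complex.continuous_ofReal.comp_continuousOn (Complex.continuous_re.comp_continuousOn (hA.mono hK))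
  have h4 : ContinuousOn (fun x => ((A x).im : ℂ)) K :=
    Complex.continuous_ofReal.comp_continuousOn (Complex.continuous_im.comp_continuousOn (hA.mono hK))
  have h5 : ContinuousOn (fun x => ((d1 φ x / φ x : ℝ) : ℂ)) K :=
    Complex.continuous_ofReal.comp_continuousOn
      ((H.d1_smooth.continuousOn.mono hKΩ).div (H.smooth.continuousOn.mono hKΩ) hφ)
  have h6 : ContinuousOn (fun x => ((d2 φ x / φ x : ℝ) : ℂ)) K :=
    Complex.continuous_ofReal.comp_continuousOn
      ((H.d2_smooth.continuousOn.mono hKΩ).div (H.smooth.continuousOn.mono hKΩ) hφ)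
  unfold egs
  fun_prop

theorem Eig.egs_int (H : Eig Ω p lam φ) {u A : ℂ → ℂ} (hu : Test Ω u)
    (hA : ContinuousOn A (tsupport u)) {s : ℂ → ℝ} (hs : ContinuousOn s Ω)
    (hφ : ∀ x ∈ Ω, x ∈ tsupport s → φ x ≠ 0) : Integrable (fun x => s x * egs φ A u x) := by
  have hK : IsCompact (tsupport u ∩ tsupport s) := hu.compact.inter_right (isClosed_tsupport s)
  refine integrable_of_compact hK ?_ ?_
  · exact (hs.mono (inter_subset_left.trans hu.2.2)).mul
      (H.egs_cont hu hA inter_subset_left (fun x hx => hφ x (hu.2.2 hx.1) hx.2))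
  · intro x hx
    by_cases h : x ∈ tsupport u
    · have : x ∉ tsupport s := fun h' => hx ⟨h, h'⟩
      rw [image_eq_zero_of_notMem_tsupport this, zero_mul]
    · rw [egs_off h, mul_zero]

theorem d_off {η : ℂ → ℝ} {x : ℂ} (hx : x ∉ tsupport η) : η x = 0 ∧ d1 η x = 0 ∧ d2 η x = 0 := by
  have h0 : ∀ y, y ∉ tsupport η → η y = 0 := fun y hy => image_eq_zero_of_notMem_tsupport hy
  refine ⟨h0 x hx, ?_, ?_⟩ <;>
  simp [d1, d2, fderiv_zero_of_compact (isClosed_tsupport η) h0 hx]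

theorem Eig.B_int (H : Eig Ω p lam φ) {η : ℂ → ℝ} (hη : ContDiff ℝ (⊤ : ℕ∞) η)
    (hηφ : ∀ x ∈ Ω, x ∈ tsupport η → φ x ≠ 0) {u : ℂ → ℂ} (hu : Test Ω u) :
    Integrable (fun x => (d1 η x * d1 φ x + d2 η x * d2 φ x) * ‖u x‖ ^ 2 / φ x) := by
  have hK : IsCompact (tsupport u ∩ tsupport η) := hu.compact.inter_right (isClosed_tsupport η)
  have hKΩ : tsupport u ∩ tsupport η ⊆ Ω := inter_subset_left.trans hu.2.2
  have c1 : Continuous (d1 η) := (hη.continuous_fderiv (by simp)).clm_apply continuous_const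
  have c2 : Continuous (d2 η) := (hη.continuous_fderiv (by simp)).clm_apply continuous_const
  refine integrable_of_compact hK ?_ ?_
  · refine ContinuousOn.div ?_ (H.smooth.continuousOn.mono hKΩ) (fun x hx => hηφ x (hKΩ hx) hx.2)
    exact ((c1.continuousOn.mul (H.d1_smooth.continuousOn.mono hKΩ)).add
      (c2.continuousOn.mul (H.d2_smooth.continuousOn.mono hKΩ))).mul
      (hu.1.continuous.norm.pow 2).continuousOn
  · intro x hx
    by_cases h : x ∈ tsupport u
    · have : x ∉ tsupport η := fun h' => hx ⟨h, h'⟩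
      simp [(d_off this).2.1, (d_off this).2.2]
    · simp [(off_supp h).1]

theorem Eig.Fdens_int (H : Eig Ω p lam φ) {η : ℂ → ℝ} (hη : ContDiff ℝ (⊤ : ℕ∞) η)
    (hηφ : ∀ x ∈ Ω, x ∈ tsupport η → φ x ≠ 0) {u A : ℂ → ℂ} (hu : Test Ω u)
    (hA : ContinuousOn A (tsupport u)) : Integrable (Fdens η φ lam p A u) := by
  have hp : ContinuousOn (fun x => lam * p x) Ω := continuousOn_const.mul H.pCΩ
  refine Integrable.sub ?_ (H.B_int hη hηφ hu)
  refine integrable_of_compact hu.compact ?_ (fun x hx => by simp [(off_supp hx).1, kin_off hx])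
  exact (continuous_const.sub hη.continuous).continuousOn.mul ((hu.kin_cont hA).sub (hu.m_cont hp))

/-- Localized ground-state representation. It is the weak equation tested with `η |u|²/φ`, which is
admissible because `φ ≠ 0` on the support of `η` in `Ω`. -/
theorem Eig.groundState (H : Eig Ω p lam φ) {η : ℂ → ℝ} (hη : ContDiff ℝ (⊤ : ℕ∞) η)
    (hηφ : ∀ x ∈ Ω, x ∈ tsupport η → φ x ≠ 0) {u A : ℂ → ℂ} (hu : Test Ω u)
    (hA : ContinuousOn A (tsupport u)) :
    (∫ x, kin A u x) - lam * ∫ x, p x * ‖u x‖ ^ 2 =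
      (∫ x, Fdens η φ lam p A u x) + ∫ x, η x * egs φ A u x := by
  have hK : IsCompact (tsupport u ∩ tsupport η) := hu.compact.inter_right (isClosed_tsupport η)
  set N := Ω ∩ φ ⁻¹' {0}ᶜ with hN
  have hNo : IsOpen N :=
    H.smooth.continuousOn.isOpen_inter_preimage H.isOpen isOpen_compl_singleton
  have hKN : tsupport u ∩ tsupport η ⊆ N := fun x hx => ⟨hu.2.2 hx.1, hηφ x (hu.2.2 hx.1) hx.2⟩
  have hρ : ContDiff ℝ (⊤ : ℕ∞) (fun y => ‖u y‖ ^ 2) := hu.1.norm_sq ℝ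
  have hξ : ContDiffOn ℝ 1 (fun x => η x * ‖u x‖ ^ 2 / φ x) N := by
    refine ContDiffOn.div ?_ ((H.smooth.mono inter_subset_left).of_le (by simp)) (fun x hx => hx.2)
    exact ((hη.mul hρ).of_le (by simp)).contDiffOn
  have hw := H.weak hK hNo hKN inter_subset_left hξ (fun x hx => by
    by_cases h : x ∈ tsupport u
    · have : x ∉ tsupport η := fun h' => hx ⟨h, h'⟩
      simp [image_eq_zero_of_notMem_tsupport this]
    · simp [(off_supp h).1])
  have i1 := hu.kin_int hA
  have i2 := hu.m_int H.pCΩ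
  have i3 := H.Fdens_int hη hηφ hu hA
  have i4 := H.egs_int hu hA hη.continuous.continuousOn hηφ
  rw [← integral_const_mul, ← integral_sub i1 (i2.const_mul lam), ← integral_add i3 i4,
    ← sub_eq_zero]
  refine (integral_sub (i1.sub (i2.const_mul lam)) (i3.add i4)).symm.trans ?_
  rw [← hw]
  congr 1
  ext x
  by_cases hx : x ∈ tsupport u ∩ tsupport η
  · obtain ⟨hxΩ, hφx⟩ := hKN hx
    have hφx : φ x ≠ 0 := hφx
    have dφ := H.diffAt hxΩ
    have du := hu.diff x
    have dη : DifferentiableAt ℝ η x := hη.differentiable (by simp) x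
    have dρ : DifferentiableAt ℝ (fun y => ‖u y‖ ^ 2) x := hρ.differentiable (by simp) x
    have key : ∀ v : ℂ, fderiv ℝ (fun x => η x * ‖u x‖ ^ 2 / φ x) x v =
        (fderiv ℝ η x v * ‖u x‖ ^ 2 + η x * fderiv ℝ (fun y => ‖u y‖ ^ 2) x v) / φ x
        - η x * ‖u x‖ ^ 2 * fderiv ℝ φ x v / φ x ^ 2 := by
      intro v
      have := ((dη.hasFDerivAt.mul dρ.hasFDerivAt).mul
        ((hasDerivAt_inv hφx).comp_hasFDerivAt x dφ.hasFDerivAt))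
      have h2 : (fun x => η x * ‖u x‖ ^ 2 / φ x) = (fun x => η x * ‖u x‖ ^ 2 * (φ x)⁻¹) := by
        ext y; rw [div_eq_mul_inv]
      rw [h2]
      refine (congrArg (fun L => L v) this.fderiv).trans ?_
      simp
      field_simp
      ring
    have k1 := key 1
    have k2 := key Complex.I
    change d1 _ x = (d1 η x * ‖u x‖ ^ 2 + η x * d1 (fun y => ‖u y‖ ^ 2) x) / φ x
        - η x * ‖u x‖ ^ 2 * d1 φ x / φ x ^ 2 at k1
    change d2 _ x = (d2 η x * ‖u x‖ ^ 2 + η x * d2 (fun y => ‖u y‖ ^ 2) x) / φ x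
        - η x * ‖u x‖ ^ 2 * d2 φ x / φ x ^ 2 at k2
    rw [k1, k2]
    have ke := kin_sub_egs (φ := φ) (A := A) du
    simp only [Pi.sub_apply, Pi.add_apply, Fdens]
    have hk : kin A u x = egs φ A u x + (d1 φ x / φ x * d1 (fun y => ‖u y‖ ^ 2) x - ‖u x‖ ^ 2 * (d1 φ x / φ x) ^ 2
      + (d2 φ x / φ x * d2 (fun y => ‖u y‖ ^ 2) x - ‖u x‖ ^ 2 * (d2 φ x / φ x) ^ 2)) := by
      linarith
    rw [hk]
    field_simp
    ring
  · have hz : ∀ y, y ∉ tsupport u ∩ tsupport η → η y * ‖u y‖ ^ 2 / φ y = 0 := fun y hy => by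
      by_cases h : y ∈ tsupport u
      · have : y ∉ tsupport η := fun h' => hy ⟨h, h'⟩
        simp [image_eq_zero_of_notMem_tsupport this]
      · simp [(off_supp h).1]
    have hz2 := fderiv_zero_of_compact hK.isClosed hz hx
    have e1 : d1 (fun x => η x * ‖u x‖ ^ 2 / φ x) x = 0 := by simp [d1, hz2]
    have e2 : d2 (fun x => η x * ‖u x‖ ^ 2 / φ x) x = 0 := by simp [d2, hz2]
    rw [e1, e2, hz x hx]
    simp only [Pi.sub_apply, Pi.add_apply, Fdens]
    by_cases h : x ∈ tsupport u
    · have : x ∉ tsupport η := fun h' => hx ⟨h, h'⟩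
      obtain ⟨a1, a2, a3⟩ := d_off this
      rw [a1, a2, a3]; ring
    · rw [kin_off h, egs_off h, (off_supp h).1]; simp
end

/-! ### Truncating the eigenfunction and its Dirichlet energy -/

theorem exists_cutoff {K U : Set ℂ} (hK : IsCompact K) (hU : IsOpen U) (hKU : K ⊆ U) :
    ∃ κ : ℂ → ℝ, ContDiff ℝ (⊤ : ℕ∞) κ ∧ HasCompactSupport κ ∧ tsupport κ ⊆ U ∧
      (∀ x, 0 ≤ κ x ∧ κ x ≤ 1) ∧ ∃ N, IsOpen N ∧ K ⊆ N ∧ ∀ x ∈ N, κ x = 1 := by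
  obtain ⟨L, hL, hKL, hLU⟩ := exists_compact_between hK hU hKU
  obtain ⟨f, h1, h0, hr⟩ := exists_contMDiffMap_one_nhds_of_subset_interior
    (n := (⊤ : ℕ∞)) (I := modelWithCornersSelf ℝ ℂ) hK.isClosed hKL
  obtain ⟨N, hN, hKN, hN1⟩ := mem_nhdsSet_iff_exists.1 h1
  have hs : tsupport f ⊆ L := by
    refine closure_minimal (fun x hx => ?_) hL.isClosed
    by_contra h
    exact hx (h0 x h)
  exact ⟨f, f.contMDiff.contDiff, HasCompactSupport.of_support_subset_isCompact hL
    ((subset_tsupport _).trans hs), hs.trans hLU, fun x => hr x, N, hN, hKN, fun x hx => hN1 hx⟩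

theorem pd1_ofReal {f : ℂ → ℝ} {x : ℂ} (hf : DifferentiableAt ℝ f x) :
    pd1 (fun y => (f y : ℂ)) x = (d1 f x : ℂ) := by
  have := (Complex.ofRealCLM.hasFDerivAt.comp x hf.hasFDerivAt).fderiv
  exact congrArg (fun L => L 1) this
theorem pd2_ofReal {f : ℂ → ℝ} {x : ℂ} (hf : DifferentiableAt ℝ f x) :
    pd2 (fun y => (f y : ℂ)) x = (d2 f x : ℂ) := by
  have := (Complex.ofRealCLM.hasFDerivAt.comp x hf.hasFDerivAt).fderiv
  exact congrArg (fun L => L Complex.I) this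

section
variable {Ω : Set ℂ} {p : ℂ → ℝ} {lam : ℝ} {φ : ℂ → ℝ}

/-- The multiplier used to truncate `φ`: it is `1` where `κ = 1`, and where `κ = 0` it vanishes for
`|φ| ≤ ε` and is `1` for `|φ| ≥ √2 ε`. -/
def Thet (κ φ : ℂ → ℝ) (ε : ℝ) (x : ℂ) : ℝ :=
  κ x + (1 - κ x) * Real.smoothTransition (φ x ^ 2 / ε ^ 2 - 1)

/-- The truncation `φ · Thet`, extended by zero outside `Ω`. It has compact support in `Ω` because `φ`
tends to `0` at the boundary. -/
def trunc (Ω : Set ℂ) (κ φ : ℂ → ℝ) (ε : ℝ) : ℂ → ℝ :=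
  Ω.indicator (fun x => φ x * Thet κ φ ε x)

theorem Thet_range {κ : ℂ → ℝ} (hκ : ∀ x, 0 ≤ κ x ∧ κ x ≤ 1) (ε : ℝ) (x : ℂ) :
    κ x ≤ Thet κ φ ε x ∧ Thet κ φ ε x ≤ 1 := by
  have h1 := Real.smoothTransition.nonneg (φ x ^ 2 / ε ^ 2 - 1)
  have h2 := Real.smoothTransition.le_one (φ x ^ 2 / ε ^ 2 - 1)
  obtain ⟨h3, h4⟩ := hκ x
  unfold Thet
  constructor <;> nlinarith

/-- A compact subset of `Ω` outside which `trunc` vanishes. -/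
def truncK (Ω : Set ℂ) (κ φ : ℂ → ℝ) (ε : ℝ) : Set ℂ :=
  tsupport κ ∪ (closure Ω ∩ φ ⁻¹' {t | ε ≤ |t|})

theorem Eig.truncK_compact (H : Eig Ω p lam φ) {κ : ℂ → ℝ} (hκ : HasCompactSupport κ) (ε : ℝ) :
    IsCompact (truncK Ω κ φ ε) := by
  refine hκ.isCompact.union ?_
  have hc : IsClosed (closure Ω ∩ φ ⁻¹' {t | ε ≤ |t|}) :=
    H.cont.preimage_isClosed_of_isClosed isClosed_closure (isClosed_le continuous_const continuous_abs)
  exact H.bdd.isCompact_closure.of_isClosed_subset hc inter_subset_left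

theorem Eig.truncK_sub (H : Eig Ω p lam φ) {κ : ℂ → ℝ} (hκ : tsupport κ ⊆ Ω) {ε : ℝ} (hε : 0 < ε) :
    truncK Ω κ φ ε ⊆ Ω := by
  refine union_subset hκ ?_
  rintro x ⟨hx, hx2⟩
  by_contra h
  have hf : x ∈ frontier Ω := ⟨hx, by rwa [H.isOpen.interior_eq]⟩
  have : ε ≤ |φ x| := hx2
  rw [H.zero x hf, abs_zero] at this
  linarith

theorem trunc_off {κ : ℂ → ℝ} {ε : ℝ} (hε : 0 < ε) {x : ℂ} (hx : x ∉ truncK Ω κ φ ε) :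
    trunc Ω κ φ ε x = 0 := by
  unfold trunc
  by_cases hΩ : x ∈ Ω
  · rw [indicator_of_mem hΩ]
    have h1 : κ x = 0 := image_eq_zero_of_notMem_tsupport (fun h => hx (Or.inl h))
    have h2 : |φ x| < ε := by
      by_contra h
      exact hx (Or.inr ⟨subset_closure hΩ, not_lt.1 h⟩)
    have h3 : φ x ^ 2 / ε ^ 2 - 1 ≤ 0 := by
      have : φ x ^ 2 ≤ ε ^ 2 := by rw [← sq_abs]; exact pow_le_pow_left₀ (abs_nonneg _) h2.le 2
      have := (div_le_one (by positivity : 0 < ε ^ 2)).2 this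
      linarith
    rw [Thet, h1, Real.smoothTransition.zero_of_nonpos h3]; ring
  · rw [indicator_of_notMem hΩ]

theorem Eig.trunc_smooth (H : Eig Ω p lam φ) {κ : ℂ → ℝ} (hκ : ContDiff ℝ (⊤ : ℕ∞) κ) (ε : ℝ) :
    ContDiffOn ℝ (⊤ : ℕ∞) (trunc Ω κ φ ε) Ω := by
  have : ContDiffOn ℝ (⊤ : ℕ∞) (fun x => φ x * Thet κ φ ε x) Ω := by
    refine H.smooth.mul ?_
    refine hκ.contDiffOn.add ((contDiffOn_const.sub hκ.contDiffOn).mul ?_)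
    exact Real.smoothTransition.contDiff.comp_contDiffOn
      (((H.smooth.pow 2).div_const _).sub contDiffOn_const)
  exact this.congr (fun x hx => indicator_of_mem hx _)

/-- The contribution of the derivative of the step function to the coefficient of `∇φ` in
`∇(trunc)`; see `Eig.trunc_fderiv`. -/
def Pc (κ φ : ℂ → ℝ) (ε : ℝ) (x : ℂ) : ℝ :=
  (1 - κ x) * deriv Real.smoothTransition (φ x ^ 2 / ε ^ 2 - 1) * (2 * φ x ^ 2 / ε ^ 2)

/-- The coefficient of `∇κ` in `∇(trunc)`; see `Eig.trunc_fderiv`. It is small with `ε`. -/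
def ac (φ : ℂ → ℝ) (ε : ℝ) (x : ℂ) : ℝ :=
  φ x * (1 - Real.smoothTransition (φ x ^ 2 / ε ^ 2 - 1))

theorem Eig.trunc_fderiv (H : Eig Ω p lam φ) {κ : ℂ → ℝ} (hκ : ContDiff ℝ (⊤ : ℕ∞) κ) (ε : ℝ)
    {x : ℂ} (hx : x ∈ Ω) (v : ℂ) :
    fderiv ℝ (trunc Ω κ φ ε) x v =
      (Thet κ φ ε x + Pc κ φ ε x) * fderiv ℝ φ x v + ac φ ε x * fderiv ℝ κ x v := by
  have he : trunc Ω κ φ ε =ᶠ[nhds x] fun x => φ x * (κ x + (1 - κ x) * Real.smoothTransition (φ x ^ 2 / ε ^ 2 - 1)) := by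
    filter_upwards [H.isOpen.mem_nhds hx] with y hy using indicator_of_mem hy _
  rw [he.fderiv_eq]
  have dφ := (H.diffAt hx).hasFDerivAt
  have dκ : HasFDerivAt κ (fderiv ℝ κ x) x := (hκ.differentiable (by simp) x).hasFDerivAt
  have ds := (hasDerivAt_smoothTransition (φ x ^ 2 / ε ^ 2 - 1)).comp_hasFDerivAt x
    (((dφ.pow 2).mul_const ((ε ^ 2)⁻¹)).sub_const 1)
  have := (dφ.mul (dκ.add ((dκ.const_sub 1).mul ds))).fderiv
  refine (congrArg (fun L => L v) this).trans ?_
  simp [Thet, Pc, ac]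
  ring_nf

theorem Pc_bound {κ : ℂ → ℝ} (hκ : ∀ x, 0 ≤ κ x ∧ κ x ≤ 1) {ε : ℝ} (hε : 0 < ε) {M : ℝ}
    (hM : ∀ t, |deriv Real.smoothTransition t| ≤ M) (x : ℂ) :
    0 ≤ Pc κ φ ε x ∧ Pc κ φ ε x ≤ 4 * M := by
  obtain ⟨h3, h4⟩ := hκ x
  have hd := deriv_smoothTransition_nonneg (φ x ^ 2 / ε ^ 2 - 1)
  have hdM := (le_abs_self _).trans (hM (φ x ^ 2 / ε ^ 2 - 1))
  have hM0 : 0 ≤ M := (abs_nonneg _).trans (hM 0)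
  unfold Pc
  refine ⟨by have : 0 ≤ 1 - κ x := by linarith
             positivity, ?_⟩
  by_cases h : φ x ^ 2 / ε ^ 2 ≤ 2
  · calc _ ≤ 1 * M * 4 := by
          refine mul_le_mul (mul_le_mul (by linarith) hdM hd (by norm_num)) ?_ (by positivity)
            (by positivity)
          rw [mul_div_assoc]; linarith
      _ = 4 * M := by ring
  · have : deriv Real.smoothTransition (φ x ^ 2 / ε ^ 2 - 1) = 0 := by
      have : Real.smoothTransition =ᶠ[nhds (φ x ^ 2 / ε ^ 2 - 1)] fun _ => 1 := by
        filter_upwards [Ioi_mem_nhds (show 1 < φ x ^ 2 / ε ^ 2 - 1 by linarith)] with y hy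
        exact Real.smoothTransition.one_of_one_le (le_of_lt hy)
      rw [this.deriv_eq]; simp
    rw [this]; simp [hM0]

theorem ac_bound {ε : ℝ} (hε : 0 < ε) (x : ℂ) : |ac φ ε x| ≤ 2 * ε := by
  have h1 := Real.smoothTransition.nonneg (φ x ^ 2 / ε ^ 2 - 1)
  have h2 := Real.smoothTransition.le_one (φ x ^ 2 / ε ^ 2 - 1)
  unfold ac
  by_cases h : φ x ^ 2 / ε ^ 2 ≤ 2
  · have h3 : φ x ^ 2 ≤ (2 * ε) ^ 2 := by
      rw [div_le_iff₀ (by positivity)] at h; nlinarith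
    have h4 : |φ x| ≤ 2 * ε := abs_le_of_sq_le_sq h3 (by positivity)
    rw [abs_mul, abs_of_nonneg (by linarith : 0 ≤ 1 - Real.smoothTransition (φ x ^ 2 / ε ^ 2 - 1))]
    nlinarith [abs_nonneg (φ x)]
  · rw [Real.smoothTransition.one_of_one_le (by linarith)]; simp [hε.le]

theorem Eig.trunc_contDiff (H : Eig Ω p lam φ) {κ : ℂ → ℝ} (hκ : ContDiff ℝ (⊤ : ℕ∞) κ)
    (hc : HasCompactSupport κ) (hs : tsupport κ ⊆ Ω) {ε : ℝ} (hε : 0 < ε) :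
    ContDiff ℝ (⊤ : ℕ∞) (trunc Ω κ φ ε) :=
  contDiff_of_compact (H.truncK_compact hc ε) H.isOpen (H.truncK_sub hs hε) (H.trunc_smooth hκ ε)
    (fun _ hx => trunc_off hε hx)

theorem Eig.exists_bound (H : Eig Ω p lam φ) :
    ∃ P0 : ℝ, 0 ≤ P0 ∧ ∀ x ∈ Ω, p x ≤ P0 ∧ φ x ^ 2 ≤ P0 := by
  have hc := H.bdd.isCompact_closure
  obtain ⟨A, hA⟩ := hc.exists_bound_of_continuousOn H.pC
  obtain ⟨B, hB⟩ := hc.exists_bound_of_continuousOn (H.cont.pow 2)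
  refine ⟨max (max A B) 0, le_max_right _ _, fun x hx => ⟨?_, ?_⟩⟩
  · exact (le_abs_self _).trans ((hA x (subset_closure hx)).trans ((le_max_left _ _).trans (le_max_left _ _)))
  · exact (le_abs_self _).trans ((hB x (subset_closure hx)).trans ((le_max_right _ _).trans (le_max_left _ _)))

/-- `|∇f|²` for real-valued `f`. -/
def gsq (f : ℂ → ℝ) (x : ℂ) : ℝ := d1 f x ^ 2 + d2 f x ^ 2

theorem Eig.gsq_cont (H : Eig Ω p lam φ) : ContinuousOn (gsq φ) Ω :=
  (H.d1_smooth.continuousOn.pow 2).add (H.d2_smooth.continuousOn.pow 2)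

theorem Eig.vol_finite (H : Eig Ω p lam φ) : volume Ω ≠ ⊤ := H.bdd.measure_lt_top.ne

theorem Eig.int_indicator (H : Eig Ω p lam φ) (c : ℝ) :
    Integrable (Ω.indicator fun _ => c) ∧ ∫ x, Ω.indicator (fun _ => c) x = c * volume.real Ω := by
  constructor
  · exact (integrable_indicator_iff H.isOpen.measurableSet).2 (integrableOn_const H.vol_finite)
  · rw [integral_indicator H.isOpen.measurableSet, setIntegral_const, smul_eq_mul, mul_comm]

/-- The Dirichlet energy of `φ` is finite: its integrals over compact subsets of `Ω` are uniformly
bounded. The weak equation is tested with `trunc`, and `ε` is taken small depending on the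
compact set. -/
theorem Eig.grad_bound (H : Eig Ω p lam φ) :
    ∃ B : ℝ, ∀ K, IsCompact K → K ⊆ Ω → ∫ x in K, gsq φ x ≤ B := by
  obtain ⟨P0, hP0, hP⟩ := H.exists_bound
  obtain ⟨M, hM1, hM⟩ := exists_smoothTransition_bound
  refine ⟨lam * P0 * P0 * volume.real Ω + 1, fun K hK hKΩ => ?_⟩
  obtain ⟨κ, hκ, hκc, hκΩ, hκr, N, hN, hKN, hN1⟩ := exists_cutoff hK H.isOpen hKΩ
  set L : ℂ → ℝ := fun x => |d1 κ x * d1 φ x| + |d2 κ x * d2 φ x| with hL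
  have hd1 : Continuous (d1 κ) := (hκ.continuous_fderiv (by simp)).clm_apply continuous_const
  have hd2 : Continuous (d2 κ) := (hκ.continuous_fderiv (by simp)).clm_apply continuous_const
  have hLi : Integrable L := by
    refine integrable_of_compact hκc.isCompact ?_ ?_
    · exact ((hd1.continuousOn.mul (H.d1_smooth.continuousOn.mono hκΩ)).abs).add
        ((hd2.continuousOn.mul (H.d2_smooth.continuousOn.mono hκΩ)).abs)
    · intro x hx
      simp [hL, (d_off hx).2.1, (d_off hx).2.2]
  have hL0 : 0 ≤ ∫ x, L x := integral_nonneg (fun x => by positivity)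
  set ε : ℝ := 1 / (2 * (∫ x, L x) + 2) with hεd
  have hε : 0 < ε := by positivity
  have hεL : 2 * ε * ∫ x, L x ≤ 1 := by
    rw [hεd]; field_simp; linarith
  have hC := H.trunc_contDiff hκ hκc hκΩ hε
  have hw := H.weak (H.truncK_compact hκc ε) H.isOpen (H.truncK_sub hκΩ hε) le_rfl
    ((H.trunc_smooth hκ ε).of_le (by simp)) (fun _ hx => trunc_off hε hx)
  have hi2 : Integrable (fun x => d1 φ x * d1 (trunc Ω κ φ ε) x + d2 φ x * d2 (trunc Ω κ φ ε) x
    - lam * p x * φ x * trunc Ω κ φ ε x) := by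
    have hKc := H.truncK_compact hκc ε
    have hKs := H.truncK_sub hκΩ hε
    have t1 : Continuous (d1 (trunc Ω κ φ ε)) := (hC.continuous_fderiv (by simp)).clm_apply continuous_const
    have t2 : Continuous (d2 (trunc Ω κ φ ε)) := (hC.continuous_fderiv (by simp)).clm_apply continuous_const
    refine integrable_of_compact hKc ?_ ?_
    · have a1 := H.d1_smooth.continuousOn.mono hKs
      have a2 := H.d2_smooth.continuousOn.mono hKs
      have a3 := H.pCΩ.mono hKs
      have a4 := H.smooth.continuousOn.mono hKs
      have a5 := hC.continuous.continuousOn (s := truncK Ω κ φ ε)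
      have a6 := t1.continuousOn (s := truncK Ω κ φ ε)
      have a7 := t2.continuousOn (s := truncK Ω κ φ ε)
      fun_prop
    · intro x hx
      have := fderiv_zero_of_compact hKc.isClosed (fun _ hx => trunc_off hε hx) hx
      simp [d1, d2, this, trunc_off hε hx]
  have hle : ∫ x, (K.indicator (gsq φ) x) ≤ ∫ x, ((d1 φ x * d1 (trunc Ω κ φ ε) x + d2 φ x * d2 (trunc Ω κ φ ε) x
      - lam * p x * φ x * trunc Ω κ φ ε x) + (Ω.indicator (fun _ => lam * P0 * P0) x + 2 * ε * L x)) := by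
    have hi1 : Integrable (K.indicator (gsq φ)) :=
      (integrable_indicator_iff hK.measurableSet).2 ((H.gsq_cont.mono hKΩ).integrableOn_compact hK)
    refine integral_mono hi1 (hi2.add ((H.int_indicator _).1.add (hLi.const_mul _))) ?_
    intro x
    by_cases hx : x ∈ Ω
    · have e1 := H.trunc_fderiv hκ ε hx 1
      have e2 := H.trunc_fderiv hκ ε hx Complex.I
      change d1 _ x = _ * d1 φ x + _ * d1 κ x at e1
      change d2 _ x = _ * d2 φ x + _ * d2 κ x at e2
      have e3 : trunc Ω κ φ ε x = φ x * Thet κ φ ε x := indicator_of_mem hx _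
      have hΘ := Thet_range (φ := φ) hκr ε x
      have hPc := (Pc_bound (φ := φ) hκr hε hM x).1
      have hac := ac_bound (φ := φ) hε x
      have hk : K.indicator (gsq φ) x ≤ Thet κ φ ε x * gsq φ x := by
        have hg : 0 ≤ gsq φ x := by unfold gsq; positivity
        by_cases hxK : x ∈ K
        · rw [indicator_of_mem hxK]
          have := hN1 x (hKN hxK)
          nlinarith
        · rw [indicator_of_notMem hxK]
          have := (hκr x).1
          exact mul_nonneg (by linarith) hg
      refine hk.trans ?_
      simp only [indicator_of_mem hx]
      rw [e1, e2, e3]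
      have b1 : -(ac φ ε x * (d1 κ x * d1 φ x)) ≤ 2 * ε * |d1 κ x * d1 φ x| := by
        refine (neg_le_abs _).trans ?_
        rw [abs_mul]
        exact mul_le_mul_of_nonneg_right hac (abs_nonneg _)
      have b2 : -(ac φ ε x * (d2 κ x * d2 φ x)) ≤ 2 * ε * |d2 κ x * d2 φ x| := by
        refine (neg_le_abs _).trans ?_
        rw [abs_mul]
        exact mul_le_mul_of_nonneg_right hac (abs_nonneg _)
      have b3 : lam * p x * φ x * (φ x * Thet κ φ ε x) ≤ lam * P0 * P0 := by
        have hp := H.ppos x hx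
        obtain ⟨q1, q2⟩ := hP x hx
        calc _ = lam * (p x * (φ x ^ 2 * Thet κ φ ε x)) := by ring
          _ ≤ lam * (P0 * (P0 * 1)) := by
            refine mul_le_mul_of_nonneg_left ?_ H.lam_nonneg
            refine mul_le_mul q1 (mul_le_mul q2 hΘ.2 (by linarith [(hκr x).1]) hP0) ?_ hP0
            have : 0 ≤ Thet κ φ ε x := by linarith [(hκr x).1]
            positivity
          _ = _ := by ring
      have b4 : 0 ≤ Pc κ φ ε x * gsq φ x := mul_nonneg hPc (by unfold gsq; positivity)
      simp only [gsq, hL] at b4 ⊢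
      linarith
    · have h1 : x ∉ K := fun h => hx (hKΩ h)
      have h2 : x ∉ truncK Ω κ φ ε := fun h => hx (H.truncK_sub hκΩ hε h)
      have := fderiv_zero_of_compact (H.truncK_compact hκc ε).isClosed (fun _ hx => trunc_off hε hx) h2
      simp only [indicator_of_notMem h1, indicator_of_notMem hx, d1, d2, this, trunc_off hε h2]
      simp
      positivity
  rw [integral_indicator hK.measurableSet] at hle
  refine hle.trans ?_
  rw [integral_add, hw, integral_add (H.int_indicator _).1 (hLi.const_mul _), (H.int_indicator _).2,
    integral_const_mul]
  · linarith
  · exact hi2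
  · exact (H.int_indicator _).1.add (hLi.const_mul _)
end

/-! ### Compactly supported near-eigenfunctions -/

section
variable {Ω : Set ℂ} {p : ℂ → ℝ} {lam : ℝ} {φ : ℂ → ℝ}

theorem kin_ofReal {f : ℂ → ℝ} {x : ℂ} (hf : DifferentiableAt ℝ f x) :
    kin 0 (fun y => (f y : ℂ)) x = d1 f x ^ 2 + d2 f x ^ 2 := by
  simp [kin, pd1_ofReal hf, pd2_ofReal hf]

theorem egs_ofReal {f : ℂ → ℝ} {x : ℂ} (hf : DifferentiableAt ℝ f x) :
    egs φ 0 (fun y => (f y : ℂ)) x =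
      (d1 f x - f x * (d1 φ x / φ x)) ^ 2 + (d2 f x - f x * (d2 φ x / φ x)) ^ 2 := by
  simp only [egs, pd1_ofReal hf, pd2_ofReal hf, normsq]
  simp

/-- Outside a large compact subset of `Ω`, the Dirichlet energy of `φ` is at most `ω`. -/
theorem exists_energy_compact (H : Eig Ω p lam φ) {K : Set ℂ} (hK : IsCompact K) (hKΩ : K ⊆ Ω)
    {ω : ℝ} (hω : 0 < ω) : ∃ K1, IsCompact K1 ∧ K1 ⊆ Ω ∧ K ⊆ K1 ∧
      ∀ K2, IsCompact K2 → K2 ⊆ Ω → ∫ x in K2 \ K1, gsq φ x ≤ ω := by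
  obtain ⟨B, hB⟩ := H.grad_bound
  set S : Set ℝ := {t | ∃ K', IsCompact K' ∧ K' ⊆ Ω ∧ t = ∫ x in K', gsq φ x} with hS
  have hSb : BddAbove S := ⟨B, by rintro t ⟨K', h1, h2, rfl⟩; exact hB K' h1 h2⟩
  have hSn : S.Nonempty := ⟨_, K, hK, hKΩ, rfl⟩
  obtain ⟨t, ⟨K', hK', hK'Ω, rfl⟩, ht⟩ := exists_lt_of_lt_csSup hSn (sub_lt_self (sSup S) hω)
  have g0 : ∀ x, 0 ≤ gsq φ x := fun x => by unfold gsq; positivity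
  have hi : ∀ K2, IsCompact K2 → K2 ⊆ Ω → IntegrableOn (gsq φ) K2 := fun K2 h1 h2 =>
    (H.gsq_cont.mono h2).integrableOn_compact h1
  refine ⟨K ∪ K', hK.union hK', union_subset hKΩ hK'Ω, subset_union_left, fun K2 h1 h2 => ?_⟩
  have hU : IsCompact (K2 ∪ K') := h1.union hK'
  have hUΩ := union_subset h2 hK'Ω
  have hle : ∫ x in K2 ∪ K', gsq φ x ≤ sSup S := le_csSup hSb ⟨_, hU, hUΩ, rfl⟩
  have hsub : ∫ x in K2 \ (K ∪ K'), gsq φ x ≤ ∫ x in K2 \ K', gsq φ x := by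
    refine setIntegral_mono_set ((hi K2 h1 h2).mono_set sdiff_subset) (Eventually.of_forall g0) ?_
    exact (sdiff_subset_sdiff_right subset_union_right).eventuallyLE
  have hd : ∫ x in K2 ∪ K', gsq φ x = (∫ x in K2 \ K', gsq φ x) + ∫ x in K', gsq φ x := by
    rw [← sdiff_union_self, setIntegral_union disjoint_sdiff_left hK'.measurableSet
      ((hi K2 h1 h2).mono_set sdiff_subset) (hi K' hK' hK'Ω)]
  linarith

set_option maxHeartbeats 1000000 in
/-- Compactly supported near-eigenfunctions: `f` agrees with `φ` near a given compact set, is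
dominated by `φ`, and both its form excess and its `η`-weighted ground-state energy are at most `ω`.
The function `f` is `trunc` with `κ = 1` on a compact set that carries almost all of the Dirichlet
energy, and with `ε` small. -/
theorem Eig.approx (H : Eig Ω p lam φ) {η : ℂ → ℝ} (hη : ContDiff ℝ (⊤ : ℕ∞) η)
    (hη01 : ∀ x, 0 ≤ η x ∧ η x ≤ 1) (hηφ : ∀ x ∈ Ω, x ∈ tsupport η → φ x ≠ 0)
    {K : Set ℂ} (hK : IsCompact K) (hKΩ : K ⊆ Ω) {ω : ℝ} (hω : 0 < ω) :
    ∃ f : ℂ → ℝ, ContDiff ℝ (⊤ : ℕ∞) f ∧ Test Ω (fun x => (f x : ℂ)) ∧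
      (∃ N, IsOpen N ∧ K ⊆ N ∧ ∀ x ∈ N, f x = φ x) ∧ (∀ x ∈ Ω, |f x| ≤ |φ x|) ∧
      (∫ x, kin 0 (fun x => (f x : ℂ)) x) - lam * (∫ x, p x * ‖(f x : ℂ)‖ ^ 2) ≤ ω ∧
      ∫ x, η x * egs φ 0 (fun x => (f x : ℂ)) x ≤ ω := by
  obtain ⟨P0, hP0, hP⟩ := H.exists_bound
  obtain ⟨M, hM1, hM⟩ := exists_smoothTransition_bound
  set Q : ℝ := 2 * (1 + 4 * M) ^ 2 with hQ
  have hQ0 : 0 < Q := by positivity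
  obtain ⟨K1, hK1, hK1Ω, hKK1, hK1e⟩ := exists_energy_compact H hK hKΩ (ω := ω / (2 * Q)) (by positivity)
  obtain ⟨κ, hκ, hκc, hκΩ, hκr, N, hN, hKN, hN1⟩ := exists_cutoff hK1 H.isOpen hK1Ω
  have hd1 : Continuous (d1 κ) := (hκ.continuous_fderiv (by simp)).clm_apply continuous_const
  have hd2 : Continuous (d2 κ) := (hκ.continuous_fderiv (by simp)).clm_apply continuous_const
  have hLi : Integrable (gsq κ) := by
    refine integrable_of_compact hκc.isCompact ?_ ?_
    · exact ((hd1.pow 2).add (hd2.pow 2)).continuousOn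
    · intro x hx
      simp [gsq, (d_off hx).2.1, (d_off hx).2.2]
  set R : ℝ := 8 * (∫ x, gsq κ x) + 4 * lam * P0 * volume.real Ω with hR
  have hR0 : 0 ≤ R := by
    have h1 : 0 ≤ ∫ x, gsq κ x := integral_nonneg (fun x => by unfold gsq; positivity)
    have h2 := H.lam_nonneg
    positivity
  obtain ⟨ε, hε, hεR⟩ : ∃ ε : ℝ, 0 < ε ∧ ε ^ 2 * R ≤ ω / 2 := by
    refine ⟨√(ω / (2 * (R + 1))), by positivity, ?_⟩
    rw [Real.sq_sqrt (by positivity)]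
    rw [div_mul_eq_mul_div, div_le_div_iff₀ (by positivity) (by positivity)]
    nlinarith
  set f := trunc Ω κ φ ε with hf
  set K2 := truncK Ω κ φ ε with hK2
  have hK2c := H.truncK_compact hκc ε
  have hK2Ω := H.truncK_sub hκΩ hε
  have hC : ContDiff ℝ (⊤ : ℕ∞) f := H.trunc_contDiff hκ hκc hκΩ hε
  have hfd : ∀ x, DifferentiableAt ℝ f x := hC.differentiable (by simp)
  have hoff : ∀ x, x ∉ K2 → f x = 0 := fun _ hx => trunc_off hε hx
  have htf : tsupport (fun x => (f x : ℂ)) ⊆ K2 := by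
    refine closure_minimal (fun x hx => ?_) hK2c.isClosed
    by_contra h
    exact hx (by simp [hoff x h])
  have hT : Test Ω (fun x => (f x : ℂ)) :=
    ⟨Complex.ofRealCLM.contDiff.comp hC, HasCompactSupport.of_support_subset_isCompact hK2c
      ((subset_tsupport _).trans htf), htf.trans hK2Ω⟩
  have hw := H.weak hK2c H.isOpen hK2Ω le_rfl
    ((H.trunc_smooth hκ ε).of_le (by simp)) hoff
  have t1 : Continuous (d1 f) := (hC.continuous_fderiv (by simp)).clm_apply continuous_const
  have t2 : Continuous (d2 f) := (hC.continuous_fderiv (by simp)).clm_apply continuous_const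
  have hi2 : Integrable (fun x => d1 φ x * d1 f x + d2 φ x * d2 f x - lam * p x * φ x * f x) := by
    refine integrable_of_compact hK2c ?_ ?_
    · have a1 := H.d1_smooth.continuousOn.mono hK2Ω
      have a2 := H.d2_smooth.continuousOn.mono hK2Ω
      have a3 := H.pCΩ.mono hK2Ω
      have a4 := H.smooth.continuousOn.mono hK2Ω
      have a5 := hC.continuous.continuousOn (s := K2)
      have a6 := t1.continuousOn (s := K2)
      have a7 := t2.continuousOn (s := K2)
      fun_prop
    · intro x hx
      have := fderiv_zero_of_compact hK2c.isClosed hoff hx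
      simp [d1, d2, this, hoff x hx]
  set G : ℂ → ℝ := fun x => (K2 \ K1).indicator (fun x => Q * gsq φ x) x +
    (8 * ε ^ 2 * gsq κ x + Ω.indicator (fun _ => 4 * ε ^ 2 * lam * P0) x) with hG
  have hms : MeasurableSet (K2 \ K1) := hK2c.measurableSet.diff hK1.measurableSet
  have hG1 : Integrable ((K2 \ K1).indicator (fun x => Q * gsq φ x)) := by
    refine (integrable_indicator_iff hms).2 (IntegrableOn.mono_set ?_ (sdiff_subset (s := K2) (t := K1)))
    exact (continuousOn_const.mul (H.gsq_cont.mono hK2Ω)).integrableOn_compact hK2c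
  have hG2 : Integrable (fun x => 8 * ε ^ 2 * gsq κ x + Ω.indicator (fun _ => 4 * ε ^ 2 * lam * P0) x) :=
    (hLi.const_mul _).add (H.int_indicator _).1
  have hGi : Integrable G := hG1.add hG2
  have hGω : ∫ x, G x ≤ ω := by
    rw [hG, integral_add hG1 hG2, integral_add (hLi.const_mul _) (H.int_indicator _).1, (H.int_indicator _).2,
      integral_indicator hms, integral_const_mul, integral_const_mul]
    have h1 := hK1e K2 hK2c hK2Ω
    have h2 : Q * ∫ x in K2 \ K1, gsq φ x ≤ ω / 2 := by
      calc _ ≤ Q * (ω / (2 * Q)) := mul_le_mul_of_nonneg_left h1 hQ0.le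
        _ = ω / 2 := by field_simp
    nlinarith
  have hG0 : ∀ x, 0 ≤ G x := by
    intro x
    have h2 := H.lam_nonneg
    have : ∀ y, 0 ≤ Q * gsq φ y := fun y => by unfold gsq; positivity
    have h3 : 0 ≤ gsq κ x := by unfold gsq; positivity
    exact add_nonneg (indicator_nonneg (fun y _ => this y) x)
      (add_nonneg (by positivity) (indicator_nonneg (fun y _ => by positivity) x))
  -- derivatives of the cutoff vanish on `K1`
  have hκK1 : ∀ x ∈ K1, κ x = 1 ∧ d1 κ x = 0 ∧ d2 κ x = 0 := by
    intro x hx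
    have : κ =ᶠ[nhds x] fun _ => 1 := by
      filter_upwards [hN.mem_nhds (hKN hx)] with y hy using hN1 y hy
    refine ⟨hN1 x (hKN hx), ?_, ?_⟩ <;> simp [d1, d2, this.fderiv_eq]
  have hKm : ∀ x ∈ Ω, ∀ a s : ℝ, |s| ≤ 1 + 4 * M → |a| ≤ 2 * ε →
      (s * d1 φ x + a * d1 κ x) ^ 2 + (s * d2 φ x + a * d2 κ x) ^ 2 ≤
        Q * gsq φ x + 8 * ε ^ 2 * gsq κ x := by
    intro x _ a s hs ha
    have hs2 : s ^ 2 ≤ (1 + 4 * M) ^ 2 := sq_le_sq' (by linarith [abs_le.1 hs]) (abs_le.1 hs).2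
    have ha2 : a ^ 2 ≤ (2 * ε) ^ 2 := sq_le_sq' (by linarith [abs_le.1 ha]) (abs_le.1 ha).2
    have e1 : 0 ≤ gsq φ x := by unfold gsq; positivity
    have e2 : 0 ≤ gsq κ x := by unfold gsq; positivity
    have h1 := mul_le_mul_of_nonneg_right hs2 e1
    have h2 := mul_le_mul_of_nonneg_right ha2 e2
    unfold gsq at *
    nlinarith [sq_nonneg (s * d1 φ x - a * d1 κ x), sq_nonneg (s * d2 φ x - a * d2 κ x)]
  have hder : ∀ x ∈ Ω, d1 f x = (Thet κ φ ε x + Pc κ φ ε x) * d1 φ x + ac φ ε x * d1 κ x ∧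
      d2 f x = (Thet κ φ ε x + Pc κ φ ε x) * d2 φ x + ac φ ε x * d2 κ x ∧
      f x = φ x * Thet κ φ ε x := fun x hx =>
    ⟨H.trunc_fderiv hκ ε hx 1, H.trunc_fderiv hκ ε hx Complex.I, indicator_of_mem hx _⟩
  refine ⟨f, hC, hT, ⟨N ∩ Ω, hN.inter H.isOpen, fun x hx => ⟨hKN (hKK1 hx), hKΩ hx⟩, ?_⟩, ?_, ?_, ?_⟩
  · intro x hx
    rw [hf, trunc, indicator_of_mem hx.2, Thet, hN1 x hx.1]; ring
  · intro x hx
    have h := Thet_range (φ := φ) hκr ε x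
    rw [hf, trunc, indicator_of_mem hx, abs_mul, abs_of_nonneg ((hκr x).1.trans h.1)]
    exact mul_le_of_le_one_right (abs_nonneg _) h.2
  · have e : (∫ x, kin 0 (fun x => (f x : ℂ)) x) - lam * (∫ x, p x * ‖(f x : ℂ)‖ ^ 2) =
        ∫ x, ((kin 0 (fun x => (f x : ℂ)) x - lam * (p x * ‖(f x : ℂ)‖ ^ 2)) -
          (d1 φ x * d1 f x + d2 φ x * d2 f x - lam * p x * φ x * f x)) := by
      rw [integral_sub _ hi2, hw, integral_sub, integral_const_mul, sub_zero]
      · exact hT.kin_int continuousOn_const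
      · exact (hT.m_int H.pCΩ).const_mul _
      · exact (hT.kin_int continuousOn_const).sub ((hT.m_int H.pCΩ).const_mul _)
    rw [e]
    refine le_trans (integral_mono ?_ hGi ?_) hGω
    · exact ((hT.kin_int continuousOn_const).sub ((hT.m_int H.pCΩ).const_mul _)).sub hi2
    intro x
    simp only []
    rw [kin_ofReal (hfd x)]
    by_cases hx2 : x ∈ K2
    · have hxΩ := hK2Ω hx2
      obtain ⟨e1, e2, e3⟩ := hder x hxΩ
      have hp := H.ppos x hxΩ
      obtain ⟨q1, q2⟩ := hP x hxΩ
      have hl := H.lam_nonneg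
      obtain ⟨r1, r2⟩ := hκr x
      have hΘ := Thet_range (φ := φ) hκr ε x
      have hm : lam * (p x * (φ x * Thet κ φ ε x * (φ x - φ x * Thet κ φ ε x))) ≤ 4 * ε ^ 2 * lam * P0 := by
        have h1 : φ x * Thet κ φ ε x * (φ x - φ x * Thet κ φ ε x) ≤ 4 * ε ^ 2 := by
          have s0 := Real.smoothTransition.nonneg (φ x ^ 2 / ε ^ 2 - 1)
          have s1 := Real.smoothTransition.le_one (φ x ^ 2 / ε ^ 2 - 1)
          have hb : φ x ^ 2 * (1 - Real.smoothTransition (φ x ^ 2 / ε ^ 2 - 1)) ≤ 4 * ε ^ 2 := by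
            by_cases h : φ x ^ 2 / ε ^ 2 ≤ 2
            · rw [div_le_iff₀ (by positivity)] at h
              nlinarith [sq_nonneg (φ x)]
            · rw [Real.smoothTransition.one_of_one_le (by linarith)]; simp; positivity
          have hb2 : 1 - Thet κ φ ε x = (1 - κ x) * (1 - Real.smoothTransition (φ x ^ 2 / ε ^ 2 - 1)) := by
            unfold Thet; ring
          calc _ = Thet κ φ ε x * ((1 - κ x) * (φ x ^ 2 * (1 - Real.smoothTransition (φ x ^ 2 / ε ^ 2 - 1)))) := by
                rw [show φ x * Thet κ φ ε x * (φ x - φ x * Thet κ φ ε x) = φ x ^ 2 * Thet κ φ ε x * (1 - Thet κ φ ε x) by ring, hb2]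
                ring
            _ ≤ 1 * (1 * (4 * ε ^ 2)) := by
                have h0 : 0 ≤ φ x ^ 2 * (1 - Real.smoothTransition (φ x ^ 2 / ε ^ 2 - 1)) :=
                  mul_nonneg (sq_nonneg _) (by linarith)
                refine mul_le_mul hΘ.2 (mul_le_mul (by linarith) hb h0 zero_le_one) ?_ zero_le_one
                exact mul_nonneg (by linarith) h0
            _ = _ := by ring
        calc _ ≤ lam * (p x * (4 * ε ^ 2)) := by gcongr
          _ ≤ lam * (P0 * (4 * ε ^ 2)) := by gcongr
          _ = _ := by ring
      have hn : ‖(f x : ℂ)‖ ^ 2 = (φ x * Thet κ φ ε x) ^ 2 := by rw [normsq]; simp [e3]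
      rw [hn, e1, e2, e3]
      set s := Thet κ φ ε x + Pc κ φ ε x with hs
      set a := ac φ ε x with ha
      simp only [hG, indicator_of_mem hxΩ]
      by_cases hx1 : x ∈ K1
      · obtain ⟨g1, g2, g3⟩ := hκK1 x hx1
        have hs1 : s = 1 := by rw [hs, Thet, Pc, g1]; ring
        rw [indicator_of_notMem (fun h => h.2 hx1), hs1, g2, g3]
        have : 0 ≤ 8 * ε ^ 2 * gsq κ x := by unfold gsq; positivity
        linarith
      · rw [indicator_of_mem (show x ∈ K2 \ K1 from ⟨hx2, hx1⟩)]
        have hPc := Pc_bound (φ := φ) hκr hε hM x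
        have hac := ac_bound (φ := φ) hε x
        have k1 := hKm x hxΩ a s (abs_le.2 ⟨by linarith, by linarith⟩) hac
        have k2 := hKm x hxΩ a (s - 1) (abs_le.2 ⟨by linarith, by linarith⟩) hac
        have m : ∀ A B : ℝ, A ^ 2 - A * B ≤ (A ^ 2 + (A - B) ^ 2) / 2 := fun A B => by
          nlinarith [sq_nonneg B]
        have m1 := m (s * d1 φ x + a * d1 κ x) (d1 φ x)
        have m2 := m (s * d2 φ x + a * d2 κ x) (d2 φ x)
        rw [show s * d1 φ x + a * d1 κ x - d1 φ x = (s - 1) * d1 φ x + a * d1 κ x by ring] at m1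
        rw [show s * d2 φ x + a * d2 κ x - d2 φ x = (s - 1) * d2 φ x + a * d2 κ x by ring] at m2
        have hm' : lam * p x * φ x * (φ x * Thet κ φ ε x) - lam * (p x * (φ x * Thet κ φ ε x) ^ 2)
          ≤ 4 * ε ^ 2 * lam * P0 := by
          refine le_of_eq_of_le ?_ hm
          ring
        linarith
    · have := fderiv_zero_of_compact hK2c.isClosed hoff hx2
      have h0 := hG0 x
      simpa [d1, d2, this, hoff x hx2] using h0
  · refine le_trans (integral_mono (H.egs_int hT continuousOn_const hη.continuous.continuousOn hηφ) hGi ?_) hGω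
    intro x
    simp only []
    by_cases hx2 : x ∈ K2
    · have hxΩ := hK2Ω hx2
      by_cases hxη : x ∈ tsupport η
      · have hφx := hηφ x hxΩ hxη
        obtain ⟨e1, e2, e3⟩ := hder x hxΩ
        rw [egs_ofReal (hfd x)]
        refine (mul_le_of_le_one_left (by positivity) (hη01 x).2).trans ?_
        have c1 : d1 f x - f x * (d1 φ x / φ x) = Pc κ φ ε x * d1 φ x + ac φ ε x * d1 κ x := by
          rw [e1, e3]; field_simp; ring
        have c2 : d2 f x - f x * (d2 φ x / φ x) = Pc κ φ ε x * d2 φ x + ac φ ε x * d2 κ x := by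
          rw [e2, e3]; field_simp; ring
        rw [c1, c2]
        have hl := H.lam_nonneg
        have h4 : 0 ≤ 4 * ε ^ 2 * lam * P0 := by positivity
        by_cases hx1 : x ∈ K1
        · obtain ⟨g1, g2, g3⟩ := hκK1 x hx1
          have hs1 : Pc κ φ ε x = 0 := by rw [Pc, g1]; ring
          rw [hs1, g2, g3]
          have := hG0 x
          simpa using this
        · simp only [hG, indicator_of_mem hxΩ]
          rw [indicator_of_mem (show x ∈ K2 \ K1 from ⟨hx2, hx1⟩)]
          have hPc := Pc_bound (φ := φ) hκr hε hM x
          have k1 := hKm x hxΩ (ac φ ε x) (Pc κ φ ε x) (abs_le.2 ⟨by linarith, by linarith⟩)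
            (ac_bound (φ := φ) hε x)
          linarith
      · rw [image_eq_zero_of_notMem_tsupport hxη, zero_mul]; exact hG0 x
    · rw [egs_off (fun h => hx2 (htf h)), mul_zero]; exact hG0 x
end

/-! ### Min-max for the Dirichlet eigenvalue of index `k + 1` -/

theorem setInt_kin {Ω : Set ℂ} {u A : ℂ → ℂ} (hu : tsupport u ⊆ Ω) :
    ∫ x in Ω, kin A u x = ∫ x, kin A u x :=
  setIntegral_eq_integral_of_forall_compl_eq_zero (fun _ hx => kin_off (fun h => hx (hu h)))

theorem setInt_m {Ω : Set ℂ} {u : ℂ → ℂ} {p : ℂ → ℝ} (hu : tsupport u ⊆ Ω) :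
    ∫ x in Ω, p x * ‖u x‖ ^ 2 = ∫ x, p x * ‖u x‖ ^ 2 :=
  setIntegral_eq_integral_of_forall_compl_eq_zero
    (fun x hx => by simp [(off_supp (fun h => hx (hu h)) : u x = 0 ∧ _).1])

section
variable {Ω : Set ℂ} {p : ℂ → ℝ} {lam : ℝ} {φ : ℂ → ℝ}

theorem m_nonneg (hp : ∀ x ∈ Ω, 0 < p x) {u : ℂ → ℂ} (hu : tsupport u ⊆ Ω) :
    0 ≤ ∫ x, p x * ‖u x‖ ^ 2 := by
  refine integral_nonneg (fun x => ?_)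
  by_cases hx : x ∈ Ω
  · have := hp x hx; positivity
  · simp [(off_supp (fun h => hx (hu h)) : u x = 0 ∧ _).1]

/-- A linear family of test functions with `k + 1` parameters contains a nonzero parameter whose
image has Rayleigh quotient at least `s`, for every `s < λ_{k+1}`. If `T` is not injective, an
element of its kernel satisfies the inequality trivially. -/
theorem minmax_test (hp : ∀ x ∈ Ω, 0 < p x) {k : ℕ} (hk : 1 ≤ k) {V : Submodule ℂ (ℂ → ℂ)}
    (hV : Module.finrank ℂ V = k) (T : V × ℂ →ₗ[ℂ] (ℂ → ℂ)) (hT : ∀ z, Test Ω (T z)) {s : ℝ}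
    (hs : s < eigenvalueND Ω p (k + 1)) :
    ∃ z, z ≠ 0 ∧ s * ∫ x, p x * ‖T z x‖ ^ 2 ≤ ∫ x, kin 0 (T z) x := by
  by_cases hinj : Function.Injective T
  · have : FiniteDimensional ℂ V := FiniteDimensional.of_finrank_pos (by omega)
    have hfr : Module.finrank ℂ (LinearMap.range T) = k + 1 := by
      rw [LinearMap.finrank_range_of_inj hinj, Module.finrank_prod, hV, Module.finrank_self]
    have hmem := csInf_le (α := ℝ) (s := { t : ℝ | ∃ V : Submodule ℂ (ℂ → ℂ), Module.finrank ℂ V = k + 1 ∧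
      (∀ u ∈ V, ContDiff ℝ (⊤ : ℕ∞) u ∧ HasCompactSupport u ∧ tsupport u ⊆ Ω) ∧
      t = sSup { s : ℝ | ∃ u ∈ V, u ≠ 0 ∧
        s = (∫ x in Ω, gradSqC u x) / ∫ x in Ω, p x * ‖u x‖ ^ 2 } }) (a := sSup { s : ℝ | ∃ u ∈ LinearMap.range T, u ≠ 0 ∧
        s = (∫ x in Ω, gradSqC u x) / ∫ x in Ω, p x * ‖u x‖ ^ 2 }) ?_ ?_
    · have hlt := hs.trans_le hmem
      have hne : { s : ℝ | ∃ u ∈ LinearMap.range T, u ≠ 0 ∧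
          s = (∫ x in Ω, gradSqC u x) / ∫ x in Ω, p x * ‖u x‖ ^ 2 }.Nonempty := by
        refine ⟨_, T (0, 1), ⟨_, rfl⟩, ?_, rfl⟩
        intro h
        have := hinj (h.trans (map_zero T).symm)
        simp at this
      obtain ⟨r, ⟨u, ⟨z, rfl⟩, hu0, rfl⟩, hr⟩ := exists_lt_of_lt_csSup hne hlt
      refine ⟨z, fun h => hu0 (by rw [h, map_zero]), ?_⟩
      rw [gradSqC_eq_kin, setInt_kin (hT z).2.2, setInt_m (hT z).2.2] at hr
      rcases (m_nonneg hp (hT z).2.2).eq_or_lt with h | h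
      · rw [← h, mul_zero]; exact integral_nonneg (kin_nonneg _ _)
      · rw [lt_div_iff₀ h] at hr; exact hr.le
    · refine ⟨0, ?_⟩
      rintro t ⟨W, -, hW, rfl⟩
      refine Real.sSup_nonneg ?_
      rintro r ⟨u, hu, -, rfl⟩
      rw [gradSqC_eq_kin, setInt_kin (hW u hu).2.2, setInt_m (hW u hu).2.2]
      exact div_nonneg (integral_nonneg (kin_nonneg _ _)) (m_nonneg hp (hW u hu).2.2)
    · refine ⟨_, hfr, ?_, rfl⟩
      rintro u ⟨z, rfl⟩
      exact hT z
  · obtain ⟨z, hz, hz0⟩ : ∃ z, T z = 0 ∧ z ≠ 0 := by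
      rw [← LinearMap.ker_eq_bot, Submodule.eq_bot_iff] at hinj
      push Not at hinj
      exact hinj
    refine ⟨z, hz0, ?_⟩
    rw [hz]
    have : kin 0 (0 : ℂ → ℂ) = fun _ => 0 := by ext x; exact kin_off (by simp)
    simp [this]

theorem m_pos (hp : ContinuousOn p Ω) (hpp : ∀ x ∈ Ω, 0 < p x) {u : ℂ → ℂ} (hu : Test Ω u)
    (h0 : u ≠ 0) : 0 < ∫ x, p x * ‖u x‖ ^ 2 := by
  obtain ⟨x, hx⟩ := Function.ne_iff.1 h0
  have hi := hu.m_int hp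
  have hnn : ∀ x, 0 ≤ p x * ‖u x‖ ^ 2 := fun x => by
    by_cases hx : x ∈ Ω
    · have := hpp x hx; positivity
    · simp [(off_supp (fun h => hx (hu.2.2 h)) : u x = 0 ∧ _).1]
  rw [integral_pos_iff_support_of_nonneg hnn hi]
  have hsub : {y | u y ≠ 0} ⊆ Function.support fun x => p x * ‖u x‖ ^ 2 := by
    intro y hy
    have hyΩ : y ∈ Ω := hu.2.2 (subset_tsupport u hy)
    have := hpp y hyΩ
    have h2 : 0 < ‖u y‖ := norm_pos_iff.2 hy
    exact ne_of_gt (by positivity)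
  refine lt_of_lt_of_le ?_ (measure_mono hsub)
  exact (isOpen_ne_fun hu.1.continuous continuous_const).measure_pos _ ⟨x, hx⟩
end

/-! ### Min-max for the magnetic eigenvalue -/

section
variable {Ω : Set ℂ} {p : ℂ → ℝ}

theorem pd1_sum {k : ℕ} {e : Fin k → ℂ → ℂ} (he : ∀ i, Differentiable ℝ (e i)) (c : Fin k → ℂ)
    (x : ℂ) : pd1 (fun y => ∑ i, c i * e i y) x = ∑ i, c i * pd1 (e i) x := by
  unfold pd1
  rw [fderiv_fun_sum (fun i _ => ((he i) x).const_mul (c i))]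
  rw [sum_apply]
  refine Finset.sum_congr rfl (fun i _ => ?_)
  rw [fderiv_const_mul ((he i) x)]; rfl

theorem pd2_sum {k : ℕ} {e : Fin k → ℂ → ℂ} (he : ∀ i, Differentiable ℝ (e i)) (c : Fin k → ℂ)
    (x : ℂ) : pd2 (fun y => ∑ i, c i * e i y) x = ∑ i, c i * pd2 (e i) x := by
  unfold pd2
  rw [fderiv_fun_sum (fun i _ => ((he i) x).const_mul (c i))]
  rw [sum_apply]
  refine Finset.sum_congr rfl (fun i _ => ?_)
  rw [fderiv_const_mul ((he i) x)]; rfl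

theorem norm_sum_sq_le {k : ℕ} (c g : Fin k → ℂ) :
    ‖∑ i, c i * g i‖ ^ 2 ≤ (k * ‖c‖ ^ 2) * ∑ i, ‖g i‖ ^ 2 := by
  have h1 : ‖∑ i, c i * g i‖ ≤ ∑ i, ‖c i‖ * ‖g i‖ :=
    (norm_sum_le _ _).trans (le_of_eq (by simp))
  have h2 := Finset.sum_mul_sq_le_sq_mul_sq Finset.univ (fun i => ‖c i‖) (fun i => ‖g i‖)
  have h3 : ∑ i, ‖c i‖ ^ 2 ≤ k * ‖c‖ ^ 2 := by
    calc ∑ i, ‖c i‖ ^ 2 ≤ ∑ _i : Fin k, ‖c‖ ^ 2 :=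
          Finset.sum_le_sum (fun i _ => pow_le_pow_left₀ (norm_nonneg _) (norm_le_pi_norm c i) 2)
      _ = k * ‖c‖ ^ 2 := by simp
  calc ‖∑ i, c i * g i‖ ^ 2 ≤ (∑ i, ‖c i‖ * ‖g i‖) ^ 2 := pow_le_pow_left₀ (norm_nonneg _) h1 2
    _ ≤ _ := h2
    _ ≤ _ := by gcongr

theorem kin_sum_le {k : ℕ} {A : ℂ → ℂ} {e : Fin k → ℂ → ℂ} (he : ∀ i, Differentiable ℝ (e i))
    (c : Fin k → ℂ) (x : ℂ) :
    kin A (fun y => ∑ i, c i * e i y) x ≤ (k * ‖c‖ ^ 2) * ∑ i, kin A (e i) x := by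
  unfold kin
  rw [pd1_sum he, pd2_sum he]
  have h : ∀ (g : Fin k → ℂ) (z : ℂ), Complex.I * ∑ i, c i * g i + z * ∑ i, c i * e i x
      = ∑ i, c i * (Complex.I * g i + z * e i x) := by
    intro g z
    rw [Finset.mul_sum, Finset.mul_sum, ← Finset.sum_add_distrib]
    exact Finset.sum_congr rfl (fun i _ => by ring)
  rw [h, h, Finset.sum_add_distrib, mul_add]
  exact add_le_add (norm_sum_sq_le _ _) (norm_sum_sq_le _ _)

/-- The members of a finite-dimensional space of test functions are supported in one compact set;
`e` is a basis of the space. -/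
theorem exists_common_support {k : ℕ} {V : Submodule ℂ (ℂ → ℂ)} (hV : Module.finrank ℂ V = k)
    (hk : 1 ≤ k) (hT : ∀ u ∈ V, Test Ω u) :
    ∃ K, IsCompact K ∧ K ⊆ Ω ∧ (∀ u ∈ V, tsupport u ⊆ K) ∧
      ∃ e : Fin k → ℂ → ℂ, (∀ i, Test Ω (e i)) ∧ (∀ i, tsupport (e i) ⊆ K) ∧
      (∀ c : Fin k → ℂ, (fun y => ∑ i, c i * e i y) ∈ V) ∧
      (∀ c : Fin k → ℂ, (fun y => ∑ i, c i * e i y) = 0 → c = 0) ∧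
      ∀ u ∈ V, ∃ c : Fin k → ℂ, u = fun y => ∑ i, c i * e i y := by
  have : FiniteDimensional ℂ V := FiniteDimensional.of_finrank_pos (by omega)
  let e := Module.finBasisOfFinrankEq ℂ V hV
  have hcomp : IsCompact (⋃ i, tsupport (e i : ℂ → ℂ)) :=
    isCompact_iUnion (fun i => (hT _ (e i).2).2.1)
  have hrep : ∀ u ∈ V, ∃ c : Fin k → ℂ, u = fun y => ∑ i, c i * (e i : ℂ → ℂ) y := by
    intro u hu
    refine ⟨e.repr ⟨u, hu⟩, ?_⟩
    have := congrArg (fun v : V => (v : ℂ → ℂ)) (e.sum_repr ⟨u, hu⟩)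
    simp only [Submodule.coe_sum, Submodule.coe_smul] at this
    refine this.symm.trans ?_; ext y; simp [Finset.sum_apply]
  have hsum : ∀ c : Fin k → ℂ, (fun y => ∑ i, c i * (e i : ℂ → ℂ) y)
      = ((∑ i, c i • e i : V) : ℂ → ℂ) := by
    intro c; ext y; simp [Finset.sum_apply]
  refine ⟨_, hcomp, iUnion_subset (fun i => (hT _ (e i).2).2.2), ?_, fun i => (e i : ℂ → ℂ),
    fun i => hT _ (e i).2, fun i => subset_iUnion (fun i => tsupport (e i : ℂ → ℂ)) i, ?_, ?_, hrep⟩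
  · intro u hu
    obtain ⟨c, rfl⟩ := hrep u hu
    refine closure_minimal ?_ hcomp.isClosed
    intro x hx
    by_contra hn
    simp only [mem_iUnion, not_exists] at hn
    exact hx (Finset.sum_eq_zero (fun i _ => by rw [image_eq_zero_of_notMem_tsupport (hn i), mul_zero]))
  · intro c; rw [hsum]; exact (∑ i, c i • e i : V).2
  · intro c hc
    rw [hsum] at hc
    have h0 : (∑ i, c i • e i : V) = 0 := Subtype.ext hc
    have := Fintype.linearIndependent_iff.1 e.linearIndependent c h0
    exact funext this

theorem Test.mono {Ω' : Set ℂ} {u : ℂ → ℂ} (hu : Test Ω u) (h : Ω ⊆ Ω') : Test Ω' u :=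
  ⟨hu.1, hu.2.1, hu.2.2.trans h⟩

/-- Rayleigh quotients are bounded above on a finite-dimensional space of test functions, so the
supremum in the definition of the eigenvalues is a genuine one. -/
theorem rayleigh_bdd (hp : ContinuousOn p Ω) (hpp : ∀ x ∈ Ω, 0 < p x) {A : ℂ → ℂ}
    (hA : ContinuousOn A Ω) {k : ℕ} (hk : 1 ≤ k) {V : Submodule ℂ (ℂ → ℂ)}
    (hV : Module.finrank ℂ V = k) (hT : ∀ u ∈ V, Test Ω u) :
    ∃ B, ∀ u ∈ V, u ≠ 0 → (∫ x, kin A u x) / (∫ x, p x * ‖u x‖ ^ 2) ≤ B := by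
  obtain ⟨K, hK, hKΩ, hVK, e, he, heK, hmem, hind, hrep⟩ := exists_common_support hV hk hT
  -- a positive lower bound for p on K
  have hne : Nonempty (Fin k) := ⟨⟨0, hk⟩⟩
  obtain ⟨p0, hp0, hp0K⟩ : ∃ p0 > 0, ∀ x ∈ K, p0 ≤ p x := by
    rcases K.eq_empty_or_nonempty with h | h
    · exact ⟨1, one_pos, by simp [h]⟩
    · obtain ⟨x, hx, hm⟩ := hK.exists_isMinOn h (hp.mono hKΩ)
      exact ⟨p x, hpp x (hKΩ hx), fun y hy => hm hy⟩
  let I : (Fin k → ℂ) → ℝ := fun c => ∫ x in K, ‖∑ i, c i * e i x‖ ^ 2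
  have hIc : Continuous I := by
    refine continuous_parametric_integral_of_continuous ?_ hK
    simp only [Function.uncurry_def]
    have : ∀ i, Continuous (e i) := fun i => (he i).1.continuous
    fun_prop
  have hIm : ∀ c, p0 * I c ≤ ∫ x, p x * ‖∑ i, c i * e i x‖ ^ 2 := by
    intro c
    have ht := hT _ (hmem c)
    rw [← setInt_m (hVK _ (hmem c))]
    rw [← integral_const_mul]
    refine setIntegral_mono_on ?_ (ht.m_int hp).integrableOn hK.measurableSet ?_
    · exact ((ht.m_int continuousOn_const (f := fun _ => p0))).integrableOn
    · intro x hx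
      exact mul_le_mul_of_nonneg_right (hp0K x hx) (by positivity)
  have hIpos : ∀ c ≠ 0, 0 < I c := by
    intro c hc
    have ht := hT _ (hmem c)
    have := m_pos (p := fun _ => 1) (Ω := Ω) continuousOn_const (fun _ _ => one_pos) ht (fun h => hc (hind c h))
    rw [← setInt_m (hVK _ (hmem c))] at this
    simpa [I] using this
  obtain ⟨c0, hc0, hmin⟩ : ∃ c0 > 0, ∀ c : Fin k → ℂ, ‖c‖ = 1 → c0 ≤ I c := by
    have hs : IsCompact (Metric.sphere (0 : Fin k → ℂ) 1) := isCompact_sphere _ _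
    obtain ⟨c, hc, hm⟩ := hs.exists_isMinOn
      ⟨fun _ => 1, by simp [pi_norm_const]⟩ hIc.continuousOn
    have hcn : ‖c‖ = 1 := by simpa using hc
    refine ⟨I c, hIpos c (fun h => by simp [h] at hcn), fun c' hc' => hm (by simpa using hc')⟩
  have hIhom : ∀ c : Fin k → ℂ, c0 * ‖c‖ ^ 2 ≤ I c := by
    intro c
    by_cases hc : c = 0
    · subst hc; simp [I]
    have hn : (0:ℝ) < ‖c‖ := norm_pos_iff.2 hc
    have h1 := hmin (((‖c‖⁻¹ : ℝ) : ℂ) • c) (by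
      rw [norm_smul]; simp [hn.ne'])
    have h2 : I (((‖c‖⁻¹ : ℝ) : ℂ) • c) = ‖c‖⁻¹ ^ 2 * I c := by
      simp only [I]
      rw [← integral_const_mul]
      congr 1; ext x
      have : ∑ i, ((((‖c‖⁻¹ : ℝ) : ℂ) • c) i) * e i x = ((‖c‖⁻¹ : ℝ) : ℂ) * ∑ i, c i * e i x := by
        rw [Finset.mul_sum]; exact Finset.sum_congr rfl (fun i _ => by simp [mul_assoc])
      rw [this, norm_mul, mul_pow]; simp
    rw [h2, inv_pow, ← div_eq_inv_mul, le_div_iff₀ (by positivity)] at h1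
    exact h1
  let D : ℝ := ∑ i, ∫ x, kin A (e i) x
  have hkint : ∀ i, Integrable (fun x => kin A (e i) x) := fun i => (he i).kin_int (hA.mono (he i).2.2)
  have hD : 0 ≤ D := Finset.sum_nonneg (fun i _ => integral_nonneg (kin_nonneg _ _))
  refine ⟨k * D / (p0 * c0), fun u hu hu0 => ?_⟩
  obtain ⟨c, rfl⟩ := hrep u hu
  have hc : c ≠ 0 := by rintro rfl; exact hu0 (by ext; simp)
  have hn : (0:ℝ) < ‖c‖ := norm_pos_iff.2 hc
  have hq : ∫ x, kin A (fun y => ∑ i, c i * e i y) x ≤ (k * ‖c‖ ^ 2) * D := by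
    simp only [D]
    rw [← integral_finsetSum _ (fun i _ => hkint i), ← integral_const_mul]
    refine integral_mono ((hT _ hu).kin_int (hA.mono (hT _ hu).2.2))
      ((integrable_finsetSum _ (fun i _ => hkint i)).const_mul _) (fun x => ?_)
    exact kin_sum_le (fun i => (he i).1.differentiable (by simp)) c x
  have hm : p0 * (c0 * ‖c‖ ^ 2) ≤ ∫ x, p x * ‖∑ i, c i * e i x‖ ^ 2 :=
    (mul_le_mul_of_nonneg_left (hIhom c) hp0.le).trans (hIm c)
  rw [div_le_div_iff₀ (lt_of_lt_of_le (by positivity) hm) (by positivity)]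
  calc _ ≤ (k * ‖c‖ ^ 2) * D * (p0 * c0) := by gcongr
    _ = k * D * (p0 * (c0 * ‖c‖ ^ 2)) := by ring
    _ ≤ _ := by gcongr

theorem abPot_cont (a : ℂ) : ContinuousOn (abPot a) {a}ᶜ := by
  unfold abPot
  refine ContinuousOn.div (by fun_prop) (by fun_prop) ?_
  intro x hx
  have : x - a ≠ 0 := sub_ne_zero.2 hx
  simp [this]

/-- Spaces of test functions of every dimension exist, so the infimum defining the eigenvalues is
over a nonempty set. The space consists of polynomials times a bump function. -/
theorem exists_subspace (hΩ : IsOpen Ω) (hne : Ω.Nonempty) (k : ℕ) :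
    ∃ V : Submodule ℂ (ℂ → ℂ), Module.finrank ℂ V = k ∧ ∀ u ∈ V, Test Ω u := by
  obtain ⟨z, hz⟩ := hne
  obtain ⟨κ, hκ, hκc, hκs, -, N, hN, hzN, hκ1⟩ := exists_cutoff (isCompact_singleton (x := z)) hΩ
    (by simpa using hz)
  let T : Polynomial.degreeLT ℂ k →ₗ[ℂ] (ℂ → ℂ) :=
    { toFun := fun P x => (P : Polynomial ℂ).eval x * (κ x : ℂ)
      map_add' := fun P Q => by ext x; simp [add_mul]
      map_smul' := fun c P => by ext x; simp [mul_assoc] }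
  have hT : ∀ P, Test Ω (T P) := by
    intro P
    have hsm : ContDiff ℝ (⊤ : ℕ∞) (T P) := by
      refine ContDiff.mul ?_ ?_
      · exact (Polynomial.contDiff_aeval (𝕜 := ℂ) (P : Polynomial ℂ) _).restrict_scalars ℝ
      · exact Complex.ofRealCLM.contDiff.comp hκ
    have hsup : Function.support (T P) ⊆ tsupport κ := by
      intro x hx
      refine subset_tsupport _ (fun h => hx ?_)
      simp [T, h]
    have hts : tsupport (T P) ⊆ tsupport κ := closure_minimal hsup (isClosed_tsupport _)
    exact ⟨hsm, HasCompactSupport.of_support_subset_isCompact hκc hsup, hts.trans hκs⟩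
  have hinj : Function.Injective T := by
    rw [injective_iff_map_eq_zero]
    intro P hP
    have hroots : Set.Infinite N := by
      have := hN.mem_nhds (hzN (mem_singleton z))
      exact infinite_of_mem_nhds z this
    refine Subtype.ext ?_
    refine Polynomial.eq_zero_of_infinite_isRoot _ (hroots.mono ?_)
    intro x hx
    have := congrFun hP x
    simp only [T, LinearMap.coe_mk, AddHom.coe_mk, hκ1 x hx] at this
    simpa using this
  refine ⟨LinearMap.range T, ?_, ?_⟩
  · rw [LinearMap.finrank_range_of_inj hinj, (Polynomial.degreeLTEquiv ℂ k).finrank_eq]; simp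
  · rintro u ⟨P, rfl⟩; exact hT P

/-- Min-max reduction: `t ≤ λ_k^a` as soon as each `k`-dimensional space of test functions on
`Ω \ {a}` contains a nonzero member with Rayleigh quotient at least `t`. -/
theorem final_reduce (hΩ : IsOpen Ω) (hp : ContinuousOn p Ω) (hpp : ∀ x ∈ Ω, 0 < p x)
    (hne : Ω.Nonempty) {a : ℂ} {k : ℕ} (hk : 1 ≤ k) {t : ℝ}
    (h : ∀ V : Submodule ℂ (ℂ → ℂ), Module.finrank ℂ V = k → (∀ u ∈ V, Test (Ω \ {a}) u) →
      ∃ u ∈ V, u ≠ 0 ∧ t * ∫ x, p x * ‖u x‖ ^ 2 ≤ ∫ x, kin (abPot a) u x) :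
    t ≤ eigenvalueAB Ω p a k := by
  have hΩ' : IsOpen (Ω \ {a}) := hΩ.sdiff isClosed_singleton
  have hne' : (Ω \ {a}).Nonempty := by
    obtain ⟨z, hz⟩ := hne
    have : Ω.Infinite := infinite_of_mem_nhds z (hΩ.mem_nhds hz)
    exact (this.sdiff (finite_singleton a)).nonempty
  refine le_csInf ?_ ?_
  · obtain ⟨V, hV, hT⟩ := exists_subspace hΩ' hne' k
    exact ⟨_, V, hV, hT, rfl⟩
  · rintro s ⟨V, hV, hT, rfl⟩
    obtain ⟨u, hu, hu0, hle⟩ := h V hV hT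
    have hT' : ∀ u ∈ V, Test Ω u := fun u hu => (Test.mono (hT u hu) sdiff_subset)
    obtain ⟨B, hB⟩ := rayleigh_bdd (Ω := Ω \ {a}) (p := p) (hp.mono sdiff_subset)
      (fun x hx => hpp x hx.1) ((abPot_cont a).mono (fun x hx => hx.2)) hk hV hT
    refine le_csSup_of_le (b := (∫ x in Ω, mgSq a u x) / ∫ x in Ω, p x * ‖u x‖ ^ 2) ?_ ⟨u, hu, hu0, rfl⟩ ?_
    · refine ⟨B, ?_⟩
      rintro r ⟨v, hv, hv0, rfl⟩
      rw [mgSq_eq_kin, setInt_kin (hT' v hv).2.2, setInt_m (hT' v hv).2.2]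
      exact hB v hv hv0
    · rw [mgSq_eq_kin, setInt_kin (hT' u hu).2.2, setInt_m (hT' u hu).2.2,
        le_div_iff₀ (m_pos hp hpp (hT' u hu) hu0)]
      exact hle
end

/-! ### Local geometry at the boundary point -/

/-- Euclidean inner product on `ℂ = ℝ²`. -/
def ip (n v : ℂ) : ℝ := n.re * v.re + n.im * v.im

theorem ip_add (n v w : ℂ) : ip n (v + w) = ip n v + ip n w := by simp [ip]; ring
theorem ip_sub (n v w : ℂ) : ip n (v - w) = ip n v - ip n w := by simp [ip]; ring
theorem ip_smul (n v : ℂ) (s : ℝ) : ip n (s * v) = s * ip n v := by simp [ip]; ring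
theorem ip_self (n : ℂ) : ip n n = ‖n‖ ^ 2 := by rw [normsq, ip]; ring
theorem ip_neg (n v : ℂ) : ip (-n) v = - ip n v := by simp [ip]; ring
theorem abs_ip_le (n v : ℂ) : |ip n v| ≤ ‖n‖ * ‖v‖ := by
  refine abs_le_of_sq_le_sq ?_ (by positivity)
  rw [mul_pow, normsq, normsq, ip]
  nlinarith [sq_nonneg (n.re * v.im - n.im * v.re)]

/-- A connected set that meets both `t` and its complement meets the boundary of `t`. -/
theorem inter_frontier_ne {s t : Set ℂ} (hs : IsPreconnected s) (h1 : (s ∩ t).Nonempty)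
    (h2 : (s ∩ tᶜ).Nonempty) : (s ∩ frontier t).Nonempty := by
  by_contra hno
  have hno' : ∀ x ∈ s, x ∉ frontier t := fun x hx hf => hno ⟨x, hx, hf⟩
  have hcov : s ⊆ interior t ∪ (closure t)ᶜ := by
    intro x hx
    by_cases hc : x ∈ closure t
    · left; by_contra hi; exact hno' x hx ⟨hc, hi⟩
    · exact Or.inr hc
  obtain ⟨y, -, hy1, hy2⟩ := hs _ _ isOpen_interior isClosed_closure.isOpen_compl hcov
    (by
      obtain ⟨x, hx, hxt⟩ := h1
      exact ⟨x, hx, by_contra fun hi => hno' x hx ⟨subset_closure hxt, hi⟩⟩)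
    (by
      obtain ⟨x, hx, hxt⟩ := h2
      exact ⟨x, hx, fun hc => hno' x hx ⟨hc, fun hi => hxt (interior_subset hi)⟩⟩)
  exact hy2 (subset_closure (interior_subset hy1))

/-- Local description of `Ω` and `φ` at scale `r0` around the boundary point `b`, with inner unit
normal `n` and `φ` normalised to be positive near `b` with `∇φ(b) = n`. The gradient of `φ` stays
within `1/100` of `n`, the set `Ω` contains a cone around `n` and avoids the opposite one, and for `a`
near `b` the value `φ(a)` is comparable to the distance of `a` from the boundary. -/
structure Loc (Ω : Set ℂ) (φ : ℂ → ℝ) (b n : ℂ) (r0 : ℝ) : Prop where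
  norm_n : ‖n‖ = 1
  r0_pos : 0 < r0
  pos : ∀ x ∈ Ω, ‖x - b‖ < r0 → 0 < φ x
  grad : ∀ x ∈ Ω, ‖x - b‖ < r0 → ∀ v, |fderiv ℝ φ x v - ip n v| ≤ ‖v‖ / 100
  lip : ∀ x ∈ Ω, ‖x - b‖ < r0 → ∀ y ∈ Ω, ‖y - b‖ < r0 → |φ x - φ y - ip n (x - y)| ≤ ‖x - y‖ / 100
  lipb : ∀ x ∈ Ω, ‖x - b‖ < r0 → |φ x - ip n (x - b)| ≤ ‖x - b‖ / 100
  cone : ∀ x, ‖x - b‖ < r0 → ‖x - b‖ / 50 < ip n (x - b) → x ∈ Ω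
  below : ∀ x, ‖x - b‖ < r0 → ip n (x - b) < -(‖x - b‖ / 50) → x ∉ Ω
  ball : ∀ a ∈ Ω, ‖a - b‖ < r0 / 4 → Metric.closedBall a (φ a / 4) ⊆ Ω
  down : ∀ a ∈ Ω, ‖a - b‖ < r0 / 4 → a - ((2 * φ a : ℝ) : ℂ) * n ∉ Ω
  dist : ∀ a ∈ Ω, ‖a - b‖ < r0 / 4 → Metric.infDist a (frontier Ω) ≤ 2 * φ a

section
variable {Ω : Set ℂ} {p : ℂ → ℝ} {lam : ℝ} {φ G : ℂ → ℝ} {b n : ℂ} {r : ℝ}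

/-- `G` vanishes at `b` and on `∂Ω` near `b`, and is affine with gradient `n` up to a Lipschitz error
`1/100`. This describes a `C¹` extension of the normalised eigenfunction across the boundary. -/
structure CExt (Ω : Set ℂ) (G : ℂ → ℝ) (b n : ℂ) (r : ℝ) : Prop where
  hn : ‖n‖ = 1
  hr : 0 < r
  zero : G b = 0
  front : ∀ x ∈ frontier Ω, ‖x - b‖ < r → G x = 0
  lip : ∀ x y, ‖x - b‖ < r → ‖y - b‖ < r → |G x - G y - ip n (x - y)| ≤ ‖x - y‖ / 100

theorem CExt.neg (E : CExt Ω G b n r) : CExt Ω (fun x => - G x) b (-n) r where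
  hn := by simpa using E.hn
  hr := E.hr
  zero := by simp [E.zero]
  front x h1 h2 := by simp [E.front x h1 h2]
  lip x y h1 h2 := by
    rw [ip_neg]
    have := E.lip x y h1 h2
    rw [show - G x - - G y - - ip n (x - y) = -(G x - G y - ip n (x - y)) by ring, abs_neg]
    exact this

theorem CExt.seg (E : CExt Ω G b n r) {x y : ℂ} (h : ∀ t ∈ Icc (0:ℝ) 1,
    ‖x + t * (y - x) - b‖ < r ∧ 0 < G (x + t * (y - x))) : x ∈ Ω ↔ y ∈ Ω := by
  have hc : IsPreconnected ((fun t : ℝ => x + t * (y - x)) '' Icc 0 1) :=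
    isPreconnected_Icc.image _ (by fun_prop)
  have hx : x ∈ (fun t : ℝ => x + t * (y - x)) '' Icc 0 1 := ⟨0, by simp, by simp⟩
  have hy : y ∈ (fun t : ℝ => x + t * (y - x)) '' Icc 0 1 := ⟨1, by simp, by simp⟩
  have hno : ¬ ((fun t : ℝ => x + t * (y - x)) '' Icc 0 1 ∩ frontier Ω).Nonempty := by
    rintro ⟨_, ⟨t, ht, rfl⟩, hf⟩
    have := E.front _ hf (h t ht).1
    exact absurd this (h t ht).2.ne'
  constructor
  · intro h1
    by_contra h2
    exact hno (inter_frontier_ne hc ⟨x, hx, h1⟩ ⟨y, hy, h2⟩)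
  · intro h1
    by_contra h2
    exact hno (inter_frontier_ne hc ⟨y, hy, h1⟩ ⟨x, hx, h2⟩)

/-- Near `b` the set `{G > 0}` lies entirely inside or entirely outside `Ω`: each of its points is
joined to `b + (r/2)n` by a path on which `G > 0`, hence which avoids `∂Ω`. -/
theorem CExt.side (E : CExt Ω G b n r) {x : ℂ} (hx : ‖x - b‖ < r / 4) (hG : 0 < G x) :
    x ∈ Ω ↔ b + ((r / 2 : ℝ) : ℂ) * n ∈ Ω := by
  have hr := E.hr
  have hnn : ‖((r / 2 : ℝ) : ℂ) * n‖ = r / 2 := by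
    rw [norm_mul, E.hn, Complex.norm_real, mul_one, norm_of_nonneg (by positivity)]
  have h1 : x ∈ Ω ↔ x + ((r / 2 : ℝ) : ℂ) * n ∈ Ω := by
    refine E.seg (fun t ht => ?_)
    have e1 : x + t * (x + ((r / 2 : ℝ) : ℂ) * n - x) = x + ((t * (r / 2) : ℝ) : ℂ) * n := by
      push_cast; ring
    rw [e1]
    have hb : ‖x + ((t * (r / 2) : ℝ) : ℂ) * n - b‖ < r := by
      have : x + ((t * (r / 2) : ℝ) : ℂ) * n - b = (x - b) + (t : ℂ) * (((r / 2 : ℝ) : ℂ) * n) := by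
        push_cast; ring
      rw [this]
      refine (norm_add_le _ _).trans_lt ?_
      rw [norm_mul, hnn, Complex.norm_real, norm_of_nonneg ht.1]
      nlinarith [ht.2]
    refine ⟨hb, ?_⟩
    have := E.lip _ x hb (by linarith)
    rw [add_sub_cancel_left, ip_smul, ip_self, E.hn, norm_mul, E.hn, Complex.norm_real,
      norm_of_nonneg (by have := ht.1; positivity)] at this
    have h0 := ht.1
    have := (abs_le.1 this).1
    have : 0 ≤ t * (r / 2) := by positivity
    linarith
  have h2 : b + ((r / 2 : ℝ) : ℂ) * n ∈ Ω ↔ x + ((r / 2 : ℝ) : ℂ) * n ∈ Ω := by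
    refine E.seg (fun t ht => ?_)
    have e1 : b + ((r / 2 : ℝ) : ℂ) * n + t * (x + ((r / 2 : ℝ) : ℂ) * n - (b + ((r / 2 : ℝ) : ℂ) * n)) - b
        = ((r / 2 : ℝ) : ℂ) * n + (t : ℂ) * (x - b) := by ring
    have e2 : ‖(t : ℂ) * (x - b)‖ ≤ r / 4 := by
      rw [norm_mul, Complex.norm_real, norm_of_nonneg ht.1]
      nlinarith [ht.2, ht.1, norm_nonneg (x - b)]
    have hb := (norm_add_le (((r / 2 : ℝ) : ℂ) * n) ((t : ℂ) * (x - b)))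
    rw [hnn] at hb
    constructor
    · rw [e1]; linarith
    · have := E.lip (b + ((r / 2 : ℝ) : ℂ) * n + t * (x + ((r / 2 : ℝ) : ℂ) * n - (b + ((r / 2 : ℝ) : ℂ) * n))) b
        (by rw [e1]; linarith) (by simpa using hr)
      rw [e1, E.zero, ip_add, ip_smul n n, ip_self, E.hn] at this
      have h3 := (abs_le.1 ((abs_ip_le n ((t : ℂ) * (x - b))))).1
      rw [E.hn] at h3
      have := (abs_le.1 this).1
      linarith
  rw [h1, h2]

theorem CExt.ne_zero (E : CExt Ω G b n r) {W : Set ℂ} (hW : IsOpen W) (hne : W.Nonempty)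
    (hWb : ∀ x ∈ W, ‖x - b‖ < r) : ∃ x ∈ W, G x ≠ 0 := by
  obtain ⟨w, hw⟩ := hne
  by_cases h : G w = 0
  · obtain ⟨ε, hε, hb⟩ := Metric.isOpen_iff.1 hW w hw
    have hmem : w + ((ε / 2 : ℝ) : ℂ) * n ∈ W := by
      refine hb ?_
      rw [mem_ball_iff_norm, add_sub_cancel_left, norm_mul, E.hn, Complex.norm_real,
        norm_of_nonneg (by positivity)]
      linarith
    refine ⟨_, hmem, ?_⟩
    have := E.lip _ w (hWb _ hmem) (hWb _ hw)
    rw [add_sub_cancel_left, ip_smul, ip_self, E.hn, norm_mul, E.hn, Complex.norm_real,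
      norm_of_nonneg (by positivity), h] at this
    have := (abs_le.1 this).1
    intro h0
    rw [h0] at this
    linarith
  · exact ⟨w, hw, h⟩

theorem CExt.iff_pos (E : CExt Ω G b n r) (hΩ : IsOpen Ω) (hp : b + ((r / 2 : ℝ) : ℂ) * n ∈ Ω)
    (hm : b + ((r / 2 : ℝ) : ℂ) * (-n) ∉ Ω) {x : ℂ} (hx : ‖x - b‖ < r / 4) : x ∈ Ω ↔ 0 < G x := by
  refine ⟨fun h => ?_, fun h => (E.side hx h).2 hp⟩
  by_contra hle
  have hr := E.hr
  have hneg : ∀ y, ‖y - b‖ < r / 4 → G y < 0 → y ∉ Ω := fun y hy hG hyΩ =>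
    hm ((E.neg.side hy (by simpa using hG)).1 hyΩ)
  have hopen : IsOpen (Ω ∩ Metric.ball b (r / 4)) := hΩ.inter Metric.isOpen_ball
  obtain ⟨ε, hε, hb⟩ := Metric.isOpen_iff.1 hopen x ⟨h, by rwa [mem_ball_iff_norm]⟩
  have hmem : x - ((ε / 2 : ℝ) : ℂ) * n ∈ Ω ∩ Metric.ball b (r / 4) := by
    refine hb ?_
    rw [mem_ball_iff_norm, sub_sub_cancel_left, norm_neg, norm_mul, E.hn, Complex.norm_real,
      norm_of_nonneg (by positivity)]
    linarith
  have hmb : ‖x - ((ε / 2 : ℝ) : ℂ) * n - b‖ < r / 4 := mem_ball_iff_norm.1 hmem.2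
  refine hneg _ hmb ?_ hmem.1
  have := E.lip x _ (by linarith) (lt_trans hmb (by linarith))
  rw [sub_sub_cancel, ip_smul, ip_self, E.hn, norm_mul, E.hn, Complex.norm_real,
      norm_of_nonneg (by positivity)] at this
  have := (abs_le.1 this).1
  push Not at hle
  linarith

/-- Near `b` the domain is `{G > 0}` or `{G < 0}`. That `Ω` contains both sides is excluded by the
smooth boundary, and that it contains neither is excluded by `b ∈ ∂Ω`. -/
theorem CExt.dichotomy (E : CExt Ω G b n r) (hΩ : IsOpen Ω) (hb : b ∈ frontier Ω)
    (hsm : HasSmoothBoundary Ω) :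
    (∀ x, ‖x - b‖ < r / 4 → (x ∈ Ω ↔ 0 < G x)) ∨ (∀ x, ‖x - b‖ < r / 4 → (x ∈ Ω ↔ 0 < -G x)) := by
  have hr := E.hr
  have hB : ∀ x ∈ Metric.ball b (r / 4), ‖x - b‖ < r / 4 := fun x hx => mem_ball_iff_norm.1 hx
  by_cases hp : b + ((r / 2 : ℝ) : ℂ) * n ∈ Ω <;> by_cases hm : b + ((r / 2 : ℝ) : ℂ) * (-n) ∈ Ω
  · exfalso
    obtain ⟨U, f, hU, hbU, hf, hfd, hUf⟩ := hsm b hb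
    have hbΩ : b ∉ Ω := by rw [hΩ.frontier_eq] at hb; exact hb.2
    have hfb : 0 ≤ f b := by
      by_contra h
      exact hbΩ (hUf.ge ⟨hbU, not_le.1 h⟩).1
    have hfb' : f b ≤ 0 := by
      by_contra h
      push Not at h
      have hev : ∀ᶠ x in nhds b, x ∉ Ω := by
        filter_upwards [hU.mem_nhds hbU, hf.continuous.continuousAt.eventually (lt_mem_nhds h)] with x hx1 hx2 hxΩ
        exact absurd (hUf.le ⟨hxΩ, hx1⟩).2 (not_lt.2 hx2.le)
      have hcl : b ∈ closure Ω := frontier_subset_closure hb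
      obtain ⟨x, hx⟩ := (mem_closure_iff_frequently.1 hcl).and_eventually hev |>.exists
      exact hx.2 hx.1
    have h0 : f b = 0 := le_antisymm hfb' hfb
    have hex : ∃ x ∈ U ∩ Metric.ball b (r / 4), 0 < f x := by
      by_contra hcon
      push Not at hcon
      have : IsLocalMax f b := by
        filter_upwards [hU.mem_nhds hbU, Metric.ball_mem_nhds b (by positivity : 0 < r / 4)] with x hx1 hx2
        rw [h0]; exact hcon x ⟨hx1, hx2⟩
      exact hfd b hbU this.fderiv_eq_zero
    obtain ⟨x, hx⟩ := hex
    obtain ⟨y, hy, hy0⟩ := E.ne_zero (W := (U ∩ Metric.ball b (r / 4)) ∩ {x | 0 < f x})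
      ((hU.inter Metric.isOpen_ball).inter (isOpen_lt continuous_const hf.continuous)) ⟨x, hx⟩
      (fun x hx => (hB x hx.1.2).trans (by linarith))
    have hyΩ : y ∉ Ω := fun h => absurd (hUf.le ⟨h, hy.1.1⟩).2 (not_lt.2 (le_of_lt hy.2))
    rcases lt_or_gt_of_ne hy0 with h | h
    · exact hyΩ ((E.neg.side (hB y hy.1.2) (by simpa using h)).2 hm)
    · exact hyΩ ((E.side (hB y hy.1.2) h).2 hp)
  · exact Or.inl (fun x hx => E.iff_pos hΩ hp hm hx)
  · exact Or.inr (fun x hx => E.neg.iff_pos hΩ hm (by simpa using hp) hx)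
  · exfalso
    have hcl : b ∈ closure Ω := frontier_subset_closure hb
    have hne : (Ω ∩ Metric.ball b (r / 4)).Nonempty := by
      rw [inter_comm]
      exact mem_closure_iff.1 hcl _ Metric.isOpen_ball (by simpa using hr)
    obtain ⟨y, hy, hy0⟩ := E.ne_zero (hΩ.inter Metric.isOpen_ball) hne
      (fun x hx => (hB x hx.2).trans (by linarith))
    rcases lt_or_gt_of_ne hy0 with h | h
    · exact hm ((E.neg.side (hB y hy.2) (by simpa using h)).1 hy.1)
    · exact hp ((E.side (hB y hy.2) h).1 hy.1)

theorem CExt.loc (E : CExt Ω G b n r) (hΩ : IsOpen Ω)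
    (hiff : ∀ x, ‖x - b‖ < r / 4 → (x ∈ Ω ↔ 0 < G x))
    (hφ : ∀ x ∈ Ω, ‖x - b‖ < r → φ x = G x)
    (hd : ∀ x, ‖x - b‖ < r → ∀ v, |fderiv ℝ G x v - ip n v| ≤ ‖v‖ / 100) : Loc Ω φ b n (r / 4) := by
  have hr := E.hr
  have key : ∀ x, ‖x - b‖ < r / 4 → |G x - ip n (x - b)| ≤ ‖x - b‖ / 100 := by
    intro x hx
    have := E.lip x b (by linarith) (by simpa using hr)
    rwa [E.zero, sub_zero] at this
  have hle : ∀ x, ‖x - b‖ < r / 4 → G x ≤ 101 / 100 * ‖x - b‖ := by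
    intro x hx
    have h1 := (abs_le.1 (key x hx)).2
    have h2 := (abs_le.1 (abs_ip_le n (x - b))).2
    rw [E.hn] at h2
    linarith
  have hdn : ∀ a ∈ Ω, ‖a - b‖ < r / 4 / 4 → a - ((2 * φ a : ℝ) : ℂ) * n ∉ Ω := by
    intro a ha hab
    have hGa := (hiff a (by linarith)).1 ha
    rw [hφ a ha (by linarith)]
    have h1 := hle a (by linarith)
    have hnn : ‖((2 * G a : ℝ) : ℂ) * n‖ = 2 * G a := by
      rw [norm_mul, E.hn, Complex.norm_real, mul_one, norm_of_nonneg (by positivity)]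
    have hb : ‖a - ((2 * G a : ℝ) : ℂ) * n - b‖ < r / 4 := by
      rw [show a - ((2 * G a : ℝ) : ℂ) * n - b = (a - b) - ((2 * G a : ℝ) : ℂ) * n by ring]
      refine (norm_sub_le _ _).trans_lt ?_
      rw [hnn]; linarith
    rw [hiff _ hb]
    have := E.lip a _ (by linarith) (hb.trans (by linarith))
    rw [sub_sub_cancel, ip_smul, ip_self, E.hn, hnn] at this
    have := (abs_le.1 this).1
    linarith
  refine ⟨E.hn, by positivity, ?_, ?_, ?_, ?_, ?_, ?_, ?_, hdn, ?_⟩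
  · intro x hx hb
    rw [hφ x hx (by linarith)]
    exact (hiff x hb).1 hx
  · intro x hx hb v
    have : φ =ᶠ[nhds x] G := by
      have h2 : IsOpen {y : ℂ | ‖y - b‖ < r} := isOpen_lt (by fun_prop) (by fun_prop)
      filter_upwards [hΩ.mem_nhds hx, h2.mem_nhds (show ‖x - b‖ < r by linarith)] with y hy hyb
      exact hφ y hy hyb
    rw [this.fderiv_eq]
    exact hd x (by linarith) v
  · intro x hx hxb y hy hyb
    rw [hφ x hx (by linarith), hφ y hy (by linarith)]
    exact E.lip x y (by linarith) (by linarith)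
  · intro x hx hxb
    rw [hφ x hx (by linarith)]
    exact key x hxb
  · intro x hx hc
    rw [hiff x hx]
    have := (abs_le.1 (key x hx)).1
    have := norm_nonneg (x - b)
    linarith
  · intro x hx hc
    rw [hiff x hx]
    have := (abs_le.1 (key x hx)).2
    have := norm_nonneg (x - b)
    linarith
  · intro a ha hab y hy
    have hGa := (hiff a (by linarith)).1 ha
    rw [hφ a ha (by linarith), mem_closedBall_iff_norm] at hy
    have h1 := hle a (by linarith)
    have hyb : ‖y - b‖ < r / 4 := by
      rw [show y - b = (y - a) + (a - b) by ring]
      refine (norm_add_le _ _).trans_lt ?_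
      linarith
    rw [hiff y hyb]
    have h3 := (abs_le.1 (E.lip y a (by linarith) (by linarith))).1
    have h2 := (abs_le.1 (abs_ip_le n (y - a))).1
    rw [E.hn] at h2
    linarith
  · intro a ha hab
    have hGa := (hiff a (by linarith)).1 ha
    have hφa := hφ a ha (by linarith)
    have hc : IsPreconnected ((fun t : ℝ => a - (t : ℂ) * n) '' Icc 0 (2 * φ a)) :=
      isPreconnected_Icc.image _ (by fun_prop)
    have hpos : 0 ≤ 2 * φ a := by rw [hφa]; positivity
    obtain ⟨_, ⟨t, ht, rfl⟩, hf⟩ := inter_frontier_ne (t := Ω) hc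
      ⟨a, ⟨0, ⟨le_rfl, hpos⟩, by simp⟩, ha⟩ ⟨_, ⟨2 * φ a, ⟨hpos, le_rfl⟩, rfl⟩, hdn a ha hab⟩
    refine (Metric.infDist_le_dist_of_mem hf).trans ?_
    rw [dist_eq_norm, sub_sub_cancel, norm_mul, E.hn, Complex.norm_real, norm_of_nonneg ht.1, mul_one]
    exact ht.2

/-- A zero of order one at `b` gives the local description for a nonzero, possibly negative,
multiple of `φ`. -/
theorem exists_loc (hΩ : IsOpen Ω) (hb : b ∈ frontier Ω) (hsm : HasSmoothBoundary Ω)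
    (hφ0 : ∀ x ∈ frontier Ω, φ x = 0) (hz : HasBoundaryZero Ω φ b 1) :
    ∃ c : ℝ, c ≠ 0 ∧ ∃ n r, Loc Ω (fun x => c * φ x) b n r := by
  obtain ⟨U, g, hU, hg, heq, hzero, hnz⟩ := hz
  have hg1 : ContDiff ℝ 1 g := by exact_mod_cast hg
  have hgb : g b = 0 := by
    have := hzero 0 one_pos
    have h2 := congrArg (fun L => L (fun _ => 0)) this
    simpa using h2
  have hdg : fderiv ℝ g b ≠ 0 := by
    intro h
    apply hnz
    ext m
    rw [iteratedFDeriv_one_apply, h]; simp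
  let n0 : ℂ := ⟨d1 g b, d2 g b⟩
  have hn0 : n0 ≠ 0 := by
    intro h
    apply hdg
    ext v
    have h1 : d1 g b = 0 := congrArg Complex.re h
    have h2 : d2 g b = 0 := congrArg Complex.im h
    rw [fderiv_eq_d, h1, h2]; simp
  have hnn : 0 < ‖n0‖ := norm_pos_iff.2 hn0
  let c : ℝ := ‖n0‖⁻¹
  have hc : 0 < c := inv_pos.2 hnn
  let n : ℂ := (c : ℂ) * n0
  let G : ℂ → ℝ := fun x => c * g x
  have hG : ContDiff ℝ 1 G := contDiff_const.mul hg1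
  have hGb : ∀ v, fderiv ℝ G b v = ip n v := by
    intro v
    have : fderiv ℝ G b = c • fderiv ℝ g b :=
      fderiv_const_mul (hg1.differentiable one_ne_zero b) c
    rw [this, smul_apply, fderiv_eq_d]
    simp [ip, n, n0]; ring
  have hn : ‖n‖ = 1 := by
    simp only [n, norm_mul, Complex.norm_real, c, norm_inv, norm_norm]
    exact inv_mul_cancel₀ hnn.ne'
  have hcont : Continuous (fderiv ℝ G) := hG.continuous_fderiv one_ne_zero
  have hev : ∀ᶠ x in nhds b, ‖fderiv ℝ G x - fderiv ℝ G b‖ < 1 / 100 := by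
    have : Tendsto (fun x => ‖fderiv ℝ G x - fderiv ℝ G b‖) (nhds b) (nhds 0) := by
      have h := ((hcont.sub (continuous_const (y := fderiv ℝ G b))).norm).tendsto b
      simpa using h
    exact this.eventually_lt_const (by norm_num)
  obtain ⟨r, hr, hball⟩ := Metric.mem_nhds_iff.1 (hev.and hU)
  have hB : ∀ x, ‖x - b‖ < r → ‖fderiv ℝ G x - fderiv ℝ G b‖ < 1 / 100 ∧ x ∈ U := fun x hx =>
    hball (mem_ball_iff_norm.2 hx)
  have hd : ∀ x, ‖x - b‖ < r → ∀ v, |fderiv ℝ G x v - ip n v| ≤ ‖v‖ / 100 := by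
    intro x hx v
    rw [← hGb]
    have := (fderiv ℝ G x - fderiv ℝ G b).le_of_opNorm_le (hB x hx).1.le v
    rw [Real.norm_eq_abs, sub_apply] at this
    linarith
  have E : CExt Ω G b n r := by
    refine ⟨hn, hr, by simp [G, hgb], ?_, ?_⟩
    · intro x hx hxb
      have := heq ⟨frontier_subset_closure hx, (hB x hxb).2⟩
      simp [G, this, hφ0 x hx]
    · intro x y hx hy
      have := (convex_ball b r).norm_image_sub_le_of_norm_hasFDerivWithin_le'
        (f := G) (f' := fderiv ℝ G) (φ := fderiv ℝ G b) (C := 1 / 100)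
        (fun z _ => ((hG.differentiable one_ne_zero) z).hasFDerivAt.hasFDerivWithinAt)
        (fun z hz => (hB z (mem_ball_iff_norm.1 hz)).1.le) (mem_ball_iff_norm.2 hy)
        (mem_ball_iff_norm.2 hx)
      rw [hGb, Real.norm_eq_abs] at this
      linarith
  have hφG : ∀ x ∈ Ω, ‖x - b‖ < r → c * φ x = G x := by
    intro x hx hxb
    have := heq ⟨subset_closure hx, (hB x hxb).2⟩
    simp [G, this]
  rcases E.dichotomy hΩ hb hsm with h | h
  · exact ⟨c, hc.ne', n, r / 4, E.loc hΩ h hφG hd⟩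
  · refine ⟨-c, by simpa using hc.ne', -n, r / 4, E.neg.loc hΩ h ?_ ?_⟩
    · intro x hx hxb
      have := hφG x hx hxb
      show -c * φ x = - G x
      linarith
    · intro x hx v
      have h1 : fderiv ℝ (fun x => - G x) x v = - fderiv ℝ G x v := by
        rw [fderiv_fun_neg]; rfl
      rw [h1, ip_neg, ← neg_sub', abs_neg]
      exact hd x hx v

theorem Eig.scale (H : Eig Ω p lam φ) (c : ℝ) : Eig Ω p lam (fun x => c * φ x) := by
  refine ⟨H.isOpen, H.bdd, H.pC, H.ppos, H.lam_nonneg, contDiffOn_const.mul H.smooth,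
    continuousOn_const.mul H.cont, fun x hx => by rw [H.zero x hx, mul_zero], ?_⟩
  intro x hx
  have h := H.eqn x hx
  have key : ∀ v, fderiv ℝ (fun y => fderiv ℝ (fun z => c * φ z) y v) x v
      = c * fderiv ℝ (fun y => fderiv ℝ φ y v) x v := by
    intro v
    have : (fun y => fderiv ℝ (fun z => c * φ z) y v) =ᶠ[nhds x] fun y => c * fderiv ℝ φ y v := by
      filter_upwards [H.isOpen.mem_nhds hx] with y hy
      rw [fderiv_const_mul (H.diffAt hy)]; rfl
    rw [this.fderiv_eq]
    have hdd : DifferentiableAt ℝ (fun y => fderiv ℝ φ y v) x :=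
      ((contDiffOn_dv H.isOpen H.smooth v).contDiffAt (H.isOpen.mem_nhds hx)).differentiableAt (by simp)
    rw [fderiv_const_mul hdd]; rfl
  unfold lapR at h ⊢
  rw [key, key]
  linear_combination c * h
end

/-! ### Fixed cutoffs near the boundary point -/

theorem deriv_st_eq_zero {t : ℝ} (h : t ≤ 0 ∨ 1 ≤ t) : deriv Real.smoothTransition t = 0 := by
  rcases h with h | h
  · refine IsLocalMin.deriv_eq_zero (Eventually.of_forall (fun s => ?_))
    rw [Real.smoothTransition.zero_of_nonpos h]
    exact Real.smoothTransition.nonneg s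
  · refine IsLocalMax.deriv_eq_zero (Eventually.of_forall (fun s => ?_))
    rw [Real.smoothTransition.one_of_one_le h]
    exact Real.smoothTransition.le_one s

theorem st_range (t : ℝ) : 0 ≤ Real.smoothTransition t ∧ Real.smoothTransition t ≤ 1 :=
  ⟨Real.smoothTransition.nonneg t, Real.smoothTransition.le_one t⟩

theorem st_smooth : ContDiff ℝ (⊤ : ℕ∞) Real.smoothTransition := Real.smoothTransition.contDiff

theorem hasFDerivAt_normsq (o x : ℂ) : HasFDerivAt (fun y : ℂ => ‖y - o‖ ^ 2)
    (fderiv ℝ (fun y : ℂ => ‖y - o‖ ^ 2) x) x :=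
  (DifferentiableAt.norm_sq ℝ (by fun_prop)).hasFDerivAt

theorem fderiv_normsq_sub (o x v : ℂ) : fderiv ℝ (fun y : ℂ => ‖y - o‖ ^ 2) x v = 2 * ip (x - o) v := by
  rw [fderiv_normsq (u := fun y => y - o) (by fun_prop)]
  have : fderiv ℝ (fun y : ℂ => y - o) x v = v := by
    rw [fderiv_sub_const]; simp
  rw [this]; rfl

/-- A smooth radial transition about `o`: it is `0` where `|x - o|² = α` and `1` where
`|x - o|² = α + c`; a negative `c` gives a cutoff that decreases with the distance. -/
def rad (o : ℂ) (α c : ℝ) (x : ℂ) : ℝ := Real.smoothTransition ((‖x - o‖ ^ 2 - α) / c)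

theorem rad_smooth (o : ℂ) (α c : ℝ) : ContDiff ℝ (⊤ : ℕ∞) (rad o α c) := by
  refine st_smooth.comp (ContDiff.div_const (ContDiff.sub ?_ contDiff_const) c)
  exact ContDiff.norm_sq ℝ (contDiff_id.sub contDiff_const)

theorem rad_fderiv (o : ℂ) (α c : ℝ) (x v : ℂ) : fderiv ℝ (rad o α c) x v
    = deriv Real.smoothTransition ((‖x - o‖ ^ 2 - α) / c) * (2 * ip (x - o) v / c) := by
  have h1 : HasFDerivAt (fun y : ℂ => (‖y - o‖ ^ 2 - α) / c)
      (c⁻¹ • fderiv ℝ (fun y : ℂ => ‖y - o‖ ^ 2) x) x := by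
    have := ((hasFDerivAt_normsq o x).sub_const α).const_smul c⁻¹
    refine this.congr_of_eventuallyEq (Eventually.of_forall (fun y => ?_))
    simp [div_eq_inv_mul]
  have h2 := (hasDerivAt_smoothTransition ((‖x - o‖ ^ 2 - α) / c)).comp_hasFDerivAt x h1
  rw [show rad o α c = Real.smoothTransition ∘ fun y : ℂ => (‖y - o‖ ^ 2 - α) / c from rfl, h2.fderiv]
  rw [smul_apply, smul_apply, fderiv_normsq_sub]
  simp only [smul_eq_mul]
  ring

theorem norm_real_mul {n : ℂ} (hn : ‖n‖ = 1) {s : ℝ} (hs : 0 ≤ s) : ‖(s : ℂ) * n‖ = s := by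
  rw [norm_mul, hn, Complex.norm_real, mul_one, norm_of_nonneg hs]

section
variable {Ω : Set ℂ} {p : ℂ → ℝ} {lam : ℝ} {φ : ℂ → ℝ} {b n : ℂ} {r0 : ℝ}

/-- A cutoff `η` with `∇η·∇φ ≤ 0`, so that the commutator term in `Fdens` is nonnegative. It is radial
about the point `b - (r0/10)n` below the boundary; the part of `Ω` where `∇η ≠ 0` is seen from that
point in directions along which `φ` increases. -/
theorem exists_eta (L : Loc Ω φ b n r0) : ∃ η : ℂ → ℝ, ContDiff ℝ (⊤ : ℕ∞) η ∧
    (∀ x, 0 ≤ η x ∧ η x ≤ 1) ∧ (∀ x, ‖x - b‖ ≤ r0 / 10 → η x = 1) ∧ tsupport η ⊆ Metric.ball b r0 ∧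
    ∀ x ∈ Ω, d1 η x * d1 φ x + d2 η x * d2 φ x ≤ 0 := by
  have hr := L.r0_pos
  set o : ℂ := b - ((r0 / 10 : ℝ) : ℂ) * n with ho
  have hxo : ∀ x, x - o = (x - b) + ((r0 / 10 : ℝ) : ℂ) * n := fun x => by rw [ho]; ring
  have hnn := norm_real_mul L.norm_n (s := r0 / 10) (by positivity)
  have hsup : tsupport (rad o (r0 ^ 2 / 4) (-(3 * r0 ^ 2 / 16))) ⊆ {x | ‖x - o‖ ≤ r0 / 2} := by
    refine closure_minimal (fun x hx => ?_) (isClosed_le (by fun_prop) (by fun_prop))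
    by_contra h
    simp only [mem_ofPred_eq, not_le] at h
    refine hx (Real.smoothTransition.zero_of_nonpos ?_)
    refine div_nonpos_of_nonneg_of_nonpos ?_ (by nlinarith)
    nlinarith
  have hsub : ∀ x, ‖x - o‖ ≤ r0 / 2 → ‖x - b‖ < r0 := by
    intro x hx
    rw [show x - b = (x - o) - ((r0 / 10 : ℝ) : ℂ) * n by rw [hxo]; ring]
    refine (norm_sub_le _ _).trans_lt ?_
    rw [hnn]; linarith
  refine ⟨rad o (r0 ^ 2 / 4) (-(3 * r0 ^ 2 / 16)), rad_smooth _ _ _, fun x => st_range _, ?_, ?_, ?_⟩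
  · intro x hx
    refine Real.smoothTransition.one_of_one_le ?_
    rw [div_neg, le_neg, div_le_iff₀ (by positivity)]
    have : ‖x - o‖ ≤ r0 / 4 := by
      rw [hxo]; refine (norm_add_le _ _).trans ?_; rw [hnn]; linarith
    nlinarith [norm_nonneg (x - o)]
  · intro x hx
    rw [mem_ball_iff_norm]; exact hsub x (hsup hx)
  · intro x hx
    by_cases hs : x ∈ tsupport (rad o (r0 ^ 2 / 4) (-(3 * r0 ^ 2 / 16)))
    swap
    · obtain ⟨-, h1, h2⟩ := d_off hs
      rw [h1, h2]; simp
    have hxb := hsub x (hsup hs)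
    have e : d1 (rad o (r0 ^ 2 / 4) (-(3 * r0 ^ 2 / 16))) x * d1 φ x
        + d2 (rad o (r0 ^ 2 / 4) (-(3 * r0 ^ 2 / 16))) x * d2 φ x
        = deriv Real.smoothTransition ((‖x - o‖ ^ 2 - r0 ^ 2 / 4) / (-(3 * r0 ^ 2 / 16)))
          * (2 / (-(3 * r0 ^ 2 / 16))) * fderiv ℝ φ x (x - o) := by
      rw [fderiv_eq_d φ x (x - o)]
      rw [d1, d2, rad_fderiv, rad_fderiv]
      simp only [ip, Complex.one_re, Complex.one_im, Complex.I_re, Complex.I_im]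
      ring
    rw [e]
    have hpos : 0 ≤ fderiv ℝ φ x (x - o) := by
      rw [hxo, map_add]
      have h1 := (abs_le.1 (L.grad x hx hxb (x - b))).1
      have h2 := (abs_le.1 (L.lipb x hx hxb)).2
      have h3 := (abs_le.1 (L.grad x hx hxb (((r0 / 10 : ℝ) : ℂ) * n))).1
      have h4 := L.pos x hx hxb
      rw [hnn, ip_smul, ip_self, L.norm_n] at h3
      linarith
    refine mul_nonpos_of_nonpos_of_nonneg ?_ hpos
    refine mul_nonpos_of_nonneg_of_nonpos (deriv_smoothTransition_nonneg _) ?_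
    rw [div_neg]
    have : 0 < 2 / (3 * r0 ^ 2 / 16) := by positivity
    linarith

theorem ip_In (n : ℂ) : ip (Complex.I * n) n = 0 := by simp [ip]; ring
theorem norm_sq_ip {n : ℂ} (hn : ‖n‖ = 1) (v : ℂ) : ‖v‖ ^ 2 = ip n v ^ 2 + ip (Complex.I * n) v ^ 2 := by
  have h : n.re ^ 2 + n.im ^ 2 = 1 := by rw [← normsq, hn]; norm_num
  rw [normsq]
  simp [ip]
  linear_combination (-(v.re ^ 2 + v.im ^ 2)) * h

theorem ip_contDiff (n b : ℂ) : ContDiff ℝ (⊤ : ℕ∞) (fun x : ℂ => ip n (x - b)) := by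
  unfold ip
  have h1 : ContDiff ℝ (⊤ : ℕ∞) (fun x : ℂ => (x - b).re) := Complex.reCLM.contDiff.comp (contDiff_id.sub contDiff_const)
  have h2 : ContDiff ℝ (⊤ : ℕ∞) (fun x : ℂ => (x - b).im) := Complex.imCLM.contDiff.comp (contDiff_id.sub contDiff_const)
  exact (contDiff_const.mul h1).add (contDiff_const.mul h2)

/-- Derivative in the direction `n` of a product of a function of the normal coordinate and a function
of the tangential coordinate. -/
theorem fderiv_normal {n b : ℂ} (hn : ‖n‖ = 1) {f : ℝ → ℝ} {B : ℝ → ℝ} {f' : ℝ} (x : ℂ)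
    (hd : DifferentiableAt ℝ (fun y : ℂ => f (ip n (y - b)) * B (ip (Complex.I * n) (y - b))) x)
    (hf : HasDerivAt f f' (ip n (x - b))) :
    fderiv ℝ (fun y : ℂ => f (ip n (y - b)) * B (ip (Complex.I * n) (y - b))) x n
      = f' * B (ip (Complex.I * n) (x - b)) := by
  rw [← hd.lineDeriv_eq_fderiv]
  have e : ∀ s : ℝ, x + s • n - b = (x - b) + (s : ℂ) * n := fun s => by
    simp; ring
  unfold lineDeriv
  simp only [e, ip_add, ip_smul, ip_self, ip_In, hn]
  have h1 : HasDerivAt (fun s : ℝ => ip n (x - b) + s * 1 ^ 2) 1 0 := by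
    simpa using (hasDerivAt_id (0:ℝ)).const_add (ip n (x - b))
  have h2 : HasDerivAt (fun s : ℝ => f (ip n (x - b) + s * 1 ^ 2)) f' 0 := by
    have hf0 : HasDerivAt f f' (ip n (x - b) + 0 * 1 ^ 2) := by simpa using hf
    have := hf0.comp 0 h1
    rw [mul_one] at this; exact this
  have h3 := h2.mul_const (B (ip (Complex.I * n) (x - b)))
  simpa using h3.deriv

/-- A cutoff `ζ` equal to `1` near `b` which increases in the direction `n`, except on a compact subset
`K0` of `Ω`. The set `K0` contains a ball around `b + s0 n`. -/
theorem exists_zeta (L : Loc Ω φ b n r0) : ∃ (ζ : ℂ → ℝ) (K0 : Set ℂ) (r2 M s0 : ℝ),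
    ContDiff ℝ (⊤ : ℕ∞) ζ ∧ (∀ x, 0 ≤ ζ x ∧ ζ x ≤ 1) ∧ tsupport ζ ⊆ Metric.ball b (r0 / 10) ∧
    IsCompact K0 ∧ K0 ⊆ Ω ∧ K0 ⊆ Metric.ball b (r0 / 10) ∧ 0 < r2 ∧ r2 ≤ r0 / 10 ∧ 0 ≤ M ∧
    (∀ x ∈ K0, r2 ≤ ‖x - b‖) ∧ (∀ x, ‖x - b‖ < r2 → ζ x = 1) ∧
    (∀ x, x ∉ K0 → 0 ≤ fderiv ℝ ζ x n) ∧ (∀ x, |fderiv ℝ ζ x n| ≤ M) ∧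
    0 < s0 ∧ s0 ≤ r0 / 40 ∧ Metric.closedBall (b + (s0 : ℂ) * n) (s0 / 2) ⊆ K0 := by
  have hr := L.r0_pos
  have hn := L.norm_n
  obtain ⟨M, hM1, hM⟩ := exists_smoothTransition_bound
  set t1 : ℝ := r0 / 40 with ht1
  have ht : 0 < t1 := by positivity
  let f : ℝ → ℝ := fun t => Real.smoothTransition (2 - t / t1) * Real.smoothTransition (2 + t / t1)
  let B : ℝ → ℝ := fun τ => Real.smoothTransition ((t1 ^ 2 - τ ^ 2) / (3 * t1 ^ 2 / 4))
  let ζ : ℂ → ℝ := fun y => f (ip n (y - b)) * B (ip (Complex.I * n) (y - b))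
  have hfs : ContDiff ℝ (⊤ : ℕ∞) f := by
    refine (st_smooth.comp ?_).mul (st_smooth.comp ?_)
    · exact contDiff_const.sub (contDiff_id.div_const _)
    · exact contDiff_const.add (contDiff_id.div_const _)
  have hBs : ContDiff ℝ (⊤ : ℕ∞) B :=
    st_smooth.comp ((contDiff_const.sub (contDiff_id.pow 2)).div_const _)
  have hζ : ContDiff ℝ (⊤ : ℕ∞) ζ :=
    (hfs.comp (ip_contDiff n b)).mul (hBs.comp (ip_contDiff (Complex.I * n) b))
  have hBr : ∀ τ, 0 ≤ B τ ∧ B τ ≤ 1 := fun τ => st_range _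
  have hB0 : ∀ τ, B τ ≠ 0 → |τ| ≤ t1 := by
    intro τ hτ
    by_contra h
    push Not at h
    refine hτ (Real.smoothTransition.zero_of_nonpos (div_nonpos_of_nonpos_of_nonneg ?_ (by positivity)))
    have := sq_abs τ
    nlinarith
  have hf0 : ∀ t, f t ≠ 0 → |t| ≤ 2 * t1 := by
    intro t h
    have h1 : 0 < 2 - t / t1 := by
      by_contra h'
      exact h (by simp [f, Real.smoothTransition.zero_of_nonpos (not_lt.1 h')])
    have h2 : 0 < 2 + t / t1 := by
      by_contra h'
      exact h (by simp [f, Real.smoothTransition.zero_of_nonpos (not_lt.1 h')])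
    have e : t = (t / t1) * t1 := by field_simp
    rw [abs_le]; constructor <;> nlinarith
  let f' : ℝ → ℝ := fun t => deriv Real.smoothTransition (2 - t / t1) * (-(1 / t1)) * Real.smoothTransition (2 + t / t1)
    + Real.smoothTransition (2 - t / t1) * (deriv Real.smoothTransition (2 + t / t1) * (1 / t1))
  have hfd : ∀ t, HasDerivAt f (f' t) t := by
    intro t
    have a1 : HasDerivAt (fun t : ℝ => 2 - t / t1) (-(1 / t1)) t :=
      ((hasDerivAt_id t).div_const t1).const_sub 2
    have a2 : HasDerivAt (fun t : ℝ => 2 + t / t1) (1 / t1) t :=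
      ((hasDerivAt_id t).div_const t1).const_add 2
    exact ((hasDerivAt_smoothTransition _).comp t a1).mul ((hasDerivAt_smoothTransition _).comp t a2)
  have hζn : ∀ x, fderiv ℝ ζ x n = f' (ip n (x - b)) * B (ip (Complex.I * n) (x - b)) := fun x =>
    fderiv_normal hn x (hζ.differentiable (by simp) x) (hfd _)
  let K0 : Set ℂ := {x | t1 / 2 ≤ ip n (x - b) ∧ ip n (x - b) ≤ 3 * t1 ∧ |ip (Complex.I * n) (x - b)| ≤ t1}
  have hc1 := (ip_contDiff n b).continuous
  have hc2 := (ip_contDiff (Complex.I * n) b).continuous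
  have hK0n : ∀ x ∈ K0, ‖x - b‖ < 39 / 10 * t1 := by
    rintro x ⟨h1, h2, h3⟩
    have := norm_sq_ip hn (x - b)
    have h4 := sq_abs (ip (Complex.I * n) (x - b))
    have h5 := abs_nonneg (ip (Complex.I * n) (x - b))
    refine lt_of_pow_lt_pow_left₀ 2 (by positivity) ?_
    nlinarith
  have hK0c : IsCompact K0 := by
    refine Metric.isCompact_of_isClosed_isBounded ?_ ?_
    · exact (isClosed_le continuous_const hc1).inter
        ((isClosed_le hc1 continuous_const).inter (isClosed_le hc2.abs continuous_const))
    · exact Metric.isBounded_ball.subset (fun x hx => mem_ball_iff_norm.2 (hK0n x hx))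
  refine ⟨ζ, K0, t1 / 2, 2 * M / t1, t1, hζ, ?_, ?_, hK0c, ?_, ?_, by positivity, by rw [ht1]; linarith,
    by positivity, ?_, ?_, ?_, ?_, ht, le_rfl, ?_⟩
  · intro x
    have := st_range (2 - ip n (x - b) / t1)
    have h2 := st_range (2 + ip n (x - b) / t1)
    have h3 := hBr (ip (Complex.I * n) (x - b))
    exact ⟨mul_nonneg (mul_nonneg this.1 h2.1) h3.1,
      mul_le_one₀ (mul_le_one₀ this.2 h2.1 h2.2) h3.1 h3.2⟩
  · have : tsupport ζ ⊆ {x | |ip n (x - b)| ≤ 2 * t1 ∧ |ip (Complex.I * n) (x - b)| ≤ t1} := by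
      refine closure_minimal (fun x hx => ?_)
        ((isClosed_le hc1.abs continuous_const).inter (isClosed_le hc2.abs continuous_const))
      exact ⟨hf0 _ (left_ne_zero_of_mul hx), hB0 _ (right_ne_zero_of_mul hx)⟩
    intro x hx
    obtain ⟨h1, h2⟩ := this hx
    rw [mem_ball_iff_norm]
    have h0 := norm_sq_ip hn (x - b)
    have h4 := sq_abs (ip (Complex.I * n) (x - b))
    have h5 := abs_nonneg (ip (Complex.I * n) (x - b))
    have h6 := sq_abs (ip n (x - b))
    have h7 := abs_nonneg (ip n (x - b))
    refine lt_of_pow_lt_pow_left₀ 2 (by positivity) ?_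
    rw [show r0 / 10 = 4 * t1 by rw [ht1]; ring]
    nlinarith
  · intro x hx
    have := hK0n x hx
    refine L.cone x (by rw [ht1] at this; linarith) ?_
    linarith [hx.1]
  · intro x hx
    have := hK0n x hx
    rw [mem_ball_iff_norm]; rw [ht1] at this; linarith
  · intro x hx
    have := (abs_le.1 (abs_ip_le n (x - b))).2
    rw [hn, one_mul] at this
    linarith [hx.1]
  · intro x hx
    have h1 := abs_le.1 (abs_ip_le n (x - b))
    have h2 := abs_ip_le (Complex.I * n) (x - b)
    rw [hn, one_mul] at h1
    rw [norm_mul, hn, Complex.norm_I, one_mul, one_mul] at h2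
    have e1 : |ip n (x - b) / t1| ≤ 1 := by
      rw [abs_div, abs_of_pos ht, div_le_one ht, abs_le]; constructor <;> linarith
    rw [abs_le] at e1
    have e2 : 1 ≤ (t1 ^ 2 - ip (Complex.I * n) (x - b) ^ 2) / (3 * t1 ^ 2 / 4) := by
      rw [le_div_iff₀ (by positivity), ← sq_abs (ip (Complex.I * n) (x - b))]
      nlinarith [abs_nonneg (ip (Complex.I * n) (x - b))]
    simp only [ζ, f, B]
    rw [Real.smoothTransition.one_of_one_le (by linarith), Real.smoothTransition.one_of_one_le (by linarith),
      Real.smoothTransition.one_of_one_le e2]; norm_num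
  · intro x hx
    rw [hζn]
    by_cases h0 : deriv Real.smoothTransition (2 - ip n (x - b) / t1) * B (ip (Complex.I * n) (x - b)) = 0
    · have hB := (hBr (ip (Complex.I * n) (x - b))).1
      have e : f' (ip n (x - b)) * B (ip (Complex.I * n) (x - b)) =
        (deriv Real.smoothTransition (2 - ip n (x - b) / t1) * B (ip (Complex.I * n) (x - b))) *
          ((-(1 / t1)) * Real.smoothTransition (2 + ip n (x - b) / t1)) + 
        Real.smoothTransition (2 - ip n (x - b) / t1) *
          (deriv Real.smoothTransition (2 + ip n (x - b) / t1) * (1 / t1)) * B (ip (Complex.I * n) (x - b)) := by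
        simp only [f']; ring
      rw [e, h0, zero_mul, zero_add]
      have := (st_range (2 - ip n (x - b) / t1)).1
      have := deriv_smoothTransition_nonneg (2 + ip n (x - b) / t1)
      positivity
    · exfalso
      apply hx
      have h1 := hB0 _ (right_ne_zero_of_mul h0)
      have h2 : 0 < 2 - ip n (x - b) / t1 ∧ 2 - ip n (x - b) / t1 < 1 := by
        by_contra h
        rw [not_and_or] at h
        refine left_ne_zero_of_mul h0 (deriv_st_eq_zero ?_)
        rcases h with h | h
        · exact Or.inl (not_lt.1 h)
        · exact Or.inr (not_lt.1 h)
      have e : ip n (x - b) = (ip n (x - b) / t1) * t1 := by field_simp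
      refine ⟨?_, ?_, h1⟩ <;> nlinarith
  · intro x
    rw [hζn]
    have a1 := st_range (2 - ip n (x - b) / t1)
    have a2 := st_range (2 + ip n (x - b) / t1)
    have a3 := hBr (ip (Complex.I * n) (x - b))
    have a4 := hM (2 - ip n (x - b) / t1)
    have a5 := hM (2 + ip n (x - b) / t1)
    have hf' : |f' (ip n (x - b))| ≤ 2 * M / t1 := by
      refine (abs_add_le _ _).trans ?_
      rw [abs_mul, abs_mul, abs_mul, abs_mul, abs_neg, abs_of_nonneg a1.1, abs_of_nonneg a2.1,
        abs_of_pos (by positivity : 0 < 1 / t1)]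
      have b1 : |deriv smoothTransition (2 - ip n (x - b) / t1)| * (1 / t1) * smoothTransition (2 + ip n (x - b) / t1)
        ≤ M * (1 / t1) * 1 := by gcongr; exacts [a2.1, a2.2]
      have b2 : smoothTransition (2 - ip n (x - b) / t1) * (|deriv smoothTransition (2 + ip n (x - b) / t1)| * (1 / t1))
        ≤ 1 * (M * (1 / t1)) := by gcongr; exact a1.2
      calc _ ≤ M * (1 / t1) * 1 + 1 * (M * (1 / t1)) := add_le_add b1 b2
        _ = _ := by ring
    rw [abs_mul, abs_of_nonneg a3.1]
    calc _ ≤ (2 * M / t1) * 1 := by gcongr; exacts [a3.1, a3.2]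
      _ = _ := mul_one _
  · intro x hx
    rw [mem_closedBall_iff_norm] at hx
    have e : x - b = (x - (b + (t1 : ℂ) * n)) + (t1 : ℂ) * n := by ring
    have h1 := abs_le.1 (abs_ip_le n (x - (b + (t1 : ℂ) * n)))
    have h2 := abs_ip_le (Complex.I * n) (x - (b + (t1 : ℂ) * n))
    rw [hn, one_mul] at h1
    rw [norm_mul, hn, Complex.norm_I, one_mul, one_mul] at h2
    have e1 : ip n (x - b) = ip n (x - (b + (t1 : ℂ) * n)) + t1 := by
      rw [e, ip_add, ip_smul, ip_self, hn]; simp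
    have e2 : ip (Complex.I * n) (x - b) = ip (Complex.I * n) (x - (b + (t1 : ℂ) * n)) := by
      rw [e, ip_add, ip_smul, ip_In]; simp
    refine ⟨?_, ?_, ?_⟩
    · rw [e1]; linarith
    · rw [e1]; linarith
    · rw [e2]; linarith
end

/-! ### The logarithmic cutoff -/

section
variable {Ω : Set ℂ} {p : ℂ → ℝ} {lam : ℝ} {φ : ℂ → ℝ} {b n : ℂ} {r0 : ℝ}

/-- A smooth transition of `log |x - o|²` between the values `α` and `α + c`. -/
def lrad (o : ℂ) (α c : ℝ) (x : ℂ) : ℝ := Real.smoothTransition ((Real.log (‖x - o‖ ^ 2) - α) / c)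

theorem lrad_smooth {o : ℂ} (ho : o ∉ Ω) (α c : ℝ) : ContDiffOn ℝ (⊤ : ℕ∞) (lrad o α c) Ω := by
  refine st_smooth.comp_contDiffOn (ContDiffOn.div_const (ContDiffOn.sub ?_ contDiffOn_const) c)
  refine ContDiffOn.log (ContDiff.norm_sq ℝ (contDiff_id.sub contDiff_const)).contDiffOn ?_
  intro x hx
  have : x - o ≠ 0 := sub_ne_zero.2 (fun h => ho (h ▸ hx))
  simp [this]

theorem lrad_fderiv {o : ℂ} (α c : ℝ) {x : ℂ} (hx : x - o ≠ 0) (v : ℂ) :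
    fderiv ℝ (lrad o α c) x v
    = deriv Real.smoothTransition ((Real.log (‖x - o‖ ^ 2) - α) / c) * (2 * ip (x - o) v / ‖x - o‖ ^ 2 / c) := by
  have h0 := (hasFDerivAt_normsq o x).log (by simpa using hx)
  have h1 : HasFDerivAt (fun y : ℂ => (Real.log (‖y - o‖ ^ 2) - α) / c)
      (c⁻¹ • (‖x - o‖ ^ 2)⁻¹ • fderiv ℝ (fun y : ℂ => ‖y - o‖ ^ 2) x) x := by
    have := (h0.sub_const α).const_smul c⁻¹
    refine this.congr_of_eventuallyEq (Eventually.of_forall (fun y => ?_))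
    simp [div_eq_inv_mul]
  have h2 := (hasDerivAt_smoothTransition ((Real.log (‖x - o‖ ^ 2) - α) / c)).comp_hasFDerivAt x h1
  rw [show lrad o α c = Real.smoothTransition ∘ fun y : ℂ => (Real.log (‖y - o‖ ^ 2) - α) / c from rfl, h2.fderiv]
  rw [smul_apply, smul_apply, smul_apply, fderiv_normsq_sub]
  simp only [smul_eq_mul]
  ring

/-- Cutoffs around the point `o ∉ Ω` just below `b`, at a scale `ρ` which is small compared with `r2`.
The logarithmic cutoff `χ` satisfies `|∇χ|² φ² ≤ ε1 σ`; the cutoff `σ ≥ χ` increases in the normal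
direction and vanishes for `|x - o| ≤ ρ/2`; the cutoff `χ2` vanishes for `|x - o| ≤ ρ/6` and is `1`
for `|x - o| ≥ ρ/4`. -/
structure Cut (Ω : Set ℂ) (φ : ℂ → ℝ) (b n : ℂ) (r0 r2 ε1 ρ : ℝ) (o : ℂ) (χ σ χ2 : ℂ → ℝ) : Prop where
  ρ_pos : 0 < ρ
  ρ_le : ρ ≤ r2 / 2
  o_nmem : o ∉ Ω
  o_dist : ‖o - b‖ = ρ / 16
  o_eq : o = b - ((ρ / 16 : ℝ) : ℂ) * n
  χ_smooth : ContDiffOn ℝ (⊤ : ℕ∞) χ Ω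
  χ_range : ∀ x, 0 ≤ χ x ∧ χ x ≤ 1
  χ_far : ∀ x ∈ Ω, r2 ≤ ‖x - b‖ → χ x = 1 ∧ fderiv ℝ χ x = 0
  χ_grad : ∀ x ∈ Ω, ‖x - b‖ < r2 → gsq χ x * φ x ^ 2 ≤ ε1 * σ x
  χ_le : ∀ x ∈ Ω, χ x ≤ σ x
  σ_smooth : ContDiff ℝ (⊤ : ℕ∞) σ
  σ_range : ∀ x, 0 ≤ σ x ∧ σ x ≤ 1
  σ_n : ∀ x ∈ Ω, ‖x - b‖ < r0 → 0 ≤ fderiv ℝ σ x n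
  σ_far : ∀ x, r2 ≤ ‖x - b‖ → σ x = 1
  σ_near : ∀ x, ‖x - o‖ ≤ ρ / 2 → σ x = 0
  χ2_smooth : ContDiff ℝ (⊤ : ℕ∞) χ2
  χ2_range : ∀ x, 0 ≤ χ2 x ∧ χ2 x ≤ 1
  χ2_far : ∀ x, ρ / 4 ≤ ‖x - o‖ → χ2 x = 1
  χ2_near : ∀ x, ‖x - o‖ ≤ ρ / 6 → χ2 x = 0

/-- Cutoffs with arbitrarily small `ε1` exist. If the transition of `χ` runs over radii with ratio
`exp l`, then `|∇χ|` is of order `1/(l |x - o|)`, while `φ` is at most of order `|x - o|`; so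
`l` of order `ε1^{-1/2}` suffices. -/
theorem exists_cut (L : Loc Ω φ b n r0) {r2 ε1 : ℝ} (hr2 : 0 < r2) (hr20 : r2 ≤ r0 / 10)
    (hε : 0 < ε1) : ∃ ρ o χ σ χ2, Cut Ω φ b n r0 r2 ε1 ρ o χ σ χ2 := by
  obtain ⟨M, hM1, hM⟩ := exists_smoothTransition_bound
  have hr0 := L.r0_pos
  set l : ℝ := 2 * M / √ε1 + 1 with hl
  have hsε : 0 < √ε1 := Real.sqrt_pos.2 hε
  have hlpos : 0 < l := by positivity
  have hl2 : 4 * M ^ 2 ≤ ε1 * l ^ 2 := by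
    have h1 : 2 * M ≤ √ε1 * l := by
      rw [hl, mul_add, mul_div_cancel₀ _ hsε.ne']; linarith
    have := pow_le_pow_left₀ (by positivity) h1 2
    rw [mul_pow, mul_pow, Real.sq_sqrt hε.le] at this
    linarith
  set ρ : ℝ := r2 / 2 * Real.exp (-l) with hρ
  have hρpos : 0 < ρ := by positivity
  have hρle : ρ ≤ r2 / 2 := by
    have : Real.exp (-l) ≤ 1 := Real.exp_le_one_iff.2 (by linarith)
    rw [hρ]; nlinarith
  set o : ℂ := b - ((ρ / 16 : ℝ) : ℂ) * n with ho
  have hnn := norm_real_mul L.norm_n (s := ρ / 16) (by positivity)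
  have hob : o - b = -(((ρ / 16 : ℝ) : ℂ) * n) := by rw [ho]; ring
  have hobn : ‖o - b‖ = ρ / 16 := by rw [hob, norm_neg, hnn]
  have hoΩ : o ∉ Ω := by
    refine L.below o (by rw [hobn]; linarith) ?_
    rw [hobn, hob]
    have : ip n (-(((ρ / 16 : ℝ) : ℂ) * n)) = -(ρ / 16) := by
      rw [← neg_mul, ← Complex.ofReal_neg, ip_smul, ip_self, L.norm_n]; ring
    rw [this]; linarith
  have hxo1 : ∀ x, ‖x - b‖ ≤ ‖x - o‖ + ρ / 16 := fun x => by
    rw [← hobn, show x - b = (x - o) + (o - b) by ring]; exact norm_add_le _ _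
  have hxo2 : ∀ x, ‖x - o‖ ≤ ‖x - b‖ + ρ / 16 := fun x => by
    rw [← hobn, show x - o = (x - b) - (o - b) by ring]; exact norm_sub_le _ _
  have hlogr : Real.log (ρ ^ 2) = Real.log ((r2 / 2) ^ 2) - 2 * l := by
    rw [hρ, mul_pow, Real.log_mul (by positivity) (by positivity), ← Real.exp_nat_mul, Real.log_exp]
    push_cast; ring
  have hne : ∀ x ∈ Ω, x - o ≠ 0 := fun x hx => sub_ne_zero.2 (fun h => hoΩ (h ▸ hx))
  -- the argument of the logarithmic cutoff is nonpositive inside and at least one outside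
  have harg0 : ∀ x ∈ Ω, ‖x - o‖ ≤ ρ → (Real.log (‖x - o‖ ^ 2) - Real.log (ρ ^ 2)) / (2 * l) ≤ 0 := by
    intro x hx h
    have hp : 0 < ‖x - o‖ := norm_pos_iff.2 (hne x hx)
    refine div_nonpos_of_nonpos_of_nonneg ?_ (by positivity)
    have := Real.log_le_log (by positivity) (pow_le_pow_left₀ hp.le h 2)
    linarith
  have harg1 : ∀ x, r2 ≤ ‖x - b‖ → 1 ≤ (Real.log (‖x - o‖ ^ 2) - Real.log (ρ ^ 2)) / (2 * l) := by
    intro x h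
    rw [le_div_iff₀ (by positivity), hlogr]
    have h1 := hxo1 x
    have h2 : r2 / 2 ≤ ‖x - o‖ := by linarith
    have := Real.log_le_log (by positivity) (pow_le_pow_left₀ (by positivity) h2 2)
    linarith
  have hσ1 : ∀ x, ρ ≤ ‖x - o‖ → rad o (ρ ^ 2 / 4) (3 * ρ ^ 2 / 4) x = 1 := by
    intro x h
    refine Real.smoothTransition.one_of_one_le ?_
    rw [le_div_iff₀ (by positivity)]
    nlinarith
  refine ⟨ρ, o, lrad o (Real.log (ρ ^ 2)) (2 * l), rad o (ρ ^ 2 / 4) (3 * ρ ^ 2 / 4),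
    rad o ((ρ / 6) ^ 2) ((ρ / 4) ^ 2 - (ρ / 6) ^ 2), ?_⟩
  have hc2 : 0 < (ρ / 4) ^ 2 - (ρ / 6) ^ 2 := by nlinarith
  refine ⟨hρpos, hρle, hoΩ, hobn, ho, lrad_smooth hoΩ _ _, fun x => st_range _, ?_, ?_, ?_,
    rad_smooth _ _ _, fun x => st_range _, ?_, ?_, ?_, rad_smooth _ _ _, fun x => st_range _, ?_, ?_⟩
  · intro x hx h
    refine ⟨Real.smoothTransition.one_of_one_le (harg1 x h), ?_⟩
    ext v
    rw [lrad_fderiv _ _ (hne x hx), deriv_st_eq_zero (Or.inr (harg1 x h)), zero_mul]; rfl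
  · intro x hx hxb
    have hp : 0 < ‖x - o‖ := norm_pos_iff.2 (hne x hx)
    have e : gsq (lrad o (Real.log (ρ ^ 2)) (2 * l)) x =
        deriv Real.smoothTransition ((Real.log (‖x - o‖ ^ 2) - Real.log (ρ ^ 2)) / (2 * l)) ^ 2 /
          (l ^ 2 * ‖x - o‖ ^ 2) := by
      rw [gsq, d1, d2, lrad_fderiv _ _ (hne x hx), lrad_fderiv _ _ (hne x hx)]
      have h3 := normsq (x - o)
      simp only [ip, Complex.one_re, Complex.one_im, Complex.I_re, Complex.I_im]
      field_simp
      rw [h3]; ring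
    rw [e]
    rcases le_total ‖x - o‖ ρ with h | h
    · rw [deriv_st_eq_zero (Or.inl (harg0 x hx h))]
      have := (st_range ((‖x - o‖ ^ 2 - ρ ^ 2 / 4) / (3 * ρ ^ 2 / 4))).1
      have : 0 ≤ ε1 * rad o (ρ ^ 2 / 4) (3 * ρ ^ 2 / 4) x := mul_nonneg hε.le this
      simpa using this
    · rw [hσ1 x h, mul_one, div_mul_eq_mul_div, div_le_iff₀ (by positivity)]
      have h1 := (abs_le.1 (L.lipb x hx (by linarith))).2
      have h2 := (abs_le.1 (abs_ip_le n (x - b))).2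
      rw [L.norm_n] at h2
      have h3 := hxo1 x
      have h4 := L.pos x hx (by linarith)
      have h5 : φ x ≤ 2 * ‖x - o‖ := by linarith
      have h6 : φ x ^ 2 ≤ 4 * ‖x - o‖ ^ 2 := by
        have := pow_le_pow_left₀ h4.le h5 2
        linarith
      have h7 := hM ((Real.log (‖x - o‖ ^ 2) - Real.log (ρ ^ 2)) / (2 * l))
      have h8 := pow_le_pow_left₀ (abs_nonneg _) h7 2
      rw [sq_abs] at h8
      calc _ ≤ M ^ 2 * (4 * ‖x - o‖ ^ 2) := by gcongr
        _ = (4 * M ^ 2) * ‖x - o‖ ^ 2 := by ring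
        _ ≤ (ε1 * l ^ 2) * ‖x - o‖ ^ 2 := by gcongr
        _ = _ := by ring
  · intro x hx
    rcases le_total ‖x - o‖ ρ with h | h
    · have : lrad o (Real.log (ρ ^ 2)) (2 * l) x = 0 :=
        Real.smoothTransition.zero_of_nonpos (harg0 x hx h)
      rw [this]; exact (st_range _).1
    · rw [hσ1 x h]; exact (st_range _).2
  · intro x hx hxb
    rw [rad_fderiv]
    rcases le_total ρ ‖x - o‖ with h | h
    · rw [deriv_st_eq_zero (Or.inr ?_), zero_mul]
      rw [le_div_iff₀ (by positivity)]; nlinarith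
    · refine mul_nonneg (deriv_smoothTransition_nonneg _) ?_
      have h1 := hxo1 x
      have h2 : -(‖x - b‖ / 50) ≤ ip n (x - b) := by
        by_contra h'
        exact L.below x hxb (not_le.1 h') hx
      have h3 : ip (x - o) n = ip n (x - b) + ρ / 16 := by
        have : ip (x - o) n = ip n (x - o) := by simp only [ip]; ring
        rw [this, show x - o = (x - b) - (o - b) by ring, hob, sub_neg_eq_add, ip_add, ip_smul, ip_self,
          L.norm_n]; ring
      rw [h3]
      have : 0 ≤ ip n (x - b) + ρ / 16 := by linarith
      positivity
  · intro x h
    have h1 := hxo1 x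
    exact hσ1 x (by linarith)
  · intro x h
    refine Real.smoothTransition.zero_of_nonpos (div_nonpos_of_nonpos_of_nonneg ?_ (by positivity))
    nlinarith [norm_nonneg (x - o)]
  · intro x h
    refine Real.smoothTransition.one_of_one_le ?_
    rw [le_div_iff₀ hc2]
    have := pow_le_pow_left₀ (by positivity) h 2
    linarith
  · intro x h
    refine Real.smoothTransition.zero_of_nonpos (div_nonpos_of_nonpos_of_nonneg ?_ hc2.le)
    have := pow_le_pow_left₀ (norm_nonneg _) h 2
    linarith
end

/-! ### A Hardy inequality at the boundary -/

section
variable {Ω : Set ℂ} {p : ℂ → ℝ} {lam : ℝ} {φ : ℂ → ℝ} {b n : ℂ} {r0 : ℝ}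

/-- An integrated differential inequality: `Φ` is dominated by a lower bound for the derivative of
`s |u|²/φ` in the direction `v`, whose integral is zero. -/
theorem Eig.dir_ineq (H : Eig Ω p lam φ) (L : Loc Ω φ b n r0) {u A : ℂ → ℂ} (hu : Test Ω u)
    {s : ℂ → ℝ} {S : Set ℂ} (hS : IsClosed S) (hSb : S ⊆ Metric.ball b r0)
    (hs : ContDiffOn ℝ 1 s (Ω ∩ Metric.ball b r0)) (h0 : ∀ x, x ∉ S → s x = 0) (hsn : ∀ x ∈ Ω, 0 ≤ s x)
    {v : ℂ} (hv : ‖v‖ = 1) {Φ : ℂ → ℝ} (hΦ : Integrable Φ)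
    (hle : ∀ x ∈ Ω, ‖x - b‖ < r0 → x ∈ S → Φ x ≤ fderiv ℝ s x v * ‖u x‖ ^ 2 / φ x
      + s x * fderiv ℝ φ x v * ‖u x‖ ^ 2 / φ x ^ 2 - 2 * (s x / φ x) * (‖u x‖ * √(egs φ A u x)))
    (hle0 : ∀ x, x ∉ S ∩ tsupport u → Φ x ≤ 0) : ∫ x, Φ x ≤ 0 := by
  have hK : IsCompact (S ∩ tsupport u) := hu.compact.inter_left hS
  have hN : IsOpen (Ω ∩ Metric.ball b r0) := H.isOpen.inter Metric.isOpen_ball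
  have hKN : S ∩ tsupport u ⊆ Ω ∩ Metric.ball b r0 := fun x hx => ⟨hu.2.2 hx.2, hSb hx.1⟩
  have hpos : ∀ x ∈ Ω ∩ Metric.ball b r0, 0 < φ x := fun x hx =>
    L.pos x hx.1 (by simpa [dist_eq_norm] using hx.2)
  have hun : ContDiff ℝ 1 (fun y => ‖u y‖ ^ 2) := (hu.1.norm_sq ℝ).of_le (by simp)
  have hφ1 : ContDiffOn ℝ 1 φ (Ω ∩ Metric.ball b r0) :=
    (H.smooth.mono inter_subset_left).of_le (by simp)
  have hF : ContDiffOn ℝ 1 (fun x => s x / φ x * ‖u x‖ ^ 2) (Ω ∩ Metric.ball b r0) :=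
    (hs.div hφ1 (fun x hx => (hpos x hx).ne')).mul hun.contDiffOn
  have hF0 : ∀ x, x ∉ S ∩ tsupport u → s x / φ x * ‖u x‖ ^ 2 = 0 := by
    intro x hx
    by_cases h : x ∈ S
    · have : x ∉ tsupport u := fun h' => hx ⟨h, h'⟩
      simp [(off_supp this).1]
    · simp [h0 x h]
  have hz := integral_fderiv_zero hK hN hKN hF hF0 v
  have hC := contDiff_of_compact hK hN hKN hF hF0
  have hint : Integrable (fun x => fderiv ℝ (fun x => s x / φ x * ‖u x‖ ^ 2) x v) := by
    refine integrable_of_compact hK ?_ ?_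
    · exact ((hC.continuous_fderiv (by simp)).clm_apply continuous_const).continuousOn
    · intro x hx
      rw [fderiv_zero_of_compact hK.isClosed hF0 hx]; simp
  rw [← hz]
  refine integral_mono hΦ hint fun x => ?_
  by_cases hx : x ∈ S ∩ tsupport u
  · have hxN := hKN hx
    have hxb : ‖x - b‖ < r0 := by simpa [dist_eq_norm] using hxN.2
    refine (hle x hxN.1 hxb hx.1).trans ?_
    have hφx := hpos x hxN
    have hsd : DifferentiableAt ℝ s x := (hs.contDiffAt (hN.mem_nhds hxN)).differentiableAt (by simp)
    have hφd := H.diffAt hxN.1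
    have hud : DifferentiableAt ℝ (fun y => ‖u y‖ ^ 2) x := hun.differentiable (by simp) x
    have e1 : HasFDerivAt (fun x => s x * (φ x)⁻¹ * ‖u x‖ ^ 2) _ x :=
      (hsd.hasFDerivAt.mul ((hasDerivAt_inv hφx.ne').comp_hasFDerivAt x hφd.hasFDerivAt)).mul
        hud.hasFDerivAt
    have e2 : fderiv ℝ (fun x => s x / φ x * ‖u x‖ ^ 2) x v =
        (fderiv ℝ s x v / φ x - s x * fderiv ℝ φ x v / φ x ^ 2) * ‖u x‖ ^ 2 +
          s x / φ x * fderiv ℝ (fun y => ‖u y‖ ^ 2) x v := by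
      simp only [div_eq_mul_inv]
      rw [e1.fderiv]
      simp
      ring
    simp only [e2]
    have hb := dir_bound (φ := φ) (A := A) (hu.diff x) hv
    have hb' := (abs_le.1 hb).1
    have hsp : 0 ≤ s x / φ x := div_nonneg (hsn x hxN.1) hφx.le
    have := mul_le_mul_of_nonneg_left hb' hsp
    have e3 : s x * fderiv ℝ φ x v / φ x ^ 2 * ‖u x‖ ^ 2 = s x / φ x * (‖u x‖^2 * (fderiv ℝ φ x v / φ x)) := by
      field_simp
    have e4 : s x * fderiv ℝ φ x v * ‖u x‖ ^ 2 / φ x ^ 2 = s x / φ x * (‖u x‖^2 * (fderiv ℝ φ x v / φ x)) := by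
      field_simp
    have e5 : fderiv ℝ s x v * ‖u x‖ ^ 2 / φ x = fderiv ℝ s x v / φ x * ‖u x‖ ^ 2 := by ring
    rw [sub_mul, e3, e4, e5]
    nlinarith
  · simp only [fderiv_zero_of_compact hK.isClosed hF0 hx]
    simpa using hle0 x hx

/-- Weighted Hardy inequality near `b`, up to mass on `K0`. It is obtained by differentiating
`s |u|²/φ` in the normal direction, where `∂_n φ` is close to `1`; the weight `s` may decrease in that
direction only on `K0`. -/
theorem Eig.hardy (H : Eig Ω p lam φ) (L : Loc Ω φ b n r0) {K0 : Set ℂ} (hK0 : IsCompact K0)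
    (hK0Ω : K0 ⊆ Ω) (hK0b : K0 ⊆ Metric.ball b r0) {M : ℝ} (hM : 0 ≤ M) :
    ∃ C, 0 ≤ C ∧ ∀ (u A : ℂ → ℂ) (s : ℂ → ℝ), Test Ω u → ContinuousOn A (tsupport u) →
      tsupport s ⊆ Metric.ball b r0 → ContDiffOn ℝ 1 s Ω → (∀ x ∈ Ω, 0 ≤ s x) →
      (∀ x ∈ Ω, ‖x - b‖ < r0 → x ∉ K0 → 0 ≤ fderiv ℝ s x n) → (∀ x ∈ K0, -M ≤ fderiv ℝ s x n) →
      Integrable (fun x => s x / φ x ^ 2 * ‖u x‖ ^ 2) ∧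
      ∫ x, s x / φ x ^ 2 * ‖u x‖ ^ 2 ≤ C * (∫ x in K0, p x * ‖u x‖ ^ 2)
        + 16 * ∫ x, s x * egs φ A u x := by
  have hposK : ∀ x ∈ K0, 0 < φ x * p x := fun x hx =>
    mul_pos (L.pos x (hK0Ω hx) (by simpa [dist_eq_norm] using hK0b hx)) (H.ppos x (hK0Ω hx))
  obtain ⟨q, hq, hqK⟩ : ∃ q, 0 < q ∧ ∀ x ∈ K0, q ≤ φ x * p x := by
    rcases K0.eq_empty_or_nonempty with rfl | hne
    · exact ⟨1, one_pos, by simp⟩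
    · obtain ⟨z, hz, hzm⟩ := hK0.exists_isMinOn hne
        ((H.smooth.continuousOn.mono hK0Ω).mul (H.pCΩ.mono hK0Ω))
      exact ⟨_, hposK z hz, fun x hx => hzm hx⟩
  refine ⟨4 * (M / q), by positivity, fun u A s hu hA hs1 hs2 hs3 hs4 hs5 => ?_⟩
  have hsφ : ∀ x ∈ Ω, x ∈ tsupport s → φ x ≠ 0 := fun x hx hxs =>
    (L.pos x hx (by simpa [dist_eq_norm] using hs1 hxs)).ne'
  have hKc : IsCompact (tsupport s ∩ tsupport u) := hu.compact.inter_left (isClosed_tsupport s)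
  have i1 : Integrable (fun x => s x / φ x ^ 2 * ‖u x‖ ^ 2) := by
    refine integrable_of_compact hKc ?_ ?_
    · have hsub : tsupport s ∩ tsupport u ⊆ Ω := inter_subset_right.trans hu.2.2
      exact ((hs2.continuousOn.mono hsub).div ((H.smooth.continuousOn.mono hsub).pow 2)
        (fun x hx => pow_ne_zero _ (hsφ x (hsub hx) hx.1))).mul (hu.1.continuous.norm.pow 2).continuousOn
    · intro x hx
      by_cases h : x ∈ tsupport s
      · have : x ∉ tsupport u := fun h' => hx ⟨h, h'⟩
        simp [(off_supp this).1]
      · simp [image_eq_zero_of_notMem_tsupport h]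
  have i2 : Integrable (fun x => s x * egs φ A u x) := H.egs_int hu hA hs2.continuousOn hsφ
  have i3 : Integrable (K0.indicator fun x => p x * ‖u x‖ ^ 2) :=
    (hu.m_int H.pCΩ).indicator hK0.measurableSet
  refine ⟨i1, ?_⟩
  rw [← integral_indicator hK0.measurableSet]
  have key := H.dir_ineq L (A := A) hu (isClosed_tsupport s) hs1 (hs2.mono inter_subset_left)
    (fun x hx => image_eq_zero_of_notMem_tsupport hx) hs3 L.norm_n
    (Φ := fun x => (1/4) * (s x / φ x ^ 2 * ‖u x‖ ^ 2) - 4 * (s x * egs φ A u x)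
      - M / q * K0.indicator (fun x => p x * ‖u x‖ ^ 2) x)
    (((i1.const_mul _).sub (i2.const_mul _)).sub (i3.const_mul _)) ?_ ?_
  · have j : ∫ x, ((1/4) * (s x / φ x ^ 2 * ‖u x‖ ^ 2) - 4 * (s x * egs φ A u x)
      - M / q * K0.indicator (fun x => p x * ‖u x‖ ^ 2) x) = (1/4) * (∫ x, s x / φ x ^ 2 * ‖u x‖ ^ 2)
        - 4 * (∫ x, s x * egs φ A u x) - M / q * ∫ x, K0.indicator (fun x => p x * ‖u x‖ ^ 2) x := by
      rw [integral_sub (f := fun x => (1/4) * (s x / φ x ^ 2 * ‖u x‖ ^ 2) - 4 * (s x * egs φ A u x))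
        (g := fun x => M / q * K0.indicator (fun x => p x * ‖u x‖ ^ 2) x)
        ((i1.const_mul _).sub (i2.const_mul _)) (i3.const_mul _),
        integral_sub (f := fun x => (1/4) * (s x / φ x ^ 2 * ‖u x‖ ^ 2))
          (g := fun x => 4 * (s x * egs φ A u x)) (i1.const_mul _) (i2.const_mul _),
        integral_const_mul, integral_const_mul, integral_const_mul]
    rw [j] at key
    linarith
  · intro x hx hxb _
    have hφx := L.pos x hx hxb
    have hg := L.grad x hx hxb n
    rw [ip_self, L.norm_n] at hg
    have hφn : 1/2 ≤ fderiv ℝ φ x n := by have := (abs_le.1 hg).1; linarith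
    have hsx := hs3 x hx
    have hE := egs_nonneg φ A u x
    set E := egs φ A u x
    have hsq := Real.sq_sqrt hE
    set e := √E
    have hw : 2 * (s x / φ x) * (‖u x‖ * e) ≤ (1/4) * (s x / φ x ^ 2 * ‖u x‖ ^ 2) + 4 * (s x * E) := by
      have e1 : (1/4) * (s x / φ x ^ 2 * ‖u x‖ ^ 2) + 4 * (s x * E) - 2 * (s x / φ x) * (‖u x‖ * e)
        = s x * ((1/2) * (‖u x‖ / φ x) - 2 * e)^2 := by rw [← hsq]; field_simp; ring
      have := mul_nonneg hsx (sq_nonneg ((1/2) * (‖u x‖ / φ x) - 2 * e))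
      linarith
    have h2 : (1/2) * (s x / φ x ^ 2 * ‖u x‖ ^ 2) ≤ s x * fderiv ℝ φ x n * ‖u x‖ ^ 2 / φ x ^ 2 := by
      have : s x * fderiv ℝ φ x n * ‖u x‖ ^ 2 / φ x ^ 2 = fderiv ℝ φ x n * (s x / φ x ^ 2 * ‖u x‖ ^ 2) := by ring
      rw [this]
      exact mul_le_mul_of_nonneg_right hφn (by positivity)
    have h3 : - (M / q * K0.indicator (fun x => p x * ‖u x‖ ^ 2) x) ≤ fderiv ℝ s x n * ‖u x‖ ^ 2 / φ x := by
      by_cases hxK : x ∈ K0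
      · rw [indicator_of_mem hxK]
        have h4 : -M * ‖u x‖ ^ 2 / φ x ≤ fderiv ℝ s x n * ‖u x‖ ^ 2 / φ x := by
          gcongr; exact hs5 x hxK
        refine le_trans ?_ h4
        rw [neg_mul, neg_div]
        apply neg_le_neg
        have hqx := hqK x hxK
        rw [div_mul_eq_mul_div, div_le_div_iff₀ hφx hq]
        have := mul_le_mul_of_nonneg_left hqx (show 0 ≤ M * ‖u x‖ ^ 2 by positivity)
        nlinarith
      · rw [indicator_of_notMem hxK]
        have := hs4 x hx hxb hxK
        have : 0 ≤ fderiv ℝ s x n * ‖u x‖ ^ 2 / φ x := by positivity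
        simpa using this
    linarith
  · intro x hx
    have h1 : s x / φ x ^ 2 * ‖u x‖ ^ 2 = 0 := by
      by_cases h : x ∈ tsupport s
      · have : x ∉ tsupport u := fun h' => hx ⟨h, h'⟩
        simp [(off_supp this).1]
      · simp [image_eq_zero_of_notMem_tsupport h]
    have h3 : 0 ≤ K0.indicator (fun x => p x * ‖u x‖ ^ 2) x :=
      indicator_nonneg (fun y hy => mul_nonneg (H.ppos y (hK0Ω hy)).le (by positivity)) x
    have h4 : s x * egs φ A u x = 0 := by
      by_cases h : x ∈ tsupport s
      · have : x ∉ tsupport u := fun h' => hx ⟨h, h'⟩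
        simp [egs_off this]
      · simp [image_eq_zero_of_notMem_tsupport h]
    simp only [h1, h4]
    have : 0 ≤ M / q * K0.indicator (fun x => p x * ‖u x‖ ^ 2) x := by positivity
    linarith

end

/-! ### A Poincaré inequality for half-integer flux -/

section
variable {Ω : Set ℂ} {p : ℂ → ℝ} {lam : ℝ} {φ : ℂ → ℝ} {b n : ℂ} {r0 : ℝ}

/-- On the disc of radius `φ(a)/4` about `a`, the function `φ` is comparable to `φ(a)`. -/
theorem Loc.near (L : Loc Ω φ b n r0) {a : ℂ} (ha : a ∈ Ω) (hab : ‖a - b‖ < r0 / 4) {x : ℂ}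
    (hx : ‖x - a‖ ≤ φ a / 4) : x ∈ Ω ∧ ‖x - b‖ < r0 ∧ φ a / 2 ≤ φ x ∧ φ x ≤ 2 * φ a := by
  have h1 : x ∈ Ω := L.ball a ha hab (by simpa [dist_eq_norm] using hx)
  have hr := L.r0_pos
  have hab' : ‖a - b‖ < r0 := by linarith
  have h2 := abs_le.1 (L.lipb a ha hab')
  have h3 := abs_le.1 (abs_ip_le n (a - b))
  rw [L.norm_n] at h3
  have hxb : ‖x - b‖ < r0 := by
    have : ‖x - b‖ ≤ ‖x - a‖ + ‖a - b‖ := norm_sub_le_norm_sub_add_norm_sub _ _ _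
    linarith
  have h4 := abs_le.1 (L.lip x h1 hxb a ha hab')
  have h5 := abs_le.1 (abs_ip_le n (x - a))
  rw [L.norm_n] at h5
  have hφ := L.pos a ha hab'
  refine ⟨h1, hxb, ?_, ?_⟩ <;> linarith

theorem pd_eq (u : ℂ → ℂ) (x v : ℂ) :
    fderiv ℝ u x v = v.re * pd1 u x + v.im * pd2 u x := by
  have : v = v.re • (1 : ℂ) + v.im • Complex.I := by
    simp [Complex.re_add_im]
  conv_lhs => rw [this]
  rw [map_add, map_smul, map_smul]; simp [pd1, pd2]

/-- The angular derivative about `a` of `u/φ`, twisted by the half flux, is bounded by the ground-state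
energy density. -/
theorem ab_dir {u : ℂ → ℂ} {a z : ℂ} (hz : z ≠ 0) (hu : DifferentiableAt ℝ u (a + z))
    (hφ : DifferentiableAt ℝ φ (a + z)) (h0 : φ (a + z) ≠ 0) :
    ‖fderiv ℝ (fun x => u x / (φ x : ℂ)) (a + z) (Complex.I * z)
      - Complex.I / 2 * (u (a + z) / φ (a + z))‖ ^ 2 ≤
      ‖z‖ ^ 2 * (egs φ (abPot a) u (a + z) / φ (a + z) ^ 2) := by
  set x := a + z with hx
  set v := Complex.I * z with hv
  have h0C : (φ x : ℂ) ≠ 0 := by exact_mod_cast h0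
  have hfun : (fun x => u x / (φ x : ℂ)) = fun x => (φ x)⁻¹ • u x := by
    ext y; rw [Complex.real_smul]; push_cast; rw [div_eq_mul_inv, mul_comm]
  have hD : HasFDerivAt (fun x => (φ x)⁻¹ • u x) _ x :=
    ((hasDerivAt_inv h0).comp_hasFDerivAt x hφ.hasFDerivAt).smul hu.hasFDerivAt
  have e1 : fderiv ℝ (fun x => u x / (φ x : ℂ)) x v =
      fderiv ℝ u x v / φ x - u x * (fderiv ℝ φ x v : ℝ) / (φ x : ℂ) ^ 2 := by
    rw [hfun, hD.fderiv]
    simp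
    field_simp
    ring
  set z1 := Complex.I * pd1 u x + ((abPot a x).re : ℂ) * u x - Complex.I * u x * ((d1 φ x / φ x : ℝ) : ℂ) with hz1
  set z2 := Complex.I * pd2 u x + ((abPot a x).im : ℂ) * u x - Complex.I * u x * ((d2 φ x / φ x : ℝ) : ℂ) with hz2
  have he : egs φ (abPot a) u x = ‖z1‖ ^ 2 + ‖z2‖ ^ 2 := rfl
  have hA : v.re * (abPot a x).re + v.im * (abPot a x).im = 1 / 2 := by
    have hn : ‖z‖ ≠ 0 := by simpa using hz
    have hxa : x - a = z := by rw [hx]; ring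
    have : abPot a x = ((1 / (2 * ‖z‖ ^ 2) : ℝ) : ℂ) * v := by
      rw [abPot, hxa, hv]; push_cast; field_simp
    rw [this, Complex.re_ofReal_mul, Complex.im_ofReal_mul]
    have hvn : v.re ^ 2 + v.im ^ 2 = ‖z‖ ^ 2 := by rw [← normsq, hv]; simp
    field_simp
    linear_combination hvn
  have key : (v.re : ℂ) * z1 + v.im * z2 = Complex.I * φ x *
      (fderiv ℝ (fun x => u x / (φ x : ℂ)) x v - Complex.I / 2 * (u x / φ x)) := by
    rw [e1, pd_eq, fderiv_eq_d, hz1, hz2]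
    have hA' : (v.re : ℂ) * (abPot a x).re + v.im * (abPot a x).im = 1 / 2 := by
      have := congrArg (fun t : ℝ => (t : ℂ)) hA
      simpa using this
    push_cast
    field_simp
    have hI : Complex.I ^ 2 = -1 := Complex.I_sq
    linear_combination (2 * u x * φ x) * hA' + (u x * φ x) * hI
  have hn : ‖Complex.I * φ x * (fderiv ℝ (fun x => u x / (φ x : ℂ)) x v - Complex.I / 2 * (u x / φ x))‖ ^ 2
      ≤ ‖z‖ ^ 2 * egs φ (abPot a) u x := by
    rw [← key, he]
    have h1 : ‖(v.re : ℂ) * z1 + v.im * z2‖ ≤ |v.re| * ‖z1‖ + |v.im| * ‖z2‖ := by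
      refine (norm_add_le _ _).trans ?_
      simp
    refine (pow_le_pow_left₀ (norm_nonneg _) h1 2).trans ?_
    have e1 : |v.re| ^ 2 + |v.im| ^ 2 = ‖z‖ ^ 2 := by
      rw [sq_abs, sq_abs, ← normsq, hv]; simp
    rw [← e1]
    nlinarith [sq_nonneg (|v.re| * ‖z2‖ - |v.im| * ‖z1‖)]
  rw [norm_mul, norm_mul, Complex.norm_I, one_mul, mul_pow, Complex.norm_real, Real.norm_eq_abs, sq_abs] at hn
  rw [← mul_div_assoc (‖z‖ ^ 2), le_div_iff₀ (by positivity)]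
  linarith

theorem Eig.egs_cont' (H : Eig Ω p lam φ) {u A : ℂ → ℂ} (hu : Test Ω u) {K : Set ℂ}
    (hA : ContinuousOn A K) (hKΩ : K ⊆ Ω)
    (hφ : ∀ x ∈ K, φ x ≠ 0) : ContinuousOn (egs φ A u) K := by
  have h1 := hu.cont_pd1.continuousOn (s := K)
  have h2 := hu.cont_pd2.continuousOn (s := K)
  have h0 := hu.1.continuous.continuousOn (s := K)
  have h3 : ContinuousOn (fun x => ((A x).re : ℂ)) K :=
    Complex.continuous_ofReal.comp_continuousOn (Complex.continuous_re.comp_continuousOn hA)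
  have h4 : ContinuousOn (fun x => ((A x).im : ℂ)) K :=
    Complex.continuous_ofReal.comp_continuousOn (Complex.continuous_im.comp_continuousOn hA)
  have h5 : ContinuousOn (fun x => ((d1 φ x / φ x : ℝ) : ℂ)) K :=
    Complex.continuous_ofReal.comp_continuousOn
      ((H.d1_smooth.continuousOn.mono hKΩ).div (H.smooth.continuousOn.mono hKΩ) hφ)
  have h6 : ContinuousOn (fun x => ((d2 φ x / φ x : ℝ) : ℂ)) K :=
    Complex.continuous_ofReal.comp_continuousOn
      ((H.d2_smooth.continuousOn.mono hKΩ).div (H.smooth.continuousOn.mono hKΩ) hφ)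
  unfold egs
  fun_prop

theorem Eig.ab_egs_cont (H : Eig Ω p lam φ) {a : ℂ} {u : ℂ → ℂ} (hu : Test (Ω \ {a}) u)
    {K : Set ℂ} (hKΩ : K ⊆ Ω) (hφ : ∀ x ∈ K, φ x ≠ 0) :
    ContinuousOn (egs φ (abPot a) u) K := by
  intro x hx
  by_cases hxu : x ∈ tsupport u
  · have hxa : x ∈ ({a}ᶜ : Set ℂ) := (hu.2.2 hxu).2
    have := H.egs_cont' (hu.mono sdiff_subset) (K := K ∩ {a}ᶜ)
      ((abPot_cont a).mono inter_subset_right) (inter_subset_left.trans hKΩ) (fun y hy => hφ y hy.1)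
    have h2 := this x ⟨hx, hxa⟩
    exact (continuousWithinAt_inter (isOpen_compl_singleton.mem_nhds hxa)).1 h2
  · have : egs φ (abPot a) u =ᶠ[nhds x] fun _ => 0 := by
      filter_upwards [(isClosed_tsupport u).isOpen_compl.mem_nhds hxu] with y hy using egs_off hy
    exact (continuousAt_const.congr this.symm).continuousWithinAt

/-- An antiperiodic function has no mean value to subtract: `2|G 0|` is the length of a jump realised
by the integral of its derivative. -/
theorem antiper {G : ℝ → ℂ} (hG : ContDiff ℝ 1 G) (h : G (2 * π) = - G 0) :
    ‖G 0‖ ^ 2 ≤ π / 2 * ∫ θ in (0:ℝ)..2 * π, ‖deriv G θ‖ ^ 2 := by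
  have hc : Continuous (deriv G) := hG.continuous_deriv le_rfl
  have h1 : ∫ θ in (0:ℝ)..2 * π, deriv G θ = G (2 * π) - G 0 :=
    intervalIntegral.integral_deriv_eq_sub (fun x _ => hG.differentiable one_ne_zero x)
      (hc.intervalIntegrable _ _)
  have h2 := intervalIntegral.norm_integral_le_integral_norm (f := deriv G) (μ := volume) two_pi_pos.le
  rw [h1, h] at h2
  have e1 : ‖-G 0 - G 0‖ = 2 * ‖G 0‖ := by
    rw [← neg_add', norm_neg, ← two_mul]; simp
  rw [e1] at h2
  set g : ℝ → ℝ := fun θ => ‖deriv G θ‖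
  have hg : Continuous g := hc.norm
  set I := ∫ θ in (0:ℝ)..2 * π, g θ
  set m := I / (2 * π)
  have h3 : 0 ≤ ∫ θ in (0:ℝ)..2 * π, (g θ - m) ^ 2 :=
    intervalIntegral.integral_nonneg two_pi_pos.le (fun _ _ => sq_nonneg _)
  have h4 : ∫ θ in (0:ℝ)..2 * π, (g θ - m) ^ 2 =
      (∫ θ in (0:ℝ)..2 * π, g θ ^ 2) - 2 * m * I + m ^ 2 * (2 * π) := by
    have : ∀ θ, (g θ - m) ^ 2 = g θ ^ 2 - 2 * m * g θ + m ^ 2 := fun θ => by ring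
    simp only [this]
    rw [intervalIntegral.integral_add (by apply Continuous.intervalIntegrable; fun_prop)
        (by apply Continuous.intervalIntegrable; fun_prop),
      intervalIntegral.integral_sub (by apply Continuous.intervalIntegrable; fun_prop)
        (by apply Continuous.intervalIntegrable; fun_prop),
      intervalIntegral.integral_const_mul, intervalIntegral.integral_const]
    simp; ring
  rw [h4] at h3
  have hm : I = m * (2 * π) := by simp only [m]; field_simp
  set J := ∫ θ in (0:ℝ)..2 * π, g θ ^ 2
  have hπ := pi_pos
  rw [hm] at h2 h3
  have h5 : m ^ 2 * (2 * π) ≤ J := by nlinarith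
  have h6 : ‖G 0‖ ≤ m * π := by linarith
  have h7 : ‖G 0‖ ^ 2 ≤ (m * π) ^ 2 := pow_le_pow_left₀ (norm_nonneg _) h6 2
  calc _ ≤ _ := h7
    _ = π / 2 * (m ^ 2 * (2 * π)) := by ring
    _ ≤ _ := by gcongr

/-- Rotation invariance of the integral over a disc. -/
theorem rot_int {f : ℂ → ℝ} {R : ℝ} (θ : ℝ) :
    ∫ y in Metric.closedBall (0:ℂ) R, f (Complex.exp (θ * Complex.I) * y) =
      ∫ y in Metric.closedBall (0:ℂ) R, f y := by
  have e : ∀ y : ℂ, Complex.exp (θ * Complex.I) * y = rotation (Circle.exp θ) y := by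
    intro y; simp
  simp only [e]
  have hm := (rotation (Circle.exp θ)).measurePreserving
  have := hm.setIntegral_preimage_emb (rotation (Circle.exp θ)).toHomeomorph.measurableEmbedding f
    (Metric.closedBall (0:ℂ) R)
  rw [← this]
  congr 2
  ext y
  simp only [mem_preimage, Metric.mem_closedBall, dist_zero_right, LinearIsometryEquiv.norm_map]

/-- Integration over the disc of a pointwise bound by an average over rotations. -/
theorem rot_avg {f w : ℂ → ℝ} {R : ℝ} (hf : ContinuousOn f (Metric.closedBall (0:ℂ) R))
    (hw : ContinuousOn w (Metric.closedBall (0:ℂ) R))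
    (h : ∀ y, ‖y‖ ≤ R → w y ≤ π / 2 * ∫ θ in (0:ℝ)..2 * π, f (Complex.exp (θ * Complex.I) * y)) :
    ∫ y in Metric.closedBall (0:ℂ) R, w y ≤ π ^ 2 * ∫ y in Metric.closedBall (0:ℂ) R, f y := by
  set B := Metric.closedBall (0:ℂ) R
  have hB : IsCompact B := isCompact_closedBall _ _
  have hprod : IntegrableOn (fun q : ℂ × ℝ => f (Complex.exp (q.2 * Complex.I) * q.1))
      (B ×ˢ Icc 0 (2 * π)) (volume.prod volume) := by
    apply ContinuousOn.integrableOn_compact (hB.prod isCompact_Icc)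
    apply hf.comp
    · exact Continuous.continuousOn (by fun_prop)
    · rintro ⟨y, t⟩ ⟨hy, -⟩
      simp only [B, Metric.mem_closedBall, dist_zero_right] at hy ⊢
      rw [norm_mul, Complex.norm_exp_ofReal_mul_I, one_mul]; exact hy
  have hprod' : Integrable (Function.uncurry fun (y : ℂ) (θ : ℝ) => f (Complex.exp (θ * Complex.I) * y))
      ((volume.restrict B).prod (volume.restrict (Ioc 0 (2 * π)))) := by
    rw [Measure.prod_restrict]
    exact hprod.mono_set (prod_mono le_rfl Ioc_subset_Icc_self)
  have hswap := integral_integral_swap hprod'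
  have hin : Integrable (fun y => ∫ θ in Ioc 0 (2 * π), f (Complex.exp (θ * Complex.I) * y))
      (volume.restrict B) := hprod'.integral_prod_left
  have h1 : ∫ y in B, w y ≤ ∫ y in B, π / 2 * ∫ θ in Ioc 0 (2 * π), f (Complex.exp (θ * Complex.I) * y) := by
    refine setIntegral_mono_on (hw.integrableOn_compact hB) (hin.const_mul _) hB.measurableSet ?_
    intro y hy
    have := h y (by simpa [B] using hy)
    rwa [intervalIntegral.integral_of_le two_pi_pos.le] at this
  refine h1.trans (le_of_eq ?_)
  rw [integral_const_mul]
  rw [hswap]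
  have : ∀ θ : ℝ, ∫ y in B, f (Complex.exp (θ * Complex.I) * y) = ∫ y in B, f y := fun θ => rot_int θ
  simp only [this]
  rw [integral_const]
  simp [two_pi_pos.le]
  ring

/-- Poincaré inequality on the disc of radius `φ(a)/4` about the pole, without subtraction of a mean
value: `e^{-iθ/2} u/φ` is antiperiodic along each circle about `a`. -/
theorem Eig.ab_ball (H : Eig Ω p lam φ) (L : Loc Ω φ b n r0) {a : ℂ} (ha : a ∈ Ω)
    (hab : ‖a - b‖ < r0 / 4) {u : ℂ → ℂ} (hu : Test (Ω \ {a}) u) :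
    ∫ x in Metric.closedBall a (φ a / 4), ‖u x‖ ^ 2 / φ x ^ 2 ≤
      π ^ 2 * ∫ x in Metric.closedBall a (φ a / 4), egs φ (abPot a) u x := by
  set R := φ a / 4 with hR
  have hφa : 0 < φ a := L.pos a ha (by have := L.r0_pos; linarith)
  have near := fun {x} (hx : ‖x - a‖ ≤ R) => L.near ha hab hx
  have hu' := hu.mono (sdiff_subset : Ω \ {a} ⊆ Ω)
  have hBΩ : Metric.closedBall a R ⊆ Ω := fun x hx => (near (by simpa [dist_eq_norm] using hx)).1
  have hpos : ∀ x ∈ Metric.closedBall a R, 0 < φ x := fun x hx => by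
    have := (near (x := x) (by simpa [dist_eq_norm] using hx)).2.2.1; linarith
  have hEc := H.ab_egs_cont hu hBΩ (fun x hx => (hpos x hx).ne')
  have hφc : ContinuousOn φ (Metric.closedBall a R) := H.smooth.continuousOn.mono hBΩ
  have htr : ∀ F : ℂ → ℝ, ∫ x in Metric.closedBall a R, F x =
      ∫ y in Metric.closedBall (0:ℂ) R, F (a + y) := by
    intro F
    have := (measurePreserving_add_left volume a).setIntegral_preimage_emb
      (Homeomorph.addLeft a).measurableEmbedding F (Metric.closedBall a R)
    rw [← this]
    congr 2
    ext y; simp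
  have hmaps : MapsTo (fun y => a + y) (Metric.closedBall (0:ℂ) R) (Metric.closedBall a R) := by
    intro y hy; simpa using hy
  have hac : ContinuousOn (fun y => a + y) (Metric.closedBall (0:ℂ) R) := by fun_prop
  set f : ℂ → ℝ := fun y => ‖y‖ ^ 2 * (egs φ (abPot a) u (a + y) / φ (a + y) ^ 2) with hf
  have hEc' : ContinuousOn (fun y => egs φ (abPot a) u (a + y)) (Metric.closedBall (0:ℂ) R) :=
    hEc.comp hac hmaps
  have hφc' : ContinuousOn (fun y => φ (a + y)) (Metric.closedBall (0:ℂ) R) := hφc.comp hac hmaps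
  have hfc : ContinuousOn f (Metric.closedBall (0:ℂ) R) :=
    (continuous_norm.pow 2).continuousOn.mul (hEc'.div (hφc'.pow 2)
      (fun y hy => pow_ne_zero _ (hpos _ (hmaps hy)).ne'))
  have huc : Continuous u := hu.1.continuous
  have hwc : ContinuousOn (fun y => ‖u (a + y)‖ ^ 2 / φ (a + y) ^ 2) (Metric.closedBall (0:ℂ) R) :=
    (Continuous.continuousOn (by fun_prop)).div (hφc'.pow 2)
      (fun y hy => pow_ne_zero _ (hpos _ (hmaps hy)).ne')
  rw [htr, htr]
  have hua : u a = 0 := image_eq_zero_of_notMem_tsupport (fun h => (hu.2.2 h).2 rfl)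
  have main := rot_avg hfc hwc ?_
  · refine main.trans ?_
    gcongr ?_ * ?_
    refine setIntegral_mono_on (hfc.integrableOn_compact (isCompact_closedBall _ _))
      (hEc'.integrableOn_compact (isCompact_closedBall _ _)) Metric.isClosed_closedBall.measurableSet ?_
    intro y hy
    have hy' : ‖y‖ ≤ R := by simpa using hy
    have h1 := (near (x := a + y) (by simpa using hy')).2.2.1
    have hE := egs_nonneg φ (abPot a) u (a + y)
    simp only [hf]
    rw [← mul_div_assoc, div_le_iff₀ (by have := hpos _ (hmaps hy); positivity), mul_comm]
    gcongr
    linarith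
  · intro y hy
    rcases eq_or_ne y 0 with rfl | hy0
    · simp [hua, hf]
    -- the curve and the antiperiodic function
    set w : ℂ → ℂ := fun x => u x / (φ x : ℂ) with hw
    set N := Ω ∩ {x | φ x ≠ 0} with hN
    have hwN : ContDiffOn ℝ 1 w N := by
      have hfun : w = fun x => (φ x)⁻¹ • u x := by
        ext y; simp only [hw]; rw [Complex.real_smul]; push_cast; rw [div_eq_mul_inv, mul_comm]
      rw [hfun]
      exact (((H.smooth.mono inter_subset_left).of_le (by simp)).inv (fun x hx => hx.2)).smul
        ((hu.1.of_le (by simp)).contDiffOn)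
    have hNo : IsOpen N := H.smooth.continuousOn.isOpen_inter_preimage H.isOpen isOpen_ne
    have hγn : ∀ θ : ℝ, ‖Complex.exp (θ * Complex.I) * y‖ = ‖y‖ := fun θ => by
      rw [norm_mul, Complex.norm_exp_ofReal_mul_I, one_mul]
    have hγN : ∀ θ : ℝ, a + Complex.exp (θ * Complex.I) * y ∈ N := fun θ => by
      have hm : a + Complex.exp (θ * Complex.I) * y ∈ Metric.closedBall a R := by
        simp only [Metric.mem_closedBall, dist_eq_norm, add_sub_cancel_left, hγn]; exact hy
      exact ⟨hBΩ hm, (hpos _ hm).ne'⟩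
    have hexp : ContDiff ℝ 1 (fun θ : ℝ => Complex.exp (θ * Complex.I)) := by
      have : ContDiff ℝ 1 (fun θ : ℝ => (θ : ℂ) * Complex.I) :=
        Complex.ofRealCLM.contDiff.mul contDiff_const
      exact this.cexp
    have hexp2 : ContDiff ℝ 1 (fun θ : ℝ => Complex.exp (-(θ * Complex.I / 2))) := by
      have : ContDiff ℝ 1 (fun θ : ℝ => -((θ : ℂ) * Complex.I / 2)) :=
        ((Complex.ofRealCLM.contDiff.mul contDiff_const).div_const 2).neg
      exact this.cexp
    have hγ : ContDiff ℝ 1 (fun θ : ℝ => a + Complex.exp (θ * Complex.I) * y) :=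
      contDiff_const.add (hexp.mul contDiff_const)
    set G : ℝ → ℂ := fun θ => Complex.exp (-(θ * Complex.I / 2)) * w (a + Complex.exp (θ * Complex.I) * y) with hG
    have hGC : ContDiff ℝ 1 G := by
      refine hexp2.mul ?_
      have := hwN.comp_contDiff hγ hγN
      exact this
    have hanti : G (2 * π) = - G 0 := by
      simp only [hG]
      have e1 : Complex.exp (-(((2 * π : ℝ) : ℂ) * Complex.I / 2)) = -1 := by
        have : (-(((2 * π : ℝ) : ℂ) * Complex.I / 2)) = -(π * Complex.I) := by push_cast; ring
        rw [this, Complex.exp_neg, Complex.exp_pi_mul_I]; norm_num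
      have e2 : Complex.exp (((2 * π : ℝ) : ℂ) * Complex.I) = 1 := by
        push_cast; exact Complex.exp_two_pi_mul_I
      rw [e1, e2]; simp
    have hG0 : ‖G 0‖ ^ 2 = ‖u (a + y)‖ ^ 2 / φ (a + y) ^ 2 := by
      simp [hG, hw, div_pow]
    rw [← hG0]
    refine (antiper hGC hanti).trans ?_
    gcongr ?_ * ?_
    apply intervalIntegral.integral_mono_on two_pi_pos.le
    · exact ((hGC.continuous_deriv le_rfl).norm.pow 2).intervalIntegrable _ _
    · apply Continuous.intervalIntegrable
      have : Continuous (fun θ : ℝ => Complex.exp (θ * Complex.I) * y) := by fun_prop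
      exact hfc.comp_continuous this (fun θ => by simp only [Metric.mem_closedBall, dist_zero_right, hγn]; exact hy)
    · intro θ _
      set z := Complex.exp (θ * Complex.I) * y with hz
      have hz0 : z ≠ 0 := mul_ne_zero (Complex.exp_ne_zero _) hy0
      have hxN : a + z ∈ N := hγN θ
      have hd := ab_dir (φ := φ) (u := u) hz0 (hu.diff _) (H.diffAt hxN.1) hxN.2
      have d1 : HasDerivAt (fun θ : ℝ => (θ : ℂ)) 1 θ := Complex.ofRealCLM.hasDerivAt
      have d2 : HasDerivAt (fun θ : ℝ => Complex.exp (θ * Complex.I)) (Complex.exp (θ * Complex.I) * (1 * Complex.I)) θ :=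
        (d1.mul_const Complex.I).cexp
      have d3 : HasDerivAt (fun θ : ℝ => Complex.exp (-(θ * Complex.I / 2)))
          (Complex.exp (-(θ * Complex.I / 2)) * (-(1 * Complex.I / 2))) θ :=
        (((d1.mul_const Complex.I).div_const 2).fun_neg).cexp
      have d4 : HasDerivAt (fun θ : ℝ => a + Complex.exp (θ * Complex.I) * y) (Complex.I * z) θ := by
        have := (d2.mul_const y).const_add a
        have e : Complex.exp (θ * Complex.I) * (1 * Complex.I) * y = Complex.I * z := by rw [hz]; ring
        rwa [e] at this
      have d5 : HasDerivAt (fun θ : ℝ => w (a + Complex.exp (θ * Complex.I) * y))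
          (fderiv ℝ w (a + z) (Complex.I * z)) θ := by
        have hwd : DifferentiableAt ℝ w (a + z) :=
          (hwN.contDiffAt (hNo.mem_nhds hxN)).differentiableAt (by simp)
        exact hwd.hasFDerivAt.comp_hasDerivAt θ d4
      have d6 := (d3.mul d5).deriv
      have : deriv G θ = Complex.exp (-(θ * Complex.I / 2)) *
          (fderiv ℝ w (a + z) (Complex.I * z) - Complex.I / 2 * w (a + z)) := by
        refine Eq.trans d6 ?_
        rw [← hz]; ring
      rw [this, norm_mul]
      have e3 : ‖Complex.exp (-(θ * Complex.I / 2))‖ = 1 := by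
        have : (-((θ : ℂ) * Complex.I / 2)) = ((-(θ / 2) : ℝ) : ℂ) * Complex.I := by push_cast; ring
        rw [this, Complex.norm_exp_ofReal_mul_I]
      rw [e3, one_mul]
      exact hd
end

/-! ### A one-dimensional weight -/

/-- A weight `f` for integration along the half-line. It vanishes outside `[-h/8, 2T]` and its
derivative absorbs the cross term `2 f w e` at the price of `(h² + t²)/h · e²`; mass near `t = 0` is
paid for with factor `C/h`, and a gain of `2/(5T)` remains on `[h/8, T]`. -/
theorem exists_profile : ∃ C : ℝ, 0 < C ∧ ∀ h T : ℝ, 0 < h → h ≤ T → ∃ f f' : ℝ → ℝ,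
    ContDiff ℝ (⊤ : ℕ∞) f ∧ (∀ t, HasDerivAt f (f' t) t) ∧ (∀ t, 0 ≤ f t) ∧
    (∀ t, t < -(h / 8) → f t = 0) ∧ (∀ t, 2 * T < t → f t = 0) ∧
    (∀ t w e, -(h / 8) ≤ t → t ≤ 2 * T →
      -(C / h) * w ^ 2 - C * (h ^ 2 + t ^ 2) / h * e ^ 2 ≤ - f' t * w ^ 2 - 2 * f t * w * e) ∧
    (∀ t w e, h / 8 ≤ t → t ≤ 2 * T →
      - (C * (h ^ 2 + t ^ 2) / h * e ^ 2) ≤ - f' t * w ^ 2 - 2 * f t * w * e) ∧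
    (∀ t w e, h / 8 ≤ t → t ≤ T →
      2 / 5 / T * w ^ 2 - C * (h ^ 2 + t ^ 2) / h * e ^ 2 ≤ - f' t * w ^ 2 - 2 * f t * w * e) := by
  obtain ⟨M, hM1, hM⟩ := exists_smoothTransition_bound
  refine ⟨80 * M, by positivity, fun h T hh hT => ?_⟩
  have hT0 : 0 < T := by linarith
  -- The weight is `R * c * D`: the ramp `R` rises on `[-h/8, h/8]`, the factor `c` supplies
  -- the decrease `h/(h² + t²)` to absorb the cross term, and `D` decreases to zero at `2T`.
  set R : ℝ → ℝ := fun t => smoothTransition (4 * t / h + 1 / 2) with hR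
  set c : ℝ → ℝ := fun t => 2 - arctan (t / h) with hc
  set D : ℝ → ℝ := fun t => smoothTransition (2 - t / T) * (4 - t / T) with hD
  set R' : ℝ → ℝ := fun t => deriv smoothTransition (4 * t / h + 1 / 2) * (4 / h) with hR'
  set c' : ℝ → ℝ := fun t => - (h / (h ^ 2 + t ^ 2)) with hc'
  set D' : ℝ → ℝ := fun t => deriv smoothTransition (2 - t / T) * (-(1 / T)) * (4 - t / T)
    + smoothTransition (2 - t / T) * (-(1 / T)) with hD'
  have dR : ∀ t, HasDerivAt R (R' t) t := fun t => by
    have h1 : HasDerivAt (fun t : ℝ => 4 * t / h + 1 / 2) (4 / h) t := by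
      have := (((hasDerivAt_id t).const_mul 4).div_const h).add_const (1 / 2)
      simpa using this
    exact (hasDerivAt_smoothTransition _).comp t h1
  have dc : ∀ t, HasDerivAt c (c' t) t := fun t => by
    have h1 := (((hasDerivAt_id t).div_const h).arctan).const_sub 2
    refine h1.congr_deriv ?_
    simp only [hc', id]
    field_simp
  have dD : ∀ t, HasDerivAt D (D' t) t := fun t => by
    have h1 : HasDerivAt (fun t : ℝ => 2 - t / T) (-(1 / T)) t := ((hasDerivAt_id t).div_const T).const_sub 2
    have h2 : HasDerivAt (fun t : ℝ => 4 - t / T) (-(1 / T)) t := ((hasDerivAt_id t).div_const T).const_sub 4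
    exact ((hasDerivAt_smoothTransition _).comp t h1).mul h2
  have R0 : ∀ t, 0 ≤ R t ∧ R t ≤ 1 := fun t => st_range _
  have R'0 : ∀ t, 0 ≤ R' t ∧ R' t ≤ 4 * M / h := fun t => by
    have h1 := deriv_smoothTransition_nonneg (4 * t / h + 1 / 2)
    have h2 := (le_abs_self _).trans (hM (4 * t / h + 1 / 2))
    refine ⟨by positivity, ?_⟩
    calc R' t ≤ M * (4 / h) := by simp only [hR']; gcongr
      _ = 4 * M / h := by ring
  have hpi : π < 3.15 := pi_lt_d2
  have c0 : ∀ t, 2 / 5 ≤ c t ∧ c t ≤ 4 := fun t => by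
    have h1 := arctan_lt_pi_div_two (t / h)
    have h2 := neg_pi_div_two_lt_arctan (t / h)
    constructor <;> simp only [hc] <;> linarith
  have D0 : ∀ t, 0 ≤ D t := fun t => by
    by_cases ht : t ≤ 2 * T
    · have h1 : t / T ≤ 2 := by rwa [div_le_iff₀ hT0]
      exact mul_nonneg (st_range _).1 (by linarith)
    · have h1 : 2 < t / T := by rw [lt_div_iff₀ hT0]; linarith
      simp only [hD]
      rw [smoothTransition.zero_of_nonpos (by linarith)]; simp
  have D5 : ∀ t, -(h/8) ≤ t → t ≤ 2 * T → D t ≤ 5 := fun t ht ht2 => by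
    have h1 : -1 ≤ t / T := by rw [le_div_iff₀ hT0]; linarith
    have h2 : t / T ≤ 2 := by rwa [div_le_iff₀ hT0]
    have := st_range (2 - t / T)
    simp only [hD]; nlinarith
  have D'0 : ∀ t, t ≤ 2 * T → 0 ≤ - D' t := fun t ht => by
    have h1 : t / T ≤ 2 := by rwa [div_le_iff₀ hT0]
    have h2 := deriv_smoothTransition_nonneg (2 - t / T)
    have h3 := (st_range (2 - t / T)).1
    have e : - D' t = (1 / T) * (deriv smoothTransition (2 - t / T) * (4 - t / T) + smoothTransition (2 - t / T)) := by
      simp only [hD']; ring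
    rw [e]
    have : 0 ≤ 4 - t / T := by linarith
    positivity
  have D'1 : ∀ t, t ≤ T → 1 / T ≤ - D' t := fun t ht => by
    have h1 : t / T ≤ 1 := by rw [div_le_iff₀ hT0]; linarith
    have h2 := deriv_smoothTransition_nonneg (2 - t / T)
    have h3 : smoothTransition (2 - t / T) = 1 := smoothTransition.one_of_one_le (by linarith)
    have e : - D' t = (1 / T) * (deriv smoothTransition (2 - t / T) * (4 - t / T) + 1) := by
      simp only [hD', h3]; ring
    rw [e]
    have : 0 ≤ 4 - t / T := by linarith
    have h5 : 0 ≤ deriv smoothTransition (2 - t / T) * (4 - t / T) := by positivity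
    have h6 : 0 < 1 / T := by positivity
    nlinarith
  -- the central algebraic estimate
  have main : ∀ t w e, -(h / 8) ≤ t → t ≤ 2 * T →
      - (R' t * c t * D t) * w ^ 2 + R t * c t * (- D' t) * w ^ 2
        - 80 * M * (h ^ 2 + t ^ 2) / h * e ^ 2 ≤
      - (R' t * c t * D t + R t * c' t * D t + R t * c t * D' t) * w ^ 2 - 2 * (R t * c t * D t) * w * e := by
    intro t w e h1 h2
    have hq : 0 < h ^ 2 + t ^ 2 := by positivity
    have e1 : 0 ≤ h / (h ^ 2 + t ^ 2) * (w - c t * e * ((h ^ 2 + t ^ 2) / h)) ^ 2 := by positivity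
    have e2 : h / (h ^ 2 + t ^ 2) * (w - c t * e * ((h ^ 2 + t ^ 2) / h)) ^ 2
      = - c' t * w ^ 2 - 2 * c t * w * e + c t ^ 2 * ((h ^ 2 + t ^ 2) / h * e ^ 2) := by
      simp only [hc']; field_simp; ring
    rw [e2] at e1
    have hRD : 0 ≤ R t * D t := mul_nonneg (R0 t).1 (D0 t)
    have hRD5 : R t * D t ≤ 5 := by
      have := D5 t h1 h2
      have := R0 t
      have := D0 t
      nlinarith
    have e3 := mul_nonneg hRD e1
    have e4 : R t * D t * c t ^ 2 ≤ 80 * M := by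
      have : c t ^ 2 ≤ 16 := by have := c0 t; nlinarith
      calc R t * D t * c t ^ 2 ≤ 5 * 16 := by gcongr
        _ ≤ 80 * M := by linarith
    have e5 := mul_le_mul_of_nonneg_right e4 (show 0 ≤ (h ^ 2 + t ^ 2) / h * e ^ 2 by positivity)
    have e6 : 80 * M * (h ^ 2 + t ^ 2) / h * e ^ 2 = 80 * M * ((h ^ 2 + t ^ 2) / h * e ^ 2) := by ring
    rw [e6]
    nlinarith
  refine ⟨fun t => R t * c t * D t,
    fun t => R' t * c t * D t + R t * c' t * D t + R t * c t * D' t, ?_, ?_, ?_, ?_, ?_, ?_, ?_, ?_⟩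
  · have h1 : ContDiff ℝ (⊤ : ℕ∞) R := st_smooth.comp (by fun_prop)
    have h2 : ContDiff ℝ (⊤ : ℕ∞) c := contDiff_const.sub (contDiff_arctan.comp (contDiff_id.div_const h))
    have h3 : ContDiff ℝ (⊤ : ℕ∞) D := (st_smooth.comp (by fun_prop)).mul (by fun_prop)
    exact (h1.mul h2).mul h3
  · intro t
    exact (((dR t).mul (dc t)).mul (dD t)).congr_deriv (by simp only [Pi.mul_apply]; ring)
  · intro t
    have := c0 t
    exact mul_nonneg (mul_nonneg (R0 t).1 (by linarith)) (D0 t)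
  · intro t ht
    have : R t = 0 := smoothTransition.zero_of_nonpos (by
      have : 4 * t / h ≤ -(1/2) := by rw [div_le_iff₀ hh]; linarith
      linarith)
    simp [this]
  · intro t ht
    have h1 : 2 < t / T := by rw [lt_div_iff₀ hT0]; linarith
    simp only [hD]
    rw [smoothTransition.zero_of_nonpos (show 2 - t / T ≤ 0 by linarith)]; simp
  · intro t w e h1 h2
    refine le_trans ?_ (main t w e h1 h2)
    have e1 : R' t * c t * D t ≤ 80 * M / h := by
      calc R' t * c t * D t ≤ (4 * M / h) * 4 * 5 := by
            have := c0 t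
            gcongr
            all_goals first | exact D0 t | linarith | exact (R'0 t).2 | exact D5 t h1 h2
        _ = 80 * M / h := by ring
    have e2 : 0 ≤ R t * c t * (-D' t) := mul_nonneg (mul_nonneg (R0 t).1 (by have := c0 t; linarith)) (D'0 t h2)
    nlinarith [mul_le_mul_of_nonneg_right e1 (sq_nonneg w), mul_nonneg e2 (sq_nonneg w)]
  · intro t w e h1 h2
    refine le_trans ?_ (main t w e (by linarith) h2)
    have e1 : R' t = 0 := by
      simp only [hR']
      rw [deriv_st_eq_zero (Or.inr ?_), zero_mul]
      have : 1/2 ≤ 4 * t / h := by rw [le_div_iff₀ hh]; linarith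
      linarith
    have e2 : 0 ≤ R t * c t * (-D' t) := mul_nonneg (mul_nonneg (R0 t).1 (by have := c0 t; linarith)) (D'0 t h2)
    rw [e1]
    nlinarith [mul_nonneg e2 (sq_nonneg w)]
  · intro t w e h1 h2
    refine le_trans ?_ (main t w e (by linarith) (by linarith))
    have e0 : 1 ≤ 4 * t / h + 1 / 2 := by
      have : 1/2 ≤ 4 * t / h := by rw [le_div_iff₀ hh]; linarith
      linarith
    have e1 : R' t = 0 := by
      simp only [hR']
      rw [deriv_st_eq_zero (Or.inr e0), zero_mul]
    have e3 : R t = 1 := smoothTransition.one_of_one_le e0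
    rw [e1, e3]
    have e4 : 2 / 5 / T ≤ 1 * c t * (-D' t) := by
      calc 2 / 5 / T = 1 * (2 / 5) * (1 / T) := by ring
        _ ≤ _ := by
          have := c0 t
          gcongr
          all_goals first | linarith | exact D'1 t h2
    nlinarith [mul_le_mul_of_nonneg_right e4 (sq_nonneg w)]

/-! ### Transport along the inner normal -/

/-- A rectangle of length `s0/4` and width `h/8`, centred at depth `s0` above `a` in the direction `n`. -/
def sink (a n : ℂ) (s0 h : ℝ) : Set ℂ :=
  {x | |ip n (x - a) - s0| ≤ s0 / 8 ∧ |ip (Complex.I * n) (x - a)| ≤ h / 16}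

theorem sink_closed (a n : ℂ) (s0 h : ℝ) : IsClosed (sink a n s0 h) := by
  have h1 := (ip_contDiff n a).continuous
  have h2 := (ip_contDiff (Complex.I * n) a).continuous
  exact (isClosed_le (h1.sub continuous_const).abs continuous_const).inter
    (isClosed_le h2.abs continuous_const)

theorem sink_sub {a b n : ℂ} {s0 h : ℝ} (hn : ‖n‖ = 1) (hs0 : 0 < s0) (hab : ‖a - b‖ ≤ s0 / 16)
    (hh : 0 ≤ h) (hh' : h ≤ s0) :
    sink a n s0 h ⊆ Metric.closedBall (b + (s0 : ℂ) * n) (s0 / 2) := by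
  intro x hx
  rw [Metric.mem_closedBall, dist_eq_norm]
  have e : x - (b + (s0 : ℂ) * n) = (x - a - (s0 : ℂ) * n) + (a - b) := by ring
  rw [e]
  have h1 : ‖x - a - (s0 : ℂ) * n‖ ≤ s0 / 4 := by
    apply abs_le_of_sq_le_sq' _ (by positivity) |>.2
    rw [norm_sq_ip hn, ip_sub n (x - a), ip_sub (Complex.I * n) (x - a), ip_smul, ip_smul, ip_In, ip_self, hn]
    have h2 := sq_le_sq' (abs_le.1 hx.1).1 (abs_le.1 hx.1).2
    have h3 := sq_le_sq' (abs_le.1 hx.2).1 (abs_le.1 hx.2).2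
    nlinarith
  linarith [norm_add_le (x - a - (s0 : ℂ) * n) (a - b)]

theorem sink_vol {a n : ℂ} {s0 h : ℝ} (hn : ‖n‖ = 1) (hs0 : 0 ≤ s0) (hh : 0 ≤ h) :
    volume.real (sink a n s0 h) = (s0 / 4) * (h / 8) := by
  have hc : ‖(starRingEnd ℂ) n‖ = 1 := by simp [hn]
  have hmem : (starRingEnd ℂ) n ∈ Submonoid.unitSphere ℂ := by simp [Submonoid.unitSphere, hn]
  set cc : Circle := ⟨(starRingEnd ℂ) n, hmem⟩
  have hm : MeasurePreserving (fun x : ℂ => rotation cc (x - a)) volume volume :=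
    (rotation cc).measurePreserving.comp (measurePreserving_sub_right volume a)
  have hm2 := Complex.volume_preserving_equiv_real_prod.comp hm
  have hset : sink a n s0 h = (Complex.measurableEquivRealProd ∘ fun x : ℂ => rotation cc (x - a)) ⁻¹'
      (Icc (s0 - s0 / 8) (s0 + s0 / 8) ×ˢ Icc (-(h / 16)) (h / 16)) := by
    ext x
    have e1 : (rotation cc (x - a)).re = ip n (x - a) := by
      rw [rotation_apply]; simp [cc, ip]
    have e2 : (rotation cc (x - a)).im = ip (Complex.I * n) (x - a) := by
      rw [rotation_apply]; simp [cc, ip]; ring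
    simp only [mem_preimage, Function.comp_apply, mem_prod, Complex.measurableEquivRealProd_apply, e1, e2,
      sink, mem_ofPred_eq, mem_Icc, abs_le]
    constructor
    · rintro ⟨⟨h1, h2⟩, h3, h4⟩; exact ⟨⟨by linarith, by linarith⟩, h3, h4⟩
    · rintro ⟨⟨h1, h2⟩, h3, h4⟩; exact ⟨⟨by linarith, by linarith⟩, h3, h4⟩
  rw [hset, measureReal_def, hm2.measure_preimage
    (measurableSet_Icc.prod measurableSet_Icc).nullMeasurableSet, Measure.volume_eq_prod, Measure.prod_prod,
    Real.volume_Icc, Real.volume_Icc, ENNReal.toReal_mul, ENNReal.toReal_ofReal (by linarith),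
    ENNReal.toReal_ofReal (by linarith)]
  ring

section
variable {Ω : Set ℂ} {p : ℂ → ℝ} {lam : ℝ} {φ : ℂ → ℝ} {b n : ℂ} {r0 : ℝ}

set_option maxHeartbeats 1000000 in
/-- Control of `u/φ` on the disc about `a` is carried along the normal strip through `a` to the `sink`
rectangle. The weight `exists_profile` is used in the normal variable. -/
theorem Eig.transport (H : Eig Ω p lam φ) (L : Loc Ω φ b n r0) {η : ℂ → ℝ}
    (hη : ContDiff ℝ (⊤ : ℕ∞) η) (hη0 : ∀ x, 0 ≤ η x) (hη1 : ∀ x, ‖x - b‖ ≤ r0 / 10 → η x = 1)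
    (hηb : tsupport η ⊆ Metric.ball b r0) {s0 : ℝ} (hs0 : 0 < s0) (hs0r : s0 ≤ r0 / 40)
    (hsΩ : Metric.closedBall (b + (s0 : ℂ) * n) (s0 / 2) ⊆ Ω) :
    ∃ C, 0 < C ∧ ∀ a ∈ Ω, ‖a - b‖ < s0 / 32 → ∀ u, Test (Ω \ {a}) u →
      φ a * ∫ x in sink a n s0 (φ a), ‖u x‖ ^ 2 / φ x ^ 2 ≤ C * ∫ x, η x * egs φ (abPot a) u x := by
  obtain ⟨C1, hC1, hprof⟩ := exists_profile
  have hr := L.r0_pos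
  refine ⟨(C1 * π ^ 2 + 4 * C1) * (9 * s0 / 8) * (5 / 2), by positivity, fun a ha hab u hu => ?_⟩
  have hab4 : ‖a - b‖ < r0 / 4 := by linarith
  have hφa : 0 < φ a := L.pos a ha (by linarith)
  have hφa2 : φ a ≤ s0 / 8 := by
    have h2 := abs_le.1 (L.lipb a ha (by linarith))
    have h3 := abs_le.1 (abs_ip_le n (a - b))
    rw [L.norm_n] at h3
    linarith
  have hu' := hu.mono (sdiff_subset : Ω \ {a} ⊆ Ω)
  have hA : ContinuousOn (abPot a) (tsupport u) := (abPot_cont a).mono (fun x hx => (hu.2.2 hx).2)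
  set h := φ a with hh
  set T := 9 * s0 / 8 with hT
  obtain ⟨f, f', hf, hf', hf0, hfl, hfr, hp1, hp2, hp3⟩ := hprof h T hφa (by linarith)
  set B : ℝ → ℝ := fun τ => 1 - smoothTransition ((τ ^ 2 - h ^ 2 / 256) / (3 * h ^ 2 / 256)) with hB
  have hBs : ContDiff ℝ (⊤ : ℕ∞) B := contDiff_const.sub (st_smooth.comp (by fun_prop))
  have hB0 : ∀ τ, 0 ≤ B τ ∧ B τ ≤ 1 := fun τ => by
    have := st_range ((τ ^ 2 - h ^ 2 / 256) / (3 * h ^ 2 / 256))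
    constructor <;> simp only [hB] <;> linarith
  have hB1 : ∀ τ, |τ| ≤ h / 16 → B τ = 1 := fun τ hτ => by
    simp only [hB]
    rw [smoothTransition.zero_of_nonpos, sub_zero]
    apply div_nonpos_of_nonpos_of_nonneg _ (by positivity)
    have := sq_le_sq' (abs_le.1 hτ).1 (abs_le.1 hτ).2
    nlinarith
  have hB2 : ∀ τ, h / 8 < |τ| → B τ = 0 := fun τ hτ => by
    simp only [hB]
    rw [smoothTransition.one_of_one_le, sub_self]
    rw [le_div_iff₀ (by positivity)]
    have : (h / 8) ^ 2 ≤ |τ| ^ 2 := by gcongr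
    rw [sq_abs] at this
    nlinarith
  set ξ : ℂ → ℝ := fun x => f (ip n (x - a)) * B (ip (Complex.I * n) (x - a)) with hξ
  have hξs : ContDiff ℝ (⊤ : ℕ∞) ξ :=
    (hf.comp (ip_contDiff n a)).mul (hBs.comp (ip_contDiff (Complex.I * n) a))
  have hξn : ∀ x, fderiv ℝ ξ x n = f' (ip n (x - a)) * B (ip (Complex.I * n) (x - a)) := fun x =>
    fderiv_normal L.norm_n x (hξs.differentiable (by simp) x) (hf' _)
  have hξ0 : ∀ x, 0 ≤ ξ x := fun x => mul_nonneg (hf0 _) (hB0 _).1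
  set S : Set ℂ := {x | (-(h / 8) ≤ ip n (x - a) ∧ ip n (x - a) ≤ 2 * T) ∧ |ip (Complex.I * n) (x - a)| ≤ h / 8}
    with hS
  have hSc : IsClosed S := by
    have h1 := (ip_contDiff n a).continuous
    have h2 := (ip_contDiff (Complex.I * n) a).continuous
    exact ((isClosed_le continuous_const h1).inter (isClosed_le h1 continuous_const)).inter
      (isClosed_le h2.abs continuous_const)
  have hξS : ∀ x, x ∉ S → ξ x = 0 := fun x hx => by
    by_cases h1 : |ip (Complex.I * n) (x - a)| ≤ h / 8
    · by_cases h2 : -(h / 8) ≤ ip n (x - a)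
      · have h3 : ¬ ip n (x - a) ≤ 2 * T := fun h3 => hx ⟨⟨h2, h3⟩, h1⟩
        simp only [hξ]; rw [hfr _ (not_le.1 h3), zero_mul]
      · simp only [hξ]; rw [hfl _ (not_le.1 h2), zero_mul]
    · simp only [hξ]; rw [hB2 _ (not_le.1 h1), mul_zero]
  have hnorm : ∀ x, ‖x - a‖ ≤ |ip n (x - a)| + |ip (Complex.I * n) (x - a)| := fun x => by
    apply abs_le_of_sq_le_sq' _ (by positivity) |>.2
    rw [norm_sq_ip L.norm_n, ← sq_abs (ip n (x - a)), ← sq_abs (ip (Complex.I * n) (x - a))]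
    nlinarith [mul_nonneg (abs_nonneg (ip n (x - a))) (abs_nonneg (ip (Complex.I * n) (x - a)))]
  have hS10 : ∀ x ∈ S, ‖x - b‖ < r0 / 10 := fun x hx => by
    have h1 := hnorm x
    have h2 : |ip n (x - a)| ≤ 2 * T := abs_le.2 ⟨by linarith [hx.1.1], hx.1.2⟩
    have h3 := hx.2
    have h4 : ‖x - b‖ ≤ ‖x - a‖ + ‖a - b‖ := norm_sub_le_norm_sub_add_norm_sub _ _ _
    linarith
  have hSφ : ∀ x ∈ S, x ∈ Ω → h ^ 2 + ip n (x - a) ^ 2 ≤ 4 * φ x ^ 2 := fun x hx hxΩ => by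
    have h1 := hnorm x
    have h3 := hx.2
    have h4 := abs_le.1 (L.lip x hxΩ (by have := hS10 x hx; linarith) a ha (by linarith))
    have h5 : h + ip n (x - a) - (|ip n (x - a)| + h / 8) / 100 ≤ φ x := by linarith
    have h6 := hx.1.1
    set t := ip n (x - a)
    rcases le_total 0 t with ht | ht
    · rw [abs_of_nonneg ht] at h5
      have h7 : (h + t) / 2 ≤ φ x := by linarith
      have h8 : ((h + t) / 2) ^ 2 ≤ φ x ^ 2 := by gcongr
      nlinarith
    · rw [abs_of_nonpos ht] at h5
      have h7 : 4 * h / 5 ≤ φ x := by linarith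
      have h8 : (4 * h / 5) ^ 2 ≤ φ x ^ 2 := by gcongr
      nlinarith
  have hsinkS : sink a n s0 h ⊆ S := fun x hx => by
    have h1 := abs_le.1 hx.1
    have h2 := hx.2
    exact ⟨⟨by linarith, by linarith⟩, by linarith⟩
  have hsinkΩ : sink a n s0 h ⊆ Ω :=
    (sink_sub L.norm_n hs0 (by linarith) hφa.le (by linarith)).trans hsΩ
  have hsinkK : IsCompact (sink a n s0 h) :=
    (isCompact_closedBall _ _).of_isClosed_subset (sink_closed _ _ _ _)
      (sink_sub L.norm_n hs0 (b := b) (by linarith) hφa.le (by linarith))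
  set W : ℂ → ℝ := fun x => ‖u x‖ ^ 2 / φ x ^ 2 with hW
  have hW0 : ∀ x, 0 ≤ W x := fun x => by simp only [hW]; positivity
  have hWc : ∀ K ⊆ Ω, (∀ x ∈ K, φ x ≠ 0) → ContinuousOn W K := fun K hK h0 =>
    (hu.1.continuous.norm.pow 2).continuousOn.div ((H.smooth.continuousOn.mono hK).pow 2)
      (fun x hx => pow_ne_zero _ (h0 x hx))
  have hBall : ∀ x ∈ Metric.closedBall a (h / 4), x ∈ Ω ∧ ‖x - b‖ < r0 / 10 := fun x hx => by
    have hx' : ‖x - a‖ ≤ h / 4 := by simpa [dist_eq_norm] using hx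
    refine ⟨(L.near ha hab4 hx').1, ?_⟩
    have h4 : ‖x - b‖ ≤ ‖x - a‖ + ‖a - b‖ := norm_sub_le_norm_sub_add_norm_sub _ _ _
    linarith
  have i1 : IntegrableOn W (sink a n s0 h) :=
    (hWc _ hsinkΩ (fun x hx => (L.pos x (hsinkΩ hx) (by
      have := hS10 x (hsinkS hx); linarith)).ne')).integrableOn_compact hsinkK
  have i2 : IntegrableOn W (Metric.closedBall a (h / 4)) :=
    (hWc _ (fun x hx => (hBall x hx).1) (fun x hx => (L.pos x (hBall x hx).1 (by
      have := (hBall x hx).2; linarith)).ne')).integrableOn_compact (isCompact_closedBall _ _)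
  have hηφ : ∀ x ∈ Ω, x ∈ tsupport η → φ x ≠ 0 := fun x hx hxs =>
    (L.pos x hx (by simpa [dist_eq_norm] using hηb hxs)).ne'
  have i3 : Integrable (fun x => η x * egs φ (abPot a) u x) :=
    H.egs_int hu' hA hη.continuous.continuousOn hηφ
  set Y := ∫ x, η x * egs φ (abPot a) u x with hY
  have hbm : MeasurableSet (Metric.closedBall a (h / 4)) := Metric.isClosed_closedBall.measurableSet
  have hsm : MeasurableSet (sink a n s0 h) := (sink_closed _ _ _ _).measurableSet
  have ballE : ∫ x in Metric.closedBall a (h / 4), W x ≤ π ^ 2 * Y := by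
    refine (H.ab_ball L ha hab4 hu).trans ?_
    gcongr ?_ * ?_
    rw [← integral_indicator hbm]
    have iB : IntegrableOn (fun x => η x * egs φ (abPot a) u x) (Metric.closedBall a (h / 4)) := i3.integrableOn
    have iB' : IntegrableOn (fun x => egs φ (abPot a) u x) (Metric.closedBall a (h / 4)) := by
      refine iB.congr_fun ?_ hbm
      intro x hx
      simp only [hη1 x (hBall x hx).2.le, one_mul]
    refine integral_mono (iB'.integrable_indicator hbm) i3 fun x => ?_
    by_cases hx : x ∈ Metric.closedBall a (h / 4)
    · rw [indicator_of_mem hx]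
      simp [hη1 x (hBall x hx).2.le]
    · rw [indicator_of_notMem hx]
      exact mul_nonneg (hη0 x) (egs_nonneg _ _ _ _)
  have key := H.dir_ineq L (A := abPot a) hu' (s := fun x => ξ x / φ x) (S := S) hSc
    (fun x hx => by have := hS10 x hx; simp only [Metric.mem_ball, dist_eq_norm]; linarith)
    ((hξs.of_le (by simp)).contDiffOn.div ((H.smooth.mono inter_subset_left).of_le (by simp))
      (fun x hx => (L.pos x hx.1 (by simpa [dist_eq_norm] using hx.2)).ne'))
    (fun x hx => by simp [hξS x hx])
    (fun x hx => by
      by_cases hxS : x ∈ S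
      · exact div_nonneg (hξ0 x) (L.pos x hx (by have := hS10 x hxS; linarith)).le
      · simp [hξS x hxS])
    (v := -n) (by simp [L.norm_n])
    (Φ := fun x => 2 / 5 / T * (sink a n s0 h).indicator W x
      - C1 / h * (Metric.closedBall a (h / 4)).indicator W x
      - 4 * C1 / h * (η x * egs φ (abPot a) u x))
    ((((i1.integrable_indicator hsm).const_mul _).sub ((i2.integrable_indicator hbm).const_mul _)).sub
      (i3.const_mul _)) ?_ ?_
  · have j : ∫ x, (2 / 5 / T * (sink a n s0 h).indicator W x
      - C1 / h * (Metric.closedBall a (h / 4)).indicator W x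
      - 4 * C1 / h * (η x * egs φ (abPot a) u x)) = 2 / 5 / T * (∫ x in sink a n s0 h, W x)
        - C1 / h * (∫ x in Metric.closedBall a (h / 4), W x) - 4 * C1 / h * Y := by
      rw [integral_sub (f := fun x => 2 / 5 / T * (sink a n s0 h).indicator W x
          - C1 / h * (Metric.closedBall a (h / 4)).indicator W x)
          (g := fun x => 4 * C1 / h * (η x * egs φ (abPot a) u x))
          (((i1.integrable_indicator hsm).const_mul _).sub ((i2.integrable_indicator hbm).const_mul _))
          (i3.const_mul _),
        integral_sub (f := fun x => 2 / 5 / T * (sink a n s0 h).indicator W x)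
          (g := fun x => C1 / h * (Metric.closedBall a (h / 4)).indicator W x)
          ((i1.integrable_indicator hsm).const_mul _) ((i2.integrable_indicator hbm).const_mul _),
        integral_const_mul, integral_const_mul, integral_const_mul, integral_indicator hsm,
        integral_indicator hbm]
    rw [j] at key
    have hT0 : 0 < T := by simp only [hT]; positivity
    have k2 : 2 / 5 / T * (∫ x in sink a n s0 h, W x) ≤ C1 / h * (π ^ 2 * Y) + 4 * C1 / h * Y := by
      have := mul_le_mul_of_nonneg_left ballE (show 0 ≤ C1 / h by positivity)
      linarith
    have k3 := mul_le_mul_of_nonneg_left k2 (show 0 ≤ h * T * (5 / 2) by positivity)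
    have e1 : h * T * (5 / 2) * (2 / 5 / T * (∫ x in sink a n s0 h, W x)) = h * ∫ x in sink a n s0 h, W x := by
      field_simp
    have e2 : h * T * (5 / 2) * (C1 / h * (π ^ 2 * Y) + 4 * C1 / h * Y) =
      (C1 * π ^ 2 + 4 * C1) * T * (5 / 2) * Y := by field_simp
    rw [e1, e2] at k3
    exact k3
  · intro x hx hxb hxS
    have hφx := L.pos x hx hxb
    have hφd := H.diffAt hx
    have e1 : HasFDerivAt (fun x => ξ x * (φ x)⁻¹) _ x :=
      ((hξs.differentiable (by simp) x).hasFDerivAt.mul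
        ((hasDerivAt_inv hφx.ne').comp_hasFDerivAt x hφd.hasFDerivAt))
    have e2 : fderiv ℝ (fun x => ξ x / φ x) x (-n) =
        - (fderiv ℝ ξ x n / φ x - ξ x * fderiv ℝ φ x n / φ x ^ 2) := by
      simp only [div_eq_mul_inv]
      rw [e1.fderiv]
      simp
      ring
    have hηxone := hη1 x (hS10 x hxS).le
    set t := ip n (x - a)
    set β := B (ip (Complex.I * n) (x - a)) with hβ
    have hβ0 := hB0 (ip (Complex.I * n) (x - a))
    set w := ‖u x‖ / φ x
    set e := √(egs φ (abPot a) u x) / φ x with he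
    have hE := egs_nonneg φ (abPot a) u x
    have hRHS : fderiv ℝ (fun x => ξ x / φ x) x (-n) * ‖u x‖ ^ 2 / φ x
        + ξ x / φ x * fderiv ℝ φ x (-n) * ‖u x‖ ^ 2 / φ x ^ 2
        - 2 * (ξ x / φ x / φ x) * (‖u x‖ * √(egs φ (abPot a) u x))
        = β * (- f' t * w ^ 2 - 2 * f t * w * e) := by
      rw [e2, hξn, map_neg]
      simp only [w, e]
      have : ξ x = f t * β := rfl
      rw [this]
      field_simp
      ring
    rw [hRHS]
    have hWx : W x = w ^ 2 := by simp only [hW, w]; rw [div_pow]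
    have hEe : C1 * (h ^ 2 + t ^ 2) / h * e ^ 2 ≤ 4 * C1 / h * egs φ (abPot a) u x := by
      have h1 : (h ^ 2 + t ^ 2) * e ^ 2 ≤ 4 * egs φ (abPot a) u x := by
        rw [he, div_pow, Real.sq_sqrt hE, ← mul_div_assoc, div_le_iff₀ (by positivity)]
        nlinarith [hSφ x hxS hx]
      calc C1 * (h ^ 2 + t ^ 2) / h * e ^ 2 = C1 / h * ((h ^ 2 + t ^ 2) * e ^ 2) := by ring
        _ ≤ C1 / h * (4 * egs φ (abPot a) u x) := by gcongr
        _ = _ := by ring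
    have hEe0 : 0 ≤ C1 * (h ^ 2 + t ^ 2) / h * e ^ 2 := by positivity
    rw [hηxone, one_mul]
    have hWx0 : 0 ≤ w ^ 2 := sq_nonneg w
    have hind0 : 0 ≤ C1 / h * (Metric.closedBall a (h / 4)).indicator W x :=
      mul_nonneg (by positivity) (indicator_nonneg (fun y _ => hW0 y) x)
    by_cases hxs : x ∈ sink a n s0 h
    · rw [indicator_of_mem hxs, hWx]
      have h1 := abs_le.1 hxs.1
      have hβ1 : β = 1 := hB1 _ hxs.2
      have := hp3 t w e (by linarith) (by linarith)
      rw [hβ1, one_mul]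
      linarith
    · rw [indicator_of_notMem hxs, mul_zero]
      by_cases ht : h / 8 ≤ t
      · have h2 := hp2 t w e ht hxS.1.2
        have h3 := mul_le_mul_of_nonneg_left h2 hβ0.1
        have h4 : β * (C1 * (h ^ 2 + t ^ 2) / h * e ^ 2) ≤ 1 * (C1 * (h ^ 2 + t ^ 2) / h * e ^ 2) := by
          gcongr; exact hβ0.2
        rw [mul_neg] at h3
        linarith
      · push Not at ht
        have hball : x ∈ Metric.closedBall a (h / 4) := by
          rw [Metric.mem_closedBall, dist_eq_norm]
          have h2 : |t| ≤ h / 8 := abs_le.2 ⟨hxS.1.1, ht.le⟩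
          have h3 := hxS.2
          linarith [hnorm x]
        rw [indicator_of_mem hball, hWx]
        have h2 := hp1 t w e hxS.1.1 hxS.1.2
        have h3 := mul_le_mul_of_nonneg_left h2 hβ0.1
        have h5 : 0 ≤ C1 / h * w ^ 2 := by positivity
        have h4 : β * (C1 / h * w ^ 2 + C1 * (h ^ 2 + t ^ 2) / h * e ^ 2)
          ≤ 1 * (C1 / h * w ^ 2 + C1 * (h ^ 2 + t ^ 2) / h * e ^ 2) := by
          gcongr; exact hβ0.2
        have h6 : β * (-(C1 / h) * w ^ 2 - C1 * (h ^ 2 + t ^ 2) / h * e ^ 2)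
          = - (β * (C1 / h * w ^ 2 + C1 * (h ^ 2 + t ^ 2) / h * e ^ 2)) := by ring
        rw [h6] at h3
        linarith
  · intro x hx
    have h1 : (sink a n s0 h).indicator W x = 0 := by
      by_cases h : x ∈ S
      · have : x ∉ tsupport u := fun h' => hx ⟨h, h'⟩
        have : W x = 0 := by simp [hW, (off_supp this).1]
        simp [indicator, this]
      · exact indicator_of_notMem (fun h' => h (hsinkS h')) _
    have hind0 : 0 ≤ C1 / h * (Metric.closedBall a (h / 4)).indicator W x :=
      mul_nonneg (by positivity) (indicator_nonneg (fun y _ => hW0 y) x)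
    have h3 : 0 ≤ 4 * C1 / h * (η x * egs φ (abPot a) u x) :=
      mul_nonneg (by positivity) (mul_nonneg (hη0 x) (egs_nonneg _ _ _ _))
    simp only [h1]
    linarith
end

/-! ### The gauge -/

/-- A continuous branch of `√(x - a)` is smooth. -/
theorem sqrt_branch_smooth {U : Set ℂ} (hU : IsOpen U) {a : ℂ} (ha : a ∉ U) {R : ℂ → ℂ}
    (hR : ContinuousOn R U) (hR2 : ∀ x ∈ U, R x ^ 2 = x - a) : ContDiffOn ℝ (⊤ : ℕ∞) R U := by
  intro x0 hx0
  refine ContDiffAt.contDiffWithinAt ?_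
  have hxa : x0 - a ≠ 0 := fun h => ha (by rw [← sub_eq_zero.1 h]; exact hx0)
  have hc : R x0 ≠ 0 := by
    intro h
    have := hR2 x0 hx0
    rw [h] at this
    exact hxa (by rw [← this]; simp)
  set T : ℂ → ℂ := fun x => R x0 * (1 + (x - x0) / (x0 - a)) ^ (1 / 2 : ℂ) with hT
  have hTan : AnalyticAt ℂ T x0 := by
    refine analyticAt_const.mul (AnalyticAt.cpow (by fun_prop (disch := assumption)) analyticAt_const ?_)
    simp
  have hTs : ContDiffAt ℝ (⊤ : ℕ∞) T x0 := hTan.contDiffAt.restrict_scalars ℝ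
  have hT2 : ∀ x, T x ^ 2 = R x0 ^ 2 * (1 + (x - x0) / (x0 - a)) := by
    intro x
    rw [hT]
    simp only
    rw [mul_pow, ← Complex.cpow_mul_nat]
    norm_num
  have hT0 : T x0 = R x0 := by simp [hT]
  have hcont : ContinuousAt (fun x => R x + T x) x0 :=
    (hR.continuousAt (hU.mem_nhds hx0)).add hTs.continuousAt
  have hne : ∀ᶠ x in nhds x0, R x + T x ≠ 0 := by
    refine hcont.eventually_ne ?_
    rw [hT0, ← two_mul]
    exact mul_ne_zero two_ne_zero hc
  refine hTs.congr_of_eventuallyEq ?_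
  filter_upwards [hne, hU.mem_nhds hx0] with x hx hxU
  have h1 : (R x - T x) * (R x + T x) = 0 := by
    have : (R x - T x) * (R x + T x) = R x ^ 2 - T x ^ 2 := by ring
    rw [this, hT2, hR2 x hxU, hR2 x0 hx0]
    field_simp
    ring
  rcases mul_eq_zero.1 h1 with h | h
  · exact sub_eq_zero.1 h
  · exact absurd h hx

/-- Off the segment with ends `a` and `q`, where `q` is the second point of the lemma, the quotient
`(x - a)/(x - q)` avoids the nonpositive real axis, so its principal square root is continuous there. -/
theorem slit_of_not_segment {a a' x : ℂ} (hx : x ∉ segment ℝ a a') :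
    (x - a) / (x - a') ∈ Complex.slitPlane := by
  by_contra h
  have hxa' : x - a' ≠ 0 := fun h => hx (by rw [sub_eq_zero.1 h]; exact right_mem_segment _ _ _)
  rw [Complex.mem_slitPlane_iff] at h
  push Not at h
  obtain ⟨h1, h2⟩ := h
  set z := (x - a) / (x - a') with hz
  set t : ℝ := -z.re with ht
  have hzt : z = -(t : ℂ) := by
    apply Complex.ext <;> simp [ht, h2]
  have ht0 : 0 ≤ t := by simp only [ht]; linarith
  apply hx
  have e : x - a = -(t : ℂ) * (x - a') := by rw [← hzt, hz]; field_simp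
  refine ⟨1 / (1 + t), t / (1 + t), by positivity, by positivity, by field_simp, ?_⟩
  have ht1 : (1 + t : ℂ) ≠ 0 := by
    have : (1 + t : ℝ) ≠ 0 := by positivity
    exact_mod_cast this
  simp only [Complex.real_smul]
  push_cast
  field_simp
  linear_combination -e

/-- The gauge `J = χ2 |R|/R`, where `R` is a branch of `√(x - a)` on `Ω` outside the ball of radius `ρ/8`
about `o`. With `q` the second given point, the branch is `√((x - a)/(x - q))` times `√(x - q)`;
the second root exists because `Ω` is simply connected and `q ∉ Ω`. -/
theorem exists_gauge {Ω : Set ℂ} (hΩ : IsOpen Ω) (hs : IsSimplyConnected Ω) {a a' o : ℂ} {ρ : ℝ}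
    (hρ : 0 < ρ) (ha' : a' ∉ Ω) (h1 : ‖a - o‖ ≤ ρ / 8) (h2 : ‖a' - o‖ ≤ ρ / 8)
    {χ2 : ℂ → ℝ} (hχ : ContDiff ℝ (⊤ : ℕ∞) χ2) (hr : ∀ x, 0 ≤ χ2 x ∧ χ2 x ≤ 1)
    (hfar : ∀ x, ρ / 4 ≤ ‖x - o‖ → χ2 x = 1) (hnear : ∀ x, ‖x - o‖ ≤ ρ / 6 → χ2 x = 0) :
    ∃ J : ℂ → ℂ, ContDiffOn ℝ (⊤ : ℕ∞) J Ω ∧ (∀ x ∈ Ω, ‖J x‖ ≤ 1) ∧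
      ∀ x ∈ Ω, ρ / 4 < ‖x - o‖ → ‖J x‖ = 1 ∧
        ∀ v, fderiv ℝ J x v = -Complex.I *
          (((abPot a x).re * v.re + (abPot a x).im * v.im : ℝ) : ℂ) * J x := by
  obtain ⟨S2, hS2c, hS2⟩ := Complex.exists_continuousOn_pow_eq hs hΩ
    (g := fun x => x - a') (by fun_prop) (by
      rintro ⟨x, hx, h⟩
      exact ha' (by rw [← sub_eq_zero.1 h]; exact hx)) (n := 2) (by norm_num)
  set U : Set ℂ := Ω ∩ {x | ρ / 8 < ‖x - o‖} with hU
  have hUo : IsOpen U := hΩ.inter (isOpen_lt continuous_const (by fun_prop))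
  have hseg : ∀ x ∈ U, x ∉ segment ℝ a a' := by
    rintro x ⟨-, hx⟩ hxs
    have := (convex_closedBall o (ρ / 8)).segment_subset (x := a) (y := a')
      (by rw [mem_closedBall_iff_norm]; exact h1) (by rw [mem_closedBall_iff_norm]; exact h2) hxs
    rw [mem_closedBall_iff_norm] at this
    exact absurd hx (not_lt.2 this)
  have haU : a ∉ U := fun h => hseg a h (left_mem_segment _ _ _)
  have hxa' : ∀ x ∈ Ω, x - a' ≠ 0 := fun x hx h => ha' (by rw [← sub_eq_zero.1 h]; exact hx)
  set R : ℂ → ℂ := fun x => ((x - a) / (x - a')) ^ (1 / 2 : ℂ) * S2 x with hR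
  have hRc : ContinuousOn R U := by
    refine ContinuousOn.mul ?_ (hS2c.mono inter_subset_left)
    refine ContinuousOn.cpow ?_ continuousOn_const fun x hx => slit_of_not_segment (hseg x hx)
    exact ContinuousOn.div (by fun_prop) (by fun_prop) fun x hx => hxa' x hx.1
  have hR2 : ∀ x ∈ U, R x ^ 2 = x - a := by
    intro x hx
    have := hxa' x hx.1
    simp only [hR]
    rw [mul_pow, hS2, ← Complex.cpow_mul_nat]
    norm_num
    field_simp
  have hRs := sqrt_branch_smooth hUo haU hRc hR2
  have hR0 : ∀ x ∈ U, R x ≠ 0 := by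
    intro x hx h
    have := hR2 x hx
    rw [h] at this
    apply haU
    have e : x = a := sub_eq_zero.1 (by rw [← this]; simp)
    rw [← e]; exact hx
  set J0 : ℂ → ℂ := fun x => (‖R x‖ : ℂ) * (R x)⁻¹ with hJ0
  have hJ0s : ContDiffOn ℝ (⊤ : ℕ∞) J0 U := by
    refine ContDiffOn.mul ?_ (hRs.inv hR0)
    exact Complex.ofRealCLM.contDiff.comp_contDiffOn (hRs.norm ℝ hR0)
  have hJn : ∀ x ∈ U, ‖J0 x‖ = 1 := by
    intro x hx
    have := norm_ne_zero_iff.2 (hR0 x hx)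
    simp [hJ0, this]
  have hJ4 : ∀ x ∈ U, J0 x ^ 4 * (x - a) = (starRingEnd ℂ) (x - a) := by
    intro x hx
    have hr := hR0 x hx
    rw [← hR2 x hx]
    have e : (‖R x‖ : ℂ) ^ 2 = R x * (starRingEnd ℂ) (R x) := by
      rw [Complex.mul_conj, Complex.normSq_eq_norm_sq]; push_cast; ring
    simp only [hJ0, map_pow]
    rw [mul_pow]
    have : (‖R x‖ : ℂ) ^ 4 = (R x * (starRingEnd ℂ) (R x)) ^ 2 := by rw [← e]; ring
    rw [this]
    field_simp
  refine ⟨fun x => (χ2 x : ℂ) * J0 x, ?_, ?_, ?_⟩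
  · intro x hx
    refine ContDiffAt.contDiffWithinAt ?_
    rcases lt_or_ge (ρ / 8) ‖x - o‖ with h | h
    · refine ContDiffAt.mul ?_ (hJ0s.contDiffAt (hUo.mem_nhds ⟨hx, h⟩))
      exact (Complex.ofRealCLM.contDiff.comp hχ).contDiffAt
    · refine (contDiffAt_const (c := (0 : ℂ))).congr_of_eventuallyEq ?_
      have : ∀ᶠ y in nhds x, ‖y - o‖ < ρ / 6 := by
        have hc : ContinuousAt (fun y : ℂ => ‖y - o‖) x := by fun_prop
        exact hc.eventually (gt_mem_nhds (by linarith))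
      filter_upwards [this] with y hy
      simp [hnear y hy.le]
  · intro x hx
    rcases lt_or_ge (ρ / 8) ‖x - o‖ with h | h
    · rw [norm_mul, hJn x ⟨hx, h⟩, mul_one, Complex.norm_real, Real.norm_eq_abs, abs_of_nonneg (hr x).1]
      exact (hr x).2
    · simp [hnear x (by linarith)]
  · intro x hx hxo
    have hxU : x ∈ U := ⟨hx, by show ρ / 8 < _; linarith⟩
    have hev : (fun x => (χ2 x : ℂ) * J0 x) =ᶠ[nhds x] J0 := by
      have : ∀ᶠ y in nhds x, ρ / 4 < ‖y - o‖ := by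
        have hc : ContinuousAt (fun y : ℂ => ‖y - o‖) x := by fun_prop
        exact hc.eventually (lt_mem_nhds hxo)
      filter_upwards [this] with y hy
      simp [hfar y hy.le]
    have e0 : (χ2 x : ℂ) * J0 x = J0 x := hev.eq_of_nhds
    simp only [e0, hev.fderiv_eq]
    refine ⟨hJn x hxU, fun v => ?_⟩
    have hd : HasFDerivAt J0 (fderiv ℝ J0 x) x :=
      ((hJ0s.contDiffAt (hUo.mem_nhds hxU)).differentiableAt (by simp)).hasFDerivAt
    set D := fderiv ℝ J0 x with hD
    have hid : HasFDerivAt (fun y : ℂ => y - a) (ContinuousLinearMap.id ℝ ℂ) x :=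
      (hasFDerivAt_id x).sub_const a
    have hl := (hd.pow 4).mul hid
    have hr' : HasFDerivAt (fun y : ℂ => (starRingEnd ℂ) (y - a))
        ((Complex.conjCLE : ℂ →L[ℝ] ℂ).comp (ContinuousLinearMap.id ℝ ℂ)) x :=
      (Complex.conjCLE : ℂ →L[ℝ] ℂ).hasFDerivAt.comp x hid
    have hee : (fun y => J0 y ^ 4 * (y - a)) =ᶠ[nhds x] fun y => (starRingEnd ℂ) (y - a) := by
      filter_upwards [hUo.mem_nhds hxU] with y hy using hJ4 y hy
    have heq := (hl.congr_of_eventuallyEq hee.symm).unique hr'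
    have hv := congrArg (fun L : ℂ →L[ℝ] ℂ => L v) heq
    simp at hv
    have hJ4x := hJ4 x hxU
    have hz : x - a ≠ 0 := fun h => haU (by rw [← sub_eq_zero.1 h]; exact hxU)
    have hJ00 : J0 x ≠ 0 := by rw [← norm_ne_zero_iff, hJn x hxU]; norm_num
    have hzc : (starRingEnd ℂ) (x - a) ≠ 0 := (map_ne_zero _).2 hz
    have hN : (‖x - a‖ : ℂ) ^ 2 = (x - a) * (starRingEnd ℂ) (x - a) := by
      rw [Complex.mul_conj, Complex.normSq_eq_norm_sq]; push_cast; ring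
    have hAv : (((abPot a x).re * v.re + (abPot a x).im * v.im : ℝ) : ℂ) * (4 * ‖x - a‖ ^ 2 : ℂ)
        = -Complex.I * ((starRingEnd ℂ) (x - a) * v - (x - a) * (starRingEnd ℂ) v) := by
      have hNr : (‖x - a‖ : ℝ) ^ 2 ≠ 0 := by positivity
      have e1 : abPot a x = ((1 / (2 * ‖x - a‖ ^ 2) : ℝ) : ℂ) * (Complex.I * (x - a)) := by
        unfold abPot; push_cast; ring
      have e2 : (abPot a x).re * v.re + (abPot a x).im * v.im =
          1 / (2 * ‖x - a‖ ^ 2) * ((x - a).re * v.im - (x - a).im * v.re) := by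
        rw [e1, Complex.re_ofReal_mul, Complex.im_ofReal_mul]
        simp
        ring
      have e3 : ((starRingEnd ℂ) (x - a) * v - (x - a) * (starRingEnd ℂ) v) =
          2 * Complex.I * (((x - a).re * v.im - (x - a).im * v.re : ℝ) : ℂ) := by
        apply Complex.ext <;> simp <;> ring
      rw [e2, e3]
      have hNc : (‖x - a‖ : ℂ) ^ 2 ≠ 0 := by exact_mod_cast hNr
      have hnc : (‖x - a‖ : ℂ) ≠ 0 := fun h => hNc (by rw [h]; simp)
      generalize (x - a).re * v.im - (x - a).im * v.re = w
      push_cast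
      field_simp
      linear_combination 4 * (w : ℂ) * Complex.I_sq
    have hNc : (4 * ‖x - a‖ ^ 2 : ℂ) ≠ 0 := by
      rw [hN]; exact mul_ne_zero (by norm_num) (mul_ne_zero hz hzc)
    apply mul_right_cancel₀ hNc
    linear_combination (4 * D v) * hN + Complex.I * J0 x * hAv + J0 x * (x - a) * hv -
      (J0 x * v + 4 * (x - a) * D v) * hJ4x -
      J0 x * ((starRingEnd ℂ) (x - a) * v - (x - a) * (starRingEnd ℂ) v) * Complex.I_sq

theorem Test.smul_smooth {Ω : Set ℂ} (hΩ : IsOpen Ω) {f u : ℂ → ℂ}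
    (hf : ContDiffOn ℝ (⊤ : ℕ∞) f Ω) (hu : Test Ω u) :
    Test Ω (fun x => f x * u x) ∧ tsupport (fun x => f x * u x) ⊆ tsupport u := by
  have hsub : tsupport (fun x => f x * u x) ⊆ tsupport u :=
    closure_mono fun x hx h => hx (by simp [h])
  refine ⟨⟨?_, hu.2.1.of_isClosed_subset (isClosed_tsupport _) hsub, hsub.trans hu.2.2⟩, hsub⟩
  rw [contDiff_iff_contDiffAt]
  intro x
  by_cases hx : x ∈ tsupport u
  · exact (hf.contDiffAt (hΩ.mem_nhds (hu.2.2 hx))).mul hu.1.contDiffAt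
  · refine (contDiffAt_const (c := (0 : ℂ))).congr_of_eventuallyEq ?_
    filter_upwards [(isClosed_tsupport u).isOpen_compl.mem_nhds hx] with y hy
    rw [image_eq_zero_of_notMem_tsupport hy, mul_zero]

/-- Where `|J| = 1` and `i∇J = A J`, multiplication by `J` exchanges the potential `A` for the zero
potential in both energy densities. -/
theorem gauge_eq {φ : ℂ → ℝ} {A J u : ℂ → ℂ} {x : ℂ} (hJ : DifferentiableAt ℝ J x)
    (hu : DifferentiableAt ℝ u x) (hJn : ‖J x‖ = 1)
    (hJd : ∀ v, fderiv ℝ J x v = -Complex.I *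
          (((A x).re * v.re + (A x).im * v.im : ℝ) : ℂ) * J x) :
    ‖J x * u x‖ = ‖u x‖ ∧ kin 0 (fun y => J y * u y) x = kin A u x ∧
      egs φ 0 (fun y => J y * u y) x = egs φ A u x := by
  have hd : ∀ v, fderiv ℝ (fun y => J y * u y) x v = J x * fderiv ℝ u x v + fderiv ℝ J x v * u x := by
    intro v
    rw [fderiv_fun_mul hJ hu]
    simp
    ring
  have h1 : Complex.I * pd1 (fun y => J y * u y) x
      = J x * (Complex.I * pd1 u x + ((A x).re : ℂ) * u x) := by
    unfold pd1; rw [hd, hJd]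
    simp
    linear_combination (-(A x).re * J x * u x : ℂ) * Complex.I_sq
  have h2 : Complex.I * pd2 (fun y => J y * u y) x
      = J x * (Complex.I * pd2 u x + ((A x).im : ℂ) * u x) := by
    unfold pd2; rw [hd, hJd]
    simp
    linear_combination (-(A x).im * J x * u x : ℂ) * Complex.I_sq
  have hn : ∀ z, ‖J x * z‖ ^ 2 = ‖z‖ ^ 2 := by intro z; rw [norm_mul, hJn, one_mul]
  refine ⟨by rw [norm_mul, hJn, one_mul], ?_, ?_⟩
  · simp only [kin, Pi.zero_apply, Complex.zero_re, Complex.zero_im, Complex.ofReal_zero, zero_mul,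
      add_zero, h1, h2, hn]
  · simp only [egs, Pi.zero_apply, Complex.zero_re, Complex.zero_im, Complex.ofReal_zero, zero_mul,
      add_zero, h1, h2]
    rw [← hn (Complex.I * pd1 u x + _ - _), ← hn (Complex.I * pd2 u x + _ - _)]
    congr 3 <;> ring

/-! ### The bundle of fixed cutoffs and product rules -/

section
variable {Ω : Set ℂ} {p : ℂ → ℝ} {lam : ℝ} {φ : ℂ → ℝ} {b n : ℂ} {r0 : ℝ}

/-- The fixed cutoffs at `b`, which do not depend on the pole: `η` localizes the ground-state
representation, and `ζ` localizes the Hardy inequality with exceptional compact set `K0`; on the ball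
of radius `r2` about `b`, which does not meet `K0`, one has `ζ = 1`. -/
structure Frame (Ω : Set ℂ) (φ : ℂ → ℝ) (b n : ℂ) (r0 : ℝ) (η ζ : ℂ → ℝ) (K0 : Set ℂ)
    (r2 M : ℝ) : Prop where
  η_smooth : ContDiff ℝ (⊤ : ℕ∞) η
  η_range : ∀ x, 0 ≤ η x ∧ η x ≤ 1
  η_one : ∀ x, ‖x - b‖ ≤ r0 / 10 → η x = 1
  η_supp : tsupport η ⊆ Metric.ball b r0
  η_mono : ∀ x ∈ Ω, d1 η x * d1 φ x + d2 η x * d2 φ x ≤ 0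
  ζ_smooth : ContDiff ℝ (⊤ : ℕ∞) ζ
  ζ_range : ∀ x, 0 ≤ ζ x ∧ ζ x ≤ 1
  ζ_supp : tsupport ζ ⊆ Metric.ball b (r0 / 10)
  K0_compact : IsCompact K0
  K0_sub : K0 ⊆ Ω
  K0_ball : K0 ⊆ Metric.ball b (r0 / 10)
  r2_pos : 0 < r2
  r2_le : r2 ≤ r0 / 10
  M_nonneg : 0 ≤ M
  K0_far : ∀ x ∈ K0, r2 ≤ ‖x - b‖
  ζ_near : ∀ x, ‖x - b‖ < r2 → ζ x = 1
  ζ_n : ∀ x, x ∉ K0 → 0 ≤ fderiv ℝ ζ x n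
  ζ_M : ∀ x, |fderiv ℝ ζ x n| ≤ M

variable {η ζ : ℂ → ℝ} {K0 : Set ℂ} {r2 M : ℝ}

theorem Frame.η_pos (L : Loc Ω φ b n r0) (Fr : Frame Ω φ b n r0 η ζ K0 r2 M) :
    ∀ x ∈ Ω, x ∈ tsupport η → 0 < φ x := fun x hx h =>
  L.pos x hx (by simpa [dist_eq_norm] using Fr.η_supp h)

theorem Frame.η_ne (L : Loc Ω φ b n r0) (Fr : Frame Ω φ b n r0 η ζ K0 r2 M) :
    ∀ x ∈ Ω, x ∈ tsupport η → φ x ≠ 0 := fun x hx h => (Fr.η_pos L x hx h).ne'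

theorem Frame.dη (Fr : Frame Ω φ b n r0 η ζ K0 r2 M) {x : ℂ} (hx : ‖x - b‖ < r0 / 10) :
    d1 η x = 0 ∧ d2 η x = 0 := by
  have hev : η =ᶠ[nhds x] fun _ => (1 : ℝ) := by
    have hc : ContinuousAt (fun y : ℂ => ‖y - b‖) x := by fun_prop
    filter_upwards [hc.eventually (gt_mem_nhds hx)] with y hy
    exact Fr.η_one y hy.le
  simp [d1, d2, hev.fderiv_eq]

/-- Near `b` the whole quadratic form is ground-state energy. -/
theorem Frame.Fdens_near (Fr : Frame Ω φ b n r0 η ζ K0 r2 M) {x : ℂ} (hx : ‖x - b‖ < r0 / 10)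
    (A u : ℂ → ℂ) : Fdens η φ lam p A u x = 0 := by
  simp [Fdens, Fr.dη hx, Fr.η_one x hx.le]

theorem norm_add_sq_le' (z w : ℂ) {ε : ℝ} (hε : 0 < ε) :
    ‖z + w‖ ^ 2 ≤ (1 + ε) * ‖z‖ ^ 2 + (1 + 1 / ε) * ‖w‖ ^ 2 := by
  have h := pow_le_pow_left₀ (norm_nonneg _) (norm_add_le z w) 2
  have h2 : 2 * (‖z‖ * ‖w‖) ≤ ε * ‖z‖ ^ 2 + 1 / ε * ‖w‖ ^ 2 := by
    have : 0 ≤ (1 / ε) * (ε * ‖z‖ - ‖w‖) ^ 2 := by positivity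
    have e : (1 / ε) * (ε * ‖z‖ - ‖w‖) ^ 2 = ε * ‖z‖ ^ 2 + 1 / ε * ‖w‖ ^ 2 - 2 * (‖z‖ * ‖w‖) := by
      field_simp; ring
    linarith
  nlinarith

theorem pd1_mul {χ : ℂ → ℝ} {u : ℂ → ℂ} {x : ℂ} (hχ : DifferentiableAt ℝ χ x)
    (hu : DifferentiableAt ℝ u x) :
    pd1 (fun y => (χ y : ℂ) * u y) x = (χ x : ℂ) * pd1 u x + (d1 χ x : ℂ) * u x := by
  have hc : DifferentiableAt ℝ (fun y => (χ y : ℂ)) x :=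
    Complex.ofRealCLM.differentiableAt.comp x hχ
  rw [← pd1_ofReal hχ]
  unfold pd1
  rw [fderiv_fun_mul hc hu]
  simp
  ring

theorem pd2_mul {χ : ℂ → ℝ} {u : ℂ → ℂ} {x : ℂ} (hχ : DifferentiableAt ℝ χ x)
    (hu : DifferentiableAt ℝ u x) :
    pd2 (fun y => (χ y : ℂ) * u y) x = (χ x : ℂ) * pd2 u x + (d2 χ x : ℂ) * u x := by
  have hc : DifferentiableAt ℝ (fun y => (χ y : ℂ)) x :=
    Complex.ofRealCLM.differentiableAt.comp x hχ
  rw [← pd2_ofReal hχ]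
  unfold pd2
  rw [fderiv_fun_mul hc hu]
  simp
  ring

/-- Product rule for the ground-state energy density under a real cutoff, with a free parameter `ε`. -/
theorem egs_mul_le {χ : ℂ → ℝ} {A u : ℂ → ℂ} {x : ℂ} (hχ : DifferentiableAt ℝ χ x)
    (hu : DifferentiableAt ℝ u x) {ε : ℝ} (hε : 0 < ε) :
    egs φ A (fun y => (χ y : ℂ) * u y) x ≤
      (1 + ε) * (χ x ^ 2 * egs φ A u x) + (1 + 1 / ε) * (gsq χ x * ‖u x‖ ^ 2) := by
  have e1 : Complex.I * pd1 (fun y => (χ y : ℂ) * u y) x + ((A x).re : ℂ) * ((χ x : ℂ) * u x)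
      - Complex.I * ((χ x : ℂ) * u x) * ((d1 φ x / φ x : ℝ) : ℂ) =
      (χ x : ℂ) * (Complex.I * pd1 u x + ((A x).re : ℂ) * u x - Complex.I * u x * ((d1 φ x / φ x : ℝ) : ℂ))
      + (d1 χ x : ℂ) * (Complex.I * u x) := by
    rw [pd1_mul hχ hu]; ring
  have e2 : Complex.I * pd2 (fun y => (χ y : ℂ) * u y) x + ((A x).im : ℂ) * ((χ x : ℂ) * u x)
      - Complex.I * ((χ x : ℂ) * u x) * ((d2 φ x / φ x : ℝ) : ℂ) =
      (χ x : ℂ) * (Complex.I * pd2 u x + ((A x).im : ℂ) * u x - Complex.I * u x * ((d2 φ x / φ x : ℝ) : ℂ))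
      + (d2 χ x : ℂ) * (Complex.I * u x) := by
    rw [pd2_mul hχ hu]; ring
  have hL : egs φ A (fun y => (χ y : ℂ) * u y) x = _ := rfl
  rw [hL]
  simp only [egs] at *
  rw [e1, e2]
  refine (add_le_add (norm_add_sq_le' _ _ hε) (norm_add_sq_le' _ _ hε)).trans (le_of_eq ?_)
  simp only [norm_mul, Complex.norm_real, Complex.norm_I, mul_pow, Real.norm_eq_abs, sq_abs, gsq]
  ring

theorem kin_mul_one {χ : ℂ → ℝ} {A u : ℂ → ℂ} {x : ℂ} (hχ : DifferentiableAt ℝ χ x)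
    (hu : DifferentiableAt ℝ u x) (h1 : χ x = 1) (hd : fderiv ℝ χ x = 0) :
    kin A (fun y => (χ y : ℂ) * u y) x = kin A u x := by
  have e1 : d1 χ x = 0 := by simp [d1, hd]
  have e2 : d2 χ x = 0 := by simp [d2, hd]
  simp only [kin, pd1_mul hχ hu, pd2_mul hχ hu, h1, e1, e2]
  simp

end

/-! ### Estimates for cut-off functions -/

section
variable {Ω : Set ℂ} {p : ℂ → ℝ} {lam : ℝ} {φ : ℂ → ℝ} {b n : ℂ} {r0 : ℝ}
variable {η ζ : ℂ → ℝ} {K0 : Set ℂ} {r2 M : ℝ}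
variable {ε1 ρ : ℝ} {o : ℂ} {χ σ χ2 : ℂ → ℝ}

/-- The ground-state energy weighted by `η σ`. -/
def Zs (η σ φ : ℂ → ℝ) (A u : ℂ → ℂ) : ℝ := ∫ x, η x * σ x * egs φ A u x

/-- The quadratic form in its ground-state representation, with the additional weight `σ` in the
ground-state energy. For `σ = 1` it is the full form. -/
def Qo (η σ φ : ℂ → ℝ) (lam : ℝ) (p : ℂ → ℝ) (A u : ℂ → ℂ) : ℝ :=
  (∫ x, Fdens η φ lam p A u x) + Zs η σ φ A u

theorem Cut.χ_diff (H : Eig Ω p lam φ) (Ct : Cut Ω φ b n r0 r2 ε1 ρ o χ σ χ2) {x : ℂ} (hx : x ∈ Ω) :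
    DifferentiableAt ℝ χ x :=
  (Ct.χ_smooth.contDiffAt (H.isOpen.mem_nhds hx)).differentiableAt (by simp)

theorem Cut.testχ (H : Eig Ω p lam φ) (Ct : Cut Ω φ b n r0 r2 ε1 ρ o χ σ χ2) {ψ : ℂ → ℂ}
    (hψ : Test Ω ψ) : Test Ω (fun x => (χ x : ℂ) * ψ x) ∧
      tsupport (fun x => (χ x : ℂ) * ψ x) ⊆ tsupport ψ :=
  Test.smul_smooth H.isOpen (Complex.ofRealCLM.contDiff.comp_contDiffOn Ct.χ_smooth) hψ

/-- The cutoff `χ` is constant wherever `Fdens` may be nonzero. -/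
theorem Cut.Fdens_cut (H : Eig Ω p lam φ) (Fr : Frame Ω φ b n r0 η ζ K0 r2 M)
    (Ct : Cut Ω φ b n r0 r2 ε1 ρ o χ σ χ2) {ψ : ℂ → ℂ}
    (hψ : Test Ω ψ) (x : ℂ) :
    Fdens η φ lam p 0 (fun x => (χ x : ℂ) * ψ x) x = Fdens η φ lam p 0 ψ x := by
  by_cases hx : x ∈ tsupport ψ
  · have hxΩ := hψ.2.2 hx
    rcases lt_or_ge ‖x - b‖ r2 with h | h
    · rw [Fr.Fdens_near (h.trans_le Fr.r2_le), Fr.Fdens_near (h.trans_le Fr.r2_le)]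
    · obtain ⟨h1, h2⟩ := Ct.χ_far x hxΩ h
      simp only [Fdens, kin_mul_one (Ct.χ_diff H hxΩ) (hψ.diff x) h1 h2, h1]
      simp
  · have hx' := fun h => hx ((Ct.testχ H hψ).2 h)
    simp only [Fdens, kin_off hx, kin_off hx', (off_supp hx).1]
    simp

/-- The commutator term has the good sign, so only the term `-lam p|u|²` bounds `Fdens` from below. -/
theorem Cut.Fdens_ge (H : Eig Ω p lam φ) (L : Loc Ω φ b n r0) (Fr : Frame Ω φ b n r0 η ζ K0 r2 M)
    (Ct : Cut Ω φ b n r0 r2 ε1 ρ o χ σ χ2) {ψ : ℂ → ℂ} (hψ : Test Ω ψ) :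
    -lam * (∫ x, p x * ‖(χ x : ℂ) * ψ x‖ ^ 2) ≤ ∫ x, Fdens η φ lam p 0 ψ x := by
  rw [← integral_const_mul]
  refine integral_mono (((Ct.testχ H hψ).1.m_int H.pCΩ).const_mul _)
    (H.Fdens_int Fr.η_smooth (Fr.η_ne L) hψ continuousOn_const) fun x => ?_
  simp only
  by_cases hx : x ∈ tsupport ψ
  · have hxΩ := hψ.2.2 hx
    have hl := H.lam_nonneg
    have hpp := (H.ppos x hxΩ).le
    rcases lt_or_ge ‖x - b‖ r2 with h | h
    · rw [Fr.Fdens_near (h.trans_le Fr.r2_le)]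
      have : 0 ≤ lam * (p x * ‖(χ x : ℂ) * ψ x‖ ^ 2) := by positivity
      linarith
    · obtain ⟨h1, h2⟩ := Ct.χ_far x hxΩ h
      have hη := Fr.η_range x
      have hk := kin_nonneg 0 ψ x
      have hB : (d1 η x * d1 φ x + d2 η x * d2 φ x) * ‖ψ x‖ ^ 2 / φ x ≤ 0 := by
        by_cases hxη : x ∈ tsupport η
        · exact div_nonpos_of_nonpos_of_nonneg
            (mul_nonpos_of_nonpos_of_nonneg (Fr.η_mono x hxΩ) (by positivity)) (Fr.η_pos L x hxΩ hxη).le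
        · have := d_off hxη
          simp [this.2]
      have h3 : 0 ≤ lam * (p x * ‖ψ x‖ ^ 2) := by positivity
      rw [h1]
      unfold Fdens
      simp only [Complex.ofReal_one, one_mul]
      nlinarith [mul_nonneg (sub_nonneg.2 hη.2) hk, mul_nonneg hη.1 h3]
  · have hx' := fun h => hx ((Ct.testχ H hψ).2 h)
    simp only [Fdens, kin_off hx, (off_supp hx).1]
    simp

theorem Cut.K0_le (H : Eig Ω p lam φ) (Fr : Frame Ω φ b n r0 η ζ K0 r2 M)
    (Ct : Cut Ω φ b n r0 r2 ε1 ρ o χ σ χ2) {ψ : ℂ → ℂ} (hψ : Test Ω ψ) :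
    ∫ x in K0, p x * ‖ψ x‖ ^ 2 ≤ ∫ x, p x * ‖(χ x : ℂ) * ψ x‖ ^ 2 := by
  have hT := Ct.testχ H hψ
  have hi := hT.1.m_int H.pCΩ
  have e : ∫ x in K0, p x * ‖ψ x‖ ^ 2 = ∫ x in K0, p x * ‖(χ x : ℂ) * ψ x‖ ^ 2 := by
    refine setIntegral_congr_fun Fr.K0_compact.measurableSet fun x hx => ?_
    simp [(Ct.χ_far x (Fr.K0_sub hx) (Fr.K0_far x hx)).1]
  rw [e]
  refine setIntegral_le_integral hi (ae_of_all _ fun x => ?_)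
  by_cases hx : x ∈ Ω
  · have := (H.ppos x hx).le
    show 0 ≤ p x * _
    positivity
  · have : ψ x = 0 := image_eq_zero_of_notMem_tsupport fun h => hx (hψ.2.2 h)
    simp [this]

theorem Frame.Zint (H : Eig Ω p lam φ) (L : Loc Ω φ b n r0) (Fr : Frame Ω φ b n r0 η ζ K0 r2 M)
    {σ : ℂ → ℝ} (hσ : Continuous σ) {u A : ℂ → ℂ} (hu : Test Ω u) (hA : ContinuousOn A (tsupport u)) :
    Integrable (fun x => η x * σ x * egs φ A u x) := by
  refine H.egs_int hu hA (s := fun x => η x * σ x)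
    (Fr.η_smooth.continuous.mul hσ).continuousOn fun x hx h => Fr.η_ne L x hx ?_
  exact (tsupport_mul_subset_left (f := η) (g := σ)) h

/-- The Hardy inequality with weight `σ ζ`, for any `σ` that increases in the normal direction. -/
theorem Frame.hardyσ (H : Eig Ω p lam φ) (L : Loc Ω φ b n r0) (Fr : Frame Ω φ b n r0 η ζ K0 r2 M) :
    ∃ C, 0 ≤ C ∧ ∀ (u A : ℂ → ℂ) (σ : ℂ → ℝ), Test Ω u → ContinuousOn A (tsupport u) →
      ContDiff ℝ (⊤ : ℕ∞) σ → (∀ x, 0 ≤ σ x ∧ σ x ≤ 1) →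
      (∀ x ∈ Ω, ‖x - b‖ < r0 → 0 ≤ fderiv ℝ σ x n) →
      Integrable (fun x => σ x * ζ x / φ x ^ 2 * ‖u x‖ ^ 2) ∧
      ∫ x, σ x * ζ x / φ x ^ 2 * ‖u x‖ ^ 2 ≤ C * (∫ x in K0, p x * ‖u x‖ ^ 2)
        + 16 * ∫ x, η x * σ x * egs φ A u x := by
  have hr0 := L.r0_pos
  obtain ⟨C, hC, hh⟩ := H.hardy L Fr.K0_compact Fr.K0_sub
    (Fr.K0_ball.trans (Metric.ball_subset_ball (by linarith))) Fr.M_nonneg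
  refine ⟨C, hC, fun u A σ hu hA hσ hσr hσn => ?_⟩
  have hfd : ∀ x, fderiv ℝ (fun y => σ y * ζ y) x n = σ x * fderiv ℝ ζ x n + ζ x * fderiv ℝ σ x n := by
    intro x
    rw [fderiv_fun_mul (hσ.differentiable (by simp) x) (Fr.ζ_smooth.differentiable (by simp) x)]
    simp
  have hsub : tsupport (fun y => σ y * ζ y) ⊆ tsupport ζ :=
    closure_mono fun x hx h => hx (by simp [h])
  have hball : tsupport (fun y => σ y * ζ y) ⊆ Metric.ball b r0 :=
    hsub.trans (Fr.ζ_supp.trans (Metric.ball_subset_ball (by linarith)))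
  obtain ⟨h1, h2⟩ := hh u A (fun y => σ y * ζ y) hu hA hball
    ((hσ.mul Fr.ζ_smooth).of_le (by simp)).contDiffOn
    (fun x _ => mul_nonneg (hσr x).1 (Fr.ζ_range x).1)
    (fun x hx hxr hxK => by
      rw [hfd]
      exact add_nonneg (mul_nonneg (hσr x).1 (Fr.ζ_n x hxK)) (mul_nonneg (Fr.ζ_range x).1 (hσn x hx hxr)))
    (fun x hxK => by
      rw [hfd]
      have hxr : ‖x - b‖ < r0 := by
        have := Fr.K0_ball hxK
        rw [mem_ball_iff_norm] at this
        linarith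
      have h3 := mul_nonneg (Fr.ζ_range x).1 (hσn x (Fr.K0_sub hxK) hxr)
      have h4 := (abs_le.1 (Fr.ζ_M x)).1
      have h5 : -M ≤ σ x * fderiv ℝ ζ x n := by
        have := hσr x
        have hM := Fr.M_nonneg
        nlinarith
      linarith)
  refine ⟨h1, h2.trans ?_⟩
  refine add_le_add le_rfl (mul_le_mul_of_nonneg_left ?_ (by norm_num))
  have hne : ∀ x ∈ Ω, x ∈ tsupport (fun y => σ y * ζ y) → φ x ≠ 0 := fun x hx h =>
    (L.pos x hx (by simpa [dist_eq_norm] using hball h)).ne'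
  refine integral_mono
    (H.egs_int hu hA (s := fun x => σ x * ζ x)
      (hσ.continuous.mul Fr.ζ_smooth.continuous).continuousOn hne)
    (Fr.Zint H L hσ.continuous hu hA) fun x => ?_
  simp only
  refine mul_le_mul_of_nonneg_right ?_ (egs_nonneg φ A u x)
  rw [mul_comm (η x)]
  refine mul_le_mul_of_nonneg_left ?_ (hσr x).1
  by_cases hx : x ∈ tsupport ζ
  · have := Fr.ζ_supp hx
    rw [mem_ball_iff_norm] at this
    rw [Fr.η_one x this.le]
    exact (Fr.ζ_range x).2
  · rw [image_eq_zero_of_notMem_tsupport hx]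
    exact (Fr.η_range x).1

/-- Ground-state energy of `χ ψ`: the loss due to `∇χ` is `ε1` times a Hardy integral. -/
theorem Cut.egs_le (H : Eig Ω p lam φ) (L : Loc Ω φ b n r0) (Fr : Frame Ω φ b n r0 η ζ K0 r2 M)
    (Ct : Cut Ω φ b n r0 r2 ε1 ρ o χ σ χ2) {ψ : ℂ → ℂ} (hψ : Test Ω ψ) {ε : ℝ} (hε : 0 < ε)
    (hε1 : 0 ≤ ε1)
    (hI : Integrable (fun x => σ x * ζ x / φ x ^ 2 * ‖ψ x‖ ^ 2)) :
    ∫ x, η x * egs φ 0 (fun x => (χ x : ℂ) * ψ x) x ≤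
      (1 + ε) * Zs η σ φ 0 ψ + (1 + 1 / ε) * ε1 * ∫ x, σ x * ζ x / φ x ^ 2 * ‖ψ x‖ ^ 2 := by
  have hT := Ct.testχ H hψ
  have hi1 := Fr.Zint H L Ct.σ_smooth.continuous hψ (A := 0) continuousOn_const
  have hi0 := H.egs_int hT.1 (A := 0) continuousOn_const
    Fr.η_smooth.continuous.continuousOn (Fr.η_ne L)
  unfold Zs
  rw [← integral_const_mul, ← integral_const_mul,
    ← integral_add (hi1.const_mul _) (hI.const_mul _)]
  refine integral_mono hi0 ((hi1.const_mul _).add (hI.const_mul _)) fun x => ?_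
  simp only
  have hη := Fr.η_range x
  have hσ := Ct.σ_range x
  have hζ := Fr.ζ_range x
  have hE := egs_nonneg φ 0 ψ x
  have hnn1 : 0 ≤ (1 + ε) * (η x * σ x * egs φ 0 ψ x) :=
    mul_nonneg (by linarith) (mul_nonneg (mul_nonneg hη.1 hσ.1) hE)
  have hnn2 : 0 ≤ (1 + 1 / ε) * ε1 * (σ x * ζ x / φ x ^ 2 * ‖ψ x‖ ^ 2) := by
    have := hσ.1; have := hζ.1
    positivity
  by_cases hx : x ∈ tsupport ψ
  swap
  · have hx' := fun h => hx (hT.2 h)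
    rw [egs_off hx', mul_zero]
    exact add_nonneg hnn1 hnn2
  have hxΩ := hψ.2.2 hx
  have hm := egs_mul_le (φ := φ) (A := 0) (Ct.χ_diff H hxΩ) (hψ.diff x) hε
  have hχ := Ct.χ_range x
  have hχσ : χ x ^ 2 ≤ σ x := by nlinarith [Ct.χ_le x hxΩ]
  have h1 : η x * ((1 + ε) * (χ x ^ 2 * egs φ 0 ψ x)) ≤ (1 + ε) * (η x * σ x * egs φ 0 ψ x) := by
    have : η x * egs φ 0 ψ x * (χ x ^ 2) ≤ η x * egs φ 0 ψ x * σ x :=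
      mul_le_mul_of_nonneg_left hχσ (mul_nonneg hη.1 hE)
    nlinarith
  have h2 : η x * ((1 + 1 / ε) * (gsq χ x * ‖ψ x‖ ^ 2)) ≤
      (1 + 1 / ε) * ε1 * (σ x * ζ x / φ x ^ 2 * ‖ψ x‖ ^ 2) := by
    rcases lt_or_ge ‖x - b‖ r2 with h | h
    · have hr0 := L.r0_pos
      have hφ : 0 < φ x := L.pos x hxΩ (by linarith [Fr.r2_le])
      have hg := Ct.χ_grad x hxΩ h
      have hg' : gsq χ x ≤ ε1 * σ x / φ x ^ 2 := by
        rw [le_div_iff₀ (by positivity)]; exact hg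
      rw [Fr.ζ_near x h, Fr.η_one x (by linarith [Fr.r2_le]), one_mul, mul_one, mul_assoc]
      refine mul_le_mul_of_nonneg_left ?_ (by positivity)
      calc gsq χ x * ‖ψ x‖ ^ 2 ≤ ε1 * σ x / φ x ^ 2 * ‖ψ x‖ ^ 2 := by gcongr
        _ = _ := by ring
    · have hg : gsq χ x = 0 := by
        simp [gsq, d1, d2, (Ct.χ_far x hxΩ h).2]
      rw [hg]
      simpa using hnn2
  calc _ ≤ η x * ((1 + ε) * (χ x ^ 2 * egs φ 0 ψ x) + (1 + 1 / ε) * (gsq χ x * ‖ψ x‖ ^ 2)) :=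
        mul_le_mul_of_nonneg_left hm hη.1
    _ ≤ _ := by rw [mul_add]; exact add_le_add h1 h2

/-- If `χ ψ` has Rayleigh quotient at least `lam + g`, then its mass and the weighted ground-state
energy of `ψ` are bounded by the weighted form of `ψ`. The cost of the cutoff is absorbed by the Hardy
inequality once `ε1` is small depending on `g`. -/
theorem cutoff_bound (H : Eig Ω p lam φ) (L : Loc Ω φ b n r0)
    (Fr : Frame Ω φ b n r0 η ζ K0 r2 M) {g : ℝ} (hg : 0 < g) :
    ∃ ε1 C, 0 < ε1 ∧ 0 < C ∧ ∀ ρ o χ σ χ2, Cut Ω φ b n r0 r2 ε1 ρ o χ σ χ2 →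
      ∀ ψ, Test Ω ψ →
        (lam + g) * (∫ x, p x * ‖(χ x : ℂ) * ψ x‖ ^ 2) ≤ ∫ x, kin 0 (fun x => (χ x : ℂ) * ψ x) x →
        ∫ x, p x * ‖(χ x : ℂ) * ψ x‖ ^ 2 ≤ C * Qo η σ φ lam p 0 ψ ∧
        Zs η σ φ 0 ψ ≤ C * Qo η σ φ lam p 0 ψ := by
  obtain ⟨CH, hCH, hH⟩ := Fr.hardyσ H L
  have hlam := H.lam_nonneg
  set ε : ℝ := min (1 / 2) (g / (2 * (2 * lam + 1))) with hεd
  have hε : 0 < ε := by rw [hεd]; exact lt_min (by norm_num) (by positivity)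
  have hε2 : ε ≤ 1 / 2 := min_le_left _ _
  have hεg : ε * (2 * lam + 1) ≤ g / 2 := by
    have : ε ≤ g / (2 * (2 * lam + 1)) := min_le_right _ _
    rw [le_div_iff₀ (by positivity)] at this
    linarith
  set ε1 : ℝ := ε / ((1 + 1 / ε) * (CH + 16)) with hεdef
  have hε1 : 0 < ε1 := by positivity
  have hεeq : (1 + 1 / ε) * ε1 * (CH + 16) = ε := by
    rw [hεdef]; field_simp
  refine ⟨ε1, 4 / g + (1 + 4 * lam / g), hε1, by positivity, fun ρ o χ σ χ2 Ct ψ hψ hq => ?_⟩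
  obtain ⟨hI, hHi⟩ := hH ψ 0 σ hψ continuousOn_const Ct.σ_smooth Ct.σ_range Ct.σ_n
  have h1 := Ct.egs_le H L Fr hψ hε hε1.le hI
  have h2 := Ct.K0_le H Fr hψ
  have h3 := Ct.Fdens_ge H L Fr hψ
  have hGS := H.groundState Fr.η_smooth (Fr.η_ne L) (A := 0) (Ct.testχ H hψ).1 continuousOn_const
  have hFe : ∫ x, Fdens η φ lam p 0 (fun x => (χ x : ℂ) * ψ x) x = ∫ x, Fdens η φ lam p 0 ψ x :=
    integral_congr_ae (ae_of_all _ fun x => Ct.Fdens_cut H Fr hψ x)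
  rw [hFe] at hGS
  have hZdef : ∫ x, η x * σ x * egs φ 0 ψ x = Zs η σ φ 0 ψ := rfl
  have hZ0 : 0 ≤ Zs η σ φ 0 ψ := by
    refine integral_nonneg fun x => ?_
    exact mul_nonneg (mul_nonneg (Fr.η_range x).1 (Ct.σ_range x).1) (egs_nonneg _ _ _ _)
  rw [hZdef] at hHi
  unfold Qo
  set m : ℝ := ∫ x, p x * ‖(χ x : ℂ) * ψ x‖ ^ 2 with hm
  have hm0 : 0 ≤ m := m_nonneg H.ppos (Ct.testχ H hψ).1.2.2
  set Z := Zs η σ φ 0 ψ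
  set F := ∫ x, Fdens η φ lam p 0 ψ x
  set W := ∫ x, σ x * ζ x / φ x ^ 2 * ‖ψ x‖ ^ 2
  set k0 := ∫ x in K0, p x * ‖ψ x‖ ^ 2
  have hW : (1 + 1 / ε) * ε1 * W ≤ ε * (m + Z) := by
    have : W ≤ (CH + 16) * (m + Z) := by nlinarith
    calc (1 + 1 / ε) * ε1 * W ≤ (1 + 1 / ε) * ε1 * ((CH + 16) * (m + Z)) :=
          mul_le_mul_of_nonneg_left this (by positivity)
      _ = _ := by rw [← mul_assoc, hεeq]
  have hmain : g * m ≤ F + Z + 2 * ε * Z + ε * m := by nlinarith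
  have hZle : Z ≤ (F + Z) + lam * m := by linarith
  have h5 : g / 2 * m ≤ 2 * (F + Z) := by
    have hq0 : g * m - (2 * ε * lam + ε) * m ≤ (1 + 2 * ε) * (F + Z) := by nlinarith
    have hq1 : g / 2 * m ≤ (1 + 2 * ε) * (F + Z) := by nlinarith
    have hq2 : 0 ≤ F + Z := by
      by_contra hc
      push Not at hc
      have : (1 + 2 * ε) * (F + Z) < 0 := mul_neg_of_pos_of_neg (by linarith) hc
      have : 0 ≤ g / 2 * m := by positivity
      linarith
    nlinarith
  have hq2 : 0 ≤ F + Z := by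
    have : 0 ≤ g / 2 * m := by positivity
    linarith
  have h6 : m ≤ 4 / g * (F + Z) := by
    rw [div_mul_eq_mul_div, le_div_iff₀ hg]; linarith
  have h7 : Z ≤ (1 + 4 * lam / g) * (F + Z) := by
    have := mul_le_mul_of_nonneg_left h6 hlam
    have e : lam * (4 / g * (F + Z)) = 4 * lam / g * (F + Z) := by ring
    rw [add_mul, one_mul]
    linarith
  constructor
  · have : 0 ≤ (1 + 4 * lam / g) * (F + Z) := by positivity
    rw [add_mul]; linarith
  · have : 0 ≤ 4 / g * (F + Z) := by positivity
    rw [add_mul]; linarith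

end

/-! ### Adding multiples of the near-eigenfunction -/

section
variable {Ω : Set ℂ} {p : ℂ → ℝ} {lam : ℝ} {φ : ℂ → ℝ} {b n : ℂ} {r0 : ℝ}
variable {η ζ : ℂ → ℝ} {K0 : Set ℂ} {r2 M : ℝ}
variable {ε1 ρ : ℝ} {o : ℂ} {χ σ χ2 : ℂ → ℝ}

theorem pd1_addc {v w : ℂ → ℂ} {x : ℂ} (c : ℂ) (hv : DifferentiableAt ℝ v x)
    (hw : DifferentiableAt ℝ w x) :
    pd1 (fun y => v y + c * w y) x = pd1 v x + c * pd1 w x := by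
  unfold pd1
  rw [fderiv_fun_add hv (hw.const_mul c), fderiv_const_mul hw]
  simp

theorem pd2_addc {v w : ℂ → ℂ} {x : ℂ} (c : ℂ) (hv : DifferentiableAt ℝ v x)
    (hw : DifferentiableAt ℝ w x) :
    pd2 (fun y => v y + c * w y) x = pd2 v x + c * pd2 w x := by
  unfold pd2
  rw [fderiv_fun_add hv (hw.const_mul c), fderiv_const_mul hw]
  simp

theorem pd_eqφ (H : Eig Ω p lam φ) {f : ℂ → ℝ} {N : Set ℂ} (hN : IsOpen N)
    (hfN : ∀ x ∈ N, f x = φ x) {x : ℂ} (hx : x ∈ N) (hxΩ : x ∈ Ω) :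
    pd1 (fun y => (f y : ℂ)) x = (d1 φ x : ℂ) ∧ pd2 (fun y => (f y : ℂ)) x = (d2 φ x : ℂ) := by
  have hev : (fun y => (f y : ℂ)) =ᶠ[nhds x] fun y => (φ y : ℂ) := by
    filter_upwards [hN.mem_nhds hx] with y hy
    rw [hfN y hy]
  have hd : DifferentiableAt ℝ φ x := H.diffAt hxΩ
  constructor
  · rw [← pd1_ofReal hd]; unfold pd1; rw [hev.fderiv_eq]
  · rw [← pd2_ofReal hd]; unfold pd2; rw [hev.fderiv_eq]

/-- On the support of `v` the function `f = φ` has zero ground-state energy, so there is no cross term. -/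
theorem egs_split (H : Eig Ω p lam φ) (L : Loc Ω φ b n r0) (Fr : Frame Ω φ b n r0 η ζ K0 r2 M)
    {v : ℂ → ℂ} (hv : Test Ω v) {f : ℂ → ℝ} (hf : Test Ω (fun x => (f x : ℂ))) {N : Set ℂ}
    (hN : IsOpen N) (hvN : tsupport v ⊆ N) (hfN : ∀ x ∈ N, f x = φ x) (c : ℂ) (x : ℂ) :
    η x * egs φ 0 (fun y => v y + c * (f y : ℂ)) x =
      η x * egs φ 0 v x + ‖c‖ ^ 2 * (η x * egs φ 0 (fun y => (f y : ℂ)) x) := by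
  by_cases hxη : x ∈ tsupport η
  swap
  · simp [(d_off hxη).1]
  by_cases hx : x ∈ tsupport v
  · have hxΩ := hv.2.2 hx
    have hφ : (φ x : ℂ) ≠ 0 := by exact_mod_cast Fr.η_ne L x hxΩ hxη
    obtain ⟨e1, e2⟩ := pd_eqφ H hN hfN (hvN hx) hxΩ
    have ef : egs φ 0 (fun y => (f y : ℂ)) x = 0 := by
      simp only [egs, e1, e2, hfN x (hvN hx)]
      have h1 : Complex.I * (d1 φ x : ℂ) - Complex.I * (φ x : ℂ) * ((d1 φ x : ℂ) / φ x) = 0 := by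
        field_simp; ring
      have h2 : Complex.I * (d2 φ x : ℂ) - Complex.I * (φ x : ℂ) * ((d2 φ x : ℂ) / φ x) = 0 := by
        field_simp; ring
      simp [h1, h2]
    have ep : egs φ 0 (fun y => v y + c * (f y : ℂ)) x = egs φ 0 v x := by
      simp only [egs, pd1_addc c (hv.diff x) (hf.diff x), pd2_addc c (hv.diff x) (hf.diff x),
        e1, e2, hfN x (hvN hx)]
      congr 3
      · push_cast; field_simp; simp; ring
      · push_cast; field_simp; simp; ring
    rw [ef, ep]; ring
  · obtain ⟨h0, h1, h2⟩ := off_supp hx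
    have ep : egs φ 0 (fun y => v y + c * (f y : ℂ)) x = ‖c‖ ^ 2 * egs φ 0 (fun y => (f y : ℂ)) x := by
      simp only [egs, pd1_addc c (hv.diff x) (hf.diff x), pd2_addc c (hv.diff x) (hf.diff x),
        h0, h1, h2]
      rw [mul_add (‖c‖ ^ 2), ← mul_pow, ← mul_pow, ← norm_mul, ← norm_mul]
      congr 3 <;> (simp; ring)
    rw [ep, egs_off hx]; ring

/-- The cross term is the weak equation tested with the real part of `(1 - η) c̄ v`, and vanishes. -/
theorem Fdens_split (H : Eig Ω p lam φ) (L : Loc Ω φ b n r0) (Fr : Frame Ω φ b n r0 η ζ K0 r2 M)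
    {v : ℂ → ℂ} (hv : Test Ω v) {f : ℂ → ℝ} (hf : Test Ω (fun x => (f x : ℂ))) {N : Set ℂ}
    (hN : IsOpen N) (hvN : tsupport v ⊆ N) (hfN : ∀ x ∈ N, f x = φ x) (c : ℂ) :
    ∫ x, Fdens η φ lam p 0 (fun y => v y + c * (f y : ℂ)) x =
      (∫ x, Fdens η φ lam p 0 v x) + ‖c‖ ^ 2 * ∫ x, Fdens η φ lam p 0 (fun y => (f y : ℂ)) x := by
  -- the test function whose weak equation is the cross term
  set ξ : ℂ → ℝ := fun x => (1 - η x) * ((starRingEnd ℂ) c * v x).re with hξ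
  have hξsm : ContDiff ℝ (⊤ : ℕ∞) (fun x => ((starRingEnd ℂ) c * v x).re) :=
    Complex.reCLM.contDiff.comp (contDiff_const.mul hv.1)
  have hξs : ContDiff ℝ (⊤ : ℕ∞) ξ := (contDiff_const.sub Fr.η_smooth).mul hξsm
  have hξ0 : ∀ x, x ∉ tsupport v → ξ x = 0 := fun x hx => by simp [hξ, (off_supp hx).1]
  have hw := H.weak hv.compact H.isOpen hv.2.2 subset_rfl (hξs.of_le (by simp)).contDiffOn hξ0
  set G : ℂ → ℝ := fun x => d1 φ x * d1 ξ x + d2 φ x * d2 ξ x - lam * p x * φ x * ξ x with hG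
  have hpt : ∀ x, Fdens η φ lam p 0 (fun y => v y + c * (f y : ℂ)) x =
      Fdens η φ lam p 0 v x + ‖c‖ ^ 2 * Fdens η φ lam p 0 (fun y => (f y : ℂ)) x + 2 * G x := by
    intro x
    by_cases hx : x ∈ tsupport v
    · have hxΩ := hv.2.2 hx
      obtain ⟨e1, e2⟩ := pd_eqφ H hN hfN (hvN hx) hxΩ
      have hdξ : ∀ w, fderiv ℝ ξ x w = (1 - η x) * ((starRingEnd ℂ) c * fderiv ℝ v x w).re
          - fderiv ℝ η x w * ((starRingEnd ℂ) c * v x).re := by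
        intro w
        have hd0 : HasFDerivAt (fun x => ((starRingEnd ℂ) c * v x).re)
            (Complex.reCLM.comp ((starRingEnd ℂ) c • fderiv ℝ v x)) x :=
          Complex.reCLM.hasFDerivAt.comp x ((hv.diff x).hasFDerivAt.const_mul _)
        have hη : HasFDerivAt (fun x => 1 - η x) (-fderiv ℝ η x) x :=
          (Fr.η_smooth.differentiable (by simp) x).hasFDerivAt.const_sub 1
        have := (hη.mul hd0).fderiv
        have h2 := congrArg (fun L : ℂ →L[ℝ] ℝ => L w) this
        refine h2.trans ?_
        simp
        ring
      obtain ⟨γ, hγ⟩ : ∃ γ, γ = (d1 η x * d1 φ x + d2 η x * d2 φ x) / φ x := ⟨_, rfl⟩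
      have hγφ : γ * φ x = d1 η x * d1 φ x + d2 η x * d2 φ x := by
        by_cases hxη : x ∈ tsupport η
        · rw [hγ]; exact div_mul_cancel₀ _ (Fr.η_ne L x hxΩ hxη)
        · rw [hγ, (d_off hxη).2.1, (d_off hxη).2.2]; simp
      have hF : ∀ w : ℂ → ℂ, Fdens η φ lam p 0 w x =
          (1 - η x) * (kin 0 w x - lam * p x * ‖w x‖ ^ 2) - γ * ‖w x‖ ^ 2 := by
        intro w; rw [hγ]; unfold Fdens; ring
      rw [hF, hF, hF]
      have g1 : d1 ξ x = _ := hdξ 1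
      have g2 : d2 ξ x = _ := hdξ Complex.I
      simp only [hG, g1, g2]
      simp only [kin, pd1_addc c (hv.diff x) (hf.diff x), pd2_addc c (hv.diff x) (hf.diff x),
        e1, e2, hfN x (hvN hx), hξ]
      simp only [normsq]
      change _ = _ + _ + 2 * (d1 φ x * ((1 - η x) * ((starRingEnd ℂ) c * pd1 v x).re
        - d1 η x * ((starRingEnd ℂ) c * v x).re) + d2 φ x * ((1 - η x) * ((starRingEnd ℂ) c * pd2 v x).re
        - d2 η x * ((starRingEnd ℂ) c * v x).re) - _)
      simp
      linear_combination (-2 * (c.re * (v x).re + c.im * (v x).im)) * hγφ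
    · obtain ⟨h0, h1, h2⟩ := off_supp hx
      have hd := fderiv_zero_of_compact (isClosed_tsupport v) hξ0 hx
      have hG0 : G x = 0 := by simp [hG, d1, d2, hd, hξ0 x hx]
      have hk : kin 0 (fun y => v y + c * (f y : ℂ)) x = ‖c‖ ^ 2 * kin 0 (fun y => (f y : ℂ)) x := by
        simp only [kin, pd1_addc c (hv.diff x) (hf.diff x), pd2_addc c (hv.diff x) (hf.diff x),
          h1, h2]
        rw [mul_add (‖c‖ ^ 2), ← mul_pow, ← mul_pow, ← norm_mul, ← norm_mul]
        congr 3 <;> (simp; ring)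
      have hk' : kin 0 v x = 0 := kin_off hx
      rw [hG0]
      simp only [Fdens, hk, hk', h0, zero_add, norm_mul, mul_pow, norm_zero]
      ring
  have hi1 := H.Fdens_int Fr.η_smooth (Fr.η_ne L) (A := 0) hv continuousOn_const
  have hi2 := H.Fdens_int Fr.η_smooth (Fr.η_ne L) (A := 0) hf continuousOn_const
  have hGi : Integrable G := by
    refine integrable_of_compact hv.compact ?_ fun x hx => ?_
    · have c1 : Continuous (d1 ξ) := (hξs.continuous_fderiv (by simp)).clm_apply continuous_const
      have c2 : Continuous (d2 ξ) := (hξs.continuous_fderiv (by simp)).clm_apply continuous_const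
      have hs := hv.2.2
      exact (((H.d1_smooth.continuousOn.mono hs).mul c1.continuousOn).add
        ((H.d2_smooth.continuousOn.mono hs).mul c2.continuousOn)).sub
        (((continuousOn_const.mul (H.pCΩ.mono hs)).mul (H.smooth.continuousOn.mono hs)).mul
          hξs.continuous.continuousOn)
    · have hd := fderiv_zero_of_compact (isClosed_tsupport v) hξ0 hx
      simp [hG, d1, d2, hd, hξ0 x hx]
  have hcong : ∫ x, Fdens η φ lam p 0 (fun y => v y + c * (f y : ℂ)) x =
    ∫ x, (Fdens η φ lam p 0 v x + ‖c‖ ^ 2 * Fdens η φ lam p 0 (fun y => (f y : ℂ)) x + 2 * G x) :=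
    integral_congr_ae (ae_of_all _ hpt)
  rw [hcong, integral_add
      (f := fun x => Fdens η φ lam p 0 v x + ‖c‖ ^ 2 * Fdens η φ lam p 0 (fun y => (f y : ℂ)) x)
      (g := fun x => 2 * G x) (hi1.add (hi2.const_mul _)) (hGi.const_mul _),
    integral_add hi1 (hi2.const_mul _), integral_const_mul, integral_const_mul, hw]
  ring

/-- Adding `c f` to `v`, where `f = φ` near the support of `v`, raises the weighted form by at most
`2ω|c|²` and does not lower the weighted ground-state energy. -/
theorem Qo_split (H : Eig Ω p lam φ) (L : Loc Ω φ b n r0) (Fr : Frame Ω φ b n r0 η ζ K0 r2 M)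
    (hσ : Continuous σ) (hσr : ∀ x, 0 ≤ σ x ∧ σ x ≤ 1)
    {v : ℂ → ℂ} (hv : Test Ω v) {f : ℂ → ℝ} (hf : Test Ω (fun x => (f x : ℂ))) {N : Set ℂ}
    (hN : IsOpen N) (hvN : tsupport v ⊆ N) (hfN : ∀ x ∈ N, f x = φ x) (c : ℂ) {ω : ℝ}
    (h1 : (∫ x, kin 0 (fun x => (f x : ℂ)) x) - lam * (∫ x, p x * ‖(f x : ℂ)‖ ^ 2) ≤ ω)
    (h2 : ∫ x, η x * egs φ 0 (fun x => (f x : ℂ)) x ≤ ω) :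
    Qo η σ φ lam p 0 (fun y => v y + c * (f y : ℂ)) ≤ Qo η σ φ lam p 0 v + 2 * ω * ‖c‖ ^ 2 ∧
    Zs η σ φ 0 v ≤ Zs η σ φ 0 (fun y => v y + c * (f y : ℂ)) := by
  have hF := Fdens_split H L Fr hv hf hN hvN hfN c
  have hGS := H.groundState Fr.η_smooth (Fr.η_ne L) (A := 0) hf continuousOn_const
  have hi1 := Fr.Zint H L hσ (A := 0) hv continuousOn_const
  have hi2 := Fr.Zint H L hσ (A := 0) hf continuousOn_const
  have hi0 : Integrable (fun x => η x * egs φ 0 (fun x => (f x : ℂ)) x) :=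
    H.egs_int hf (A := 0) continuousOn_const Fr.η_smooth.continuous.continuousOn (Fr.η_ne L)
  have hE0 : 0 ≤ ∫ x, η x * egs φ 0 (fun x => (f x : ℂ)) x :=
    integral_nonneg fun x => mul_nonneg (Fr.η_range x).1 (egs_nonneg _ _ _ _)
  have hZ : Zs η σ φ 0 (fun y => v y + c * (f y : ℂ)) =
      Zs η σ φ 0 v + ‖c‖ ^ 2 * Zs η σ φ 0 (fun y => (f y : ℂ)) := by
    unfold Zs
    rw [← integral_const_mul, ← integral_add hi1 (hi2.const_mul _)]
    refine integral_congr_ae (ae_of_all _ fun x => ?_)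
    simp only
    linear_combination σ x * egs_split H L Fr hv hf hN hvN hfN c x
  have hZf0 : 0 ≤ Zs η σ φ 0 (fun y => (f y : ℂ)) :=
    integral_nonneg fun x => mul_nonneg (mul_nonneg (Fr.η_range x).1 (hσr x).1) (egs_nonneg _ _ _ _)
  have hZf : Zs η σ φ 0 (fun y => (f y : ℂ)) ≤ ω := by
    refine le_trans (integral_mono hi2 hi0 fun x => ?_) h2
    simp only
    refine mul_le_mul_of_nonneg_right ?_ (egs_nonneg _ _ _ _)
    nlinarith [(Fr.η_range x).1, (hσr x).2]
  have hc : 0 ≤ ‖c‖ ^ 2 := by positivity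
  refine ⟨?_, by rw [hZ]; nlinarith⟩
  unfold Qo
  rw [hF, hZ]
  nlinarith

end

/-! ### Gauging away the flux -/

section
variable {Ω : Set ℂ} {p : ℂ → ℝ} {lam : ℝ} {φ : ℂ → ℝ} {b n : ℂ} {r0 : ℝ}
variable {η ζ : ℂ → ℝ} {K0 : Set ℂ} {r2 M : ℝ}
variable {ε1 ρ : ℝ} {o : ℂ} {χ σ χ2 : ℂ → ℝ}

/-- `J` is a truncated gauge on `Ω`: it is smooth, `|J| ≤ 1`, and at distance more than `ρ/4` from `o` it
is unimodular with `i∇J = A_a J`. -/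
structure Gauge (Ω : Set ℂ) (a o : ℂ) (ρ : ℝ) (J : ℂ → ℂ) : Prop where
  smooth : ContDiffOn ℝ (⊤ : ℕ∞) J Ω
  le_one : ∀ x ∈ Ω, ‖J x‖ ≤ 1
  far : ∀ x ∈ Ω, ρ / 4 < ‖x - o‖ → ‖J x‖ = 1 ∧
    ∀ v, fderiv ℝ J x v = -Complex.I *
      (((abPot a x).re * v.re + (abPot a x).im * v.im : ℝ) : ℂ) * J x

theorem abPot_contOn {a : ℂ} {u : ℂ → ℂ} (hu : Test (Ω \ {a}) u) :
    ContinuousOn (abPot a) (tsupport u) :=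
  (abPot_cont a).mono fun _ hx => (hu.2.2 hx).2

/-- The gauge is exact wherever `Fdens` or the weight `σ` is nonzero. -/
theorem gauge_transfer (H : Eig Ω p lam φ)
    (Fr : Frame Ω φ b n r0 η ζ K0 r2 M) (Ct : Cut Ω φ b n r0 r2 ε1 ρ o χ σ χ2) {a : ℂ} {J : ℂ → ℂ}
    (G : Gauge Ω a o ρ J) {u : ℂ → ℂ} (hu : Test Ω u) :
    (∫ x, Fdens η φ lam p 0 (fun y => J y * u y) x) = (∫ x, Fdens η φ lam p (abPot a) u x) ∧
    Zs η σ φ 0 (fun y => J y * u y) = Zs η σ φ (abPot a) u := by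
  have hsm := Test.smul_smooth H.isOpen G.smooth hu
  have hfar : ∀ x ∈ tsupport u, ρ / 4 < ‖x - o‖ →
      ‖J x * u x‖ = ‖u x‖ ∧ kin 0 (fun y => J y * u y) x = kin (abPot a) u x ∧
      egs φ 0 (fun y => J y * u y) x = egs φ (abPot a) u x := by
    intro x hx hxo
    have hxΩ := hu.2.2 hx
    obtain ⟨h1, h2⟩ := G.far x hxΩ hxo
    exact gauge_eq ((G.smooth.contDiffAt (H.isOpen.mem_nhds hxΩ)).differentiableAt (by simp))
      (hu.diff x) h1 h2
  have hoff : ∀ x, x ∉ tsupport u → x ∉ tsupport (fun y => J y * u y) := fun x hx h => hx (hsm.2 h)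
  constructor
  · refine integral_congr_ae (ae_of_all _ fun x => ?_)
    by_cases hx : x ∈ tsupport u
    · by_cases hxo : ρ / 4 < ‖x - o‖
      · obtain ⟨e1, e2, e3⟩ := hfar x hx hxo
        simp only [Fdens, e1, e2]
      · have hxb : ‖x - b‖ < r0 / 10 := by
          have := norm_sub_le_norm_sub_add_norm_sub x o b
          have h1 := Ct.o_dist
          have h2 := Ct.ρ_pos
          have h3 := Ct.ρ_le
          have h4 := Fr.r2_le
          push Not at hxo
          linarith
        rw [Fr.Fdens_near hxb, Fr.Fdens_near hxb]
    · simp [Fdens, kin_off hx, kin_off (hoff x hx), (off_supp hx).1]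
  · refine integral_congr_ae (ae_of_all _ fun x => ?_)
    simp only
    by_cases hx : x ∈ tsupport u
    · by_cases hxo : ρ / 4 < ‖x - o‖
      · rw [(hfar x hx hxo).2.2]
      · rw [Ct.σ_near x (by have := Ct.ρ_pos; linarith)]; simp
    · rw [egs_off hx, egs_off (hoff x hx)]

/-- For the function `ψ = J u + c f` with the bounds of `cutoff_bound`, the mass of `χ ψ` and the full
magnetic ground-state energy of `u` near `b` are controlled by `Q_a(u) + 2ω|c|²`. -/
theorem key1 (H : Eig Ω p lam φ) (L : Loc Ω φ b n r0)
    (Fr : Frame Ω φ b n r0 η ζ K0 r2 M) (Ct : Cut Ω φ b n r0 r2 ε1 ρ o χ σ χ2) {a : ℂ} {J : ℂ → ℂ}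
    (G : Gauge Ω a o ρ J) {u : ℂ → ℂ} (hu : Test (Ω \ {a}) u)
    {f : ℂ → ℝ} (hf : Test Ω (fun x => (f x : ℂ))) {N : Set ℂ}
    (hN : IsOpen N) (huN : tsupport u ⊆ N) (hfN : ∀ x ∈ N, f x = φ x) (c : ℂ) {ω C : ℝ}
    (h1 : (∫ x, kin 0 (fun x => (f x : ℂ)) x) - lam * (∫ x, p x * ‖(f x : ℂ)‖ ^ 2) ≤ ω)
    (h2 : ∫ x, η x * egs φ 0 (fun x => (f x : ℂ)) x ≤ ω) (hC : 0 < C)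
    (hm : (∫ x, p x * ‖(χ x : ℂ) * (J x * u x + c * (f x : ℂ))‖ ^ 2)
      ≤ C * Qo η σ φ lam p 0 (fun x => J x * u x + c * (f x : ℂ)))
    (hZ : Zs η σ φ 0 (fun x => J x * u x + c * (f x : ℂ))
      ≤ C * Qo η σ φ lam p 0 (fun x => J x * u x + c * (f x : ℂ))) :
    (∫ x, p x * ‖(χ x : ℂ) * (J x * u x + c * (f x : ℂ))‖ ^ 2) ≤
      C * ((∫ x, kin (abPot a) u x) - lam * (∫ x, p x * ‖u x‖ ^ 2) + 2 * ω * ‖c‖ ^ 2) ∧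
    (∫ x, η x * egs φ (abPot a) u x) ≤
      (C + 1) * ((∫ x, kin (abPot a) u x) - lam * (∫ x, p x * ‖u x‖ ^ 2) + 2 * ω * ‖c‖ ^ 2) := by
  have huΩ : Test Ω u := hu.mono sdiff_subset
  have hA := abPot_contOn hu
  have hJu := Test.smul_smooth H.isOpen G.smooth huΩ
  have hψ : Test Ω (fun x => J x * u x + c * (f x : ℂ)) := by
    have hcf := (Test.smul_smooth H.isOpen (f := fun _ => c) contDiffOn_const hf).1
    refine ⟨hJu.1.1.add hcf.1, hJu.1.2.1.add hcf.2.1, ?_⟩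
    exact (tsupport_add _ _).trans (union_subset hJu.1.2.2 hcf.2.2)
  obtain ⟨e1, e2⟩ := gauge_transfer H Fr Ct G (lam := lam) (p := p) huΩ
  obtain ⟨s1, s2⟩ := Qo_split H L Fr Ct.σ_smooth.continuous Ct.σ_range hJu.1 hf hN
    (hJu.2.trans huN) hfN c h1 h2
  have hGS := H.groundState Fr.η_smooth (Fr.η_ne L) (A := abPot a) huΩ hA
  have hYZ : Zs η σ φ (abPot a) u ≤ ∫ x, η x * egs φ (abPot a) u x := by
    refine integral_mono (Fr.Zint H L Ct.σ_smooth.continuous huΩ hA)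
      (H.egs_int (s := η) huΩ hA Fr.η_smooth.continuous.continuousOn (Fr.η_ne L)) fun x => ?_
    simp only
    refine mul_le_mul_of_nonneg_right ?_ (egs_nonneg _ _ _ _)
    nlinarith [(Fr.η_range x).1, (Ct.σ_range x).2]
  have hm0 : 0 ≤ ∫ x, p x * ‖(χ x : ℂ) * (J x * u x + c * (f x : ℂ))‖ ^ 2 :=
    m_nonneg H.ppos (Ct.testχ H hψ).1.2.2
  have hQ : Qo η σ φ lam p 0 (fun x => J x * u x) =
      (∫ x, Fdens η φ lam p (abPot a) u x) + Zs η σ φ (abPot a) u := by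
    unfold Qo; rw [e1, e2]
  set q := Qo η σ φ lam p 0 (fun x => J x * u x + c * (f x : ℂ)) with hq
  rw [hGS]
  have hqX : q ≤ (∫ x, Fdens η φ lam p (abPot a) u x) + (∫ x, η x * egs φ (abPot a) u x)
    + 2 * ω * ‖c‖ ^ 2 := by linarith
  have hq0 : 0 ≤ q := by
    by_contra h; push Not at h; nlinarith
  constructor
  · exact hm.trans (mul_le_mul_of_nonneg_left hqX hC.le)
  · have := mul_le_mul_of_nonneg_left hqX hC.le
    rw [e2] at s2
    linarith

end

/-! ### Bounds for the coefficient and for the mass -/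

section
variable {Ω : Set ℂ} {p : ℂ → ℝ} {lam : ℝ} {φ : ℂ → ℝ} {b n : ℂ} {r0 : ℝ}
variable {η ζ : ℂ → ℝ} {K0 : Set ℂ} {r2 M : ℝ}
variable {ε1 ρ : ℝ} {o : ℂ} {χ σ χ2 : ℂ → ℝ}

theorem Loc.φ_le (L : Loc Ω φ b n r0) {a : ℂ} (ha : a ∈ Ω) (hab : ‖a - b‖ < r0) :
    φ a ≤ 2 * ‖a - b‖ := by
  have h2 := abs_le.1 (L.lipb a ha hab)
  have h3 := abs_le.1 (abs_ip_le n (a - b))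
  rw [L.norm_n] at h3
  linarith [norm_nonneg (a - b)]

theorem norm_sq_two (z w : ℂ) : ‖z - w‖ ^ 2 ≤ 2 * ‖z‖ ^ 2 + 2 * ‖w‖ ^ 2 := by
  have h := pow_le_pow_left₀ (norm_nonneg _) (norm_sub_le z w) 2
  nlinarith [sq_nonneg (‖z‖ - ‖w‖)]

set_option maxHeartbeats 1000000 in
/-- The coefficient `c` is controlled at scale `φ(a)`: on the sink, `c = (ψ - J u)/φ` with
`ψ = J u + c f`; the term in `ψ` is bounded by its mass and the term in `u` by `Eig.transport`. The
factor `φ(a)²` combines the width of the sink with the factor in `Eig.transport`. -/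
theorem sink_bound (H : Eig Ω p lam φ) (L : Loc Ω φ b n r0)
    (Fr : Frame Ω φ b n r0 η ζ K0 r2 M) {s0 : ℝ} (hs0 : 0 < s0) (hs0r : s0 ≤ r0 / 40)
    (hsK : Metric.closedBall (b + (s0 : ℂ) * n) (s0 / 2) ⊆ K0) :
    ∃ C, 0 < C ∧ ∀ (ε1 ρ : ℝ) (o : ℂ) (χ σ χ2 : ℂ → ℝ), Cut Ω φ b n r0 r2 ε1 ρ o χ σ χ2 →
      ∀ a ∈ Ω, ‖a - b‖ < s0 / 32 → φ a ≤ 1 → ∀ J, Gauge Ω a o ρ J → ∀ u, Test (Ω \ {a}) u →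
      ∀ (f : ℂ → ℝ) (c : ℂ), (∀ x ∈ K0, f x = φ x) → Test Ω (fun x => J x * u x + c * (f x : ℂ)) →
      φ a ^ 2 * ‖c‖ ^ 2 ≤ C * ((∫ x, p x * ‖(χ x : ℂ) * (J x * u x + c * (f x : ℂ))‖ ^ 2) +
        ∫ x, η x * egs φ (abPot a) u x) := by
  obtain ⟨Ct, hCt, htr⟩ := H.transport L Fr.η_smooth (fun x => (Fr.η_range x).1) Fr.η_one Fr.η_supp
    hs0 hs0r (hsK.trans Fr.K0_sub)
  have hr0 := L.r0_pos
  have hφK : ∀ x ∈ K0, 0 < φ x := fun x hx => L.pos x (Fr.K0_sub hx) (by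
    have := Fr.K0_ball hx; rw [Metric.mem_ball, dist_eq_norm] at this; linarith)
  obtain ⟨D, hD0, hD⟩ : ∃ D, 0 ≤ D ∧ ∀ x ∈ K0, 1 ≤ D * (φ x ^ 2 * p x) := by
    have hc : ContinuousOn (fun x => (φ x ^ 2 * p x)⁻¹) K0 :=
      ((((H.smooth.continuousOn.mono Fr.K0_sub).pow 2).mul (H.pCΩ.mono Fr.K0_sub))).inv₀ fun x hx =>
        (mul_pos (pow_pos (hφK x hx) 2) (H.ppos x (Fr.K0_sub hx))).ne'
    obtain ⟨D, hD⟩ := Fr.K0_compact.exists_bound_of_continuousOn hc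
    refine ⟨max D 0, le_max_right _ _, fun x hx => ?_⟩
    have hpos := mul_pos (pow_pos (hφK x hx) 2) (H.ppos x (Fr.K0_sub hx))
    have h1 := (le_abs_self _).trans (hD x hx)
    have h2 := mul_le_mul_of_nonneg_right (h1.trans (le_max_left D 0)) hpos.le
    rwa [inv_mul_cancel₀ hpos.ne'] at h2
  refine ⟨32 / s0 * (2 * D + 2 * Ct), by positivity, ?_⟩
  intro ε1 ρ o χ σ χ2 Cu a ha hab hφ1 J G u hu f c hfK hψ
  have huΩ : Test Ω u := hu.mono sdiff_subset
  have hh : 0 < φ a := L.pos a ha (by linarith)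
  have hh2 := L.φ_le ha (by linarith)
  set S := sink a n s0 (φ a) with hS
  have hSK : S ⊆ K0 :=
    (sink_sub L.norm_n hs0 (by linarith) hh.le (by linarith)).trans hsK
  have hSc : IsCompact S := Fr.K0_compact.of_isClosed_subset (sink_closed _ _ _ _) hSK
  have hT := htr a ha hab u hu
  have hpt : ∀ x ∈ S, ‖c‖ ^ 2 ≤ 2 * D * (p x * ‖J x * u x + c * (f x : ℂ)‖ ^ 2)
      + 2 * (‖u x‖ ^ 2 / φ x ^ 2) := by
    intro x hx
    have hxK := hSK hx
    have hxΩ := Fr.K0_sub hxK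
    have hφ := hφK x hxK
    have e : c * (f x : ℂ) = (J x * u x + c * (f x : ℂ)) - J x * u x := by ring
    have h1 := norm_sq_two (J x * u x + c * (f x : ℂ)) (J x * u x)
    rw [← e, norm_mul, norm_mul, hfK x hxK, Complex.norm_real, mul_pow, mul_pow, Real.norm_eq_abs,
      sq_abs] at h1
    have h2 : ‖J x‖ ^ 2 * ‖u x‖ ^ 2 ≤ ‖u x‖ ^ 2 := by
      have := G.le_one x hxΩ
      have h3 : ‖J x‖ ^ 2 ≤ 1 := by nlinarith [norm_nonneg (J x)]
      nlinarith [sq_nonneg ‖u x‖]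
    have h4 := hD x hxK
    rw [hfK x hxK]
    set P := ‖J x * u x + c * (φ x : ℂ)‖ ^ 2 with hP
    have hP0 : 0 ≤ P := by positivity
    have h5 : P ≤ D * (φ x ^ 2 * p x) * P := by nlinarith
    have h6 : ‖c‖ ^ 2 * φ x ^ 2 ≤ (2 * D * (p x * P) + 2 * (‖u x‖ ^ 2 / φ x ^ 2)) * φ x ^ 2 := by
      have : (2 * D * (p x * P) + 2 * (‖u x‖ ^ 2 / φ x ^ 2)) * φ x ^ 2
        = 2 * (D * (φ x ^ 2 * p x) * P) + 2 * ‖u x‖ ^ 2 := by field_simp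
      rw [this]; linarith
    exact le_of_mul_le_mul_right h6 (by positivity)
  have i1 : IntegrableOn (fun x => p x * ‖J x * u x + c * (f x : ℂ)‖ ^ 2) S :=
    (hψ.m_int H.pCΩ).integrableOn
  have i2 : IntegrableOn (fun x => ‖u x‖ ^ 2 / φ x ^ 2) S := by
    refine ContinuousOn.integrableOn_compact hSc ?_
    refine (hu.1.continuous.norm.pow 2).continuousOn.div
      ((H.smooth.continuousOn.mono (hSK.trans Fr.K0_sub)).pow 2) fun x hx => ?_
    exact (pow_pos (hφK x (hSK hx)) 2).ne'
  have hint : ∫ x in S, ‖c‖ ^ 2 ≤ ∫ x in S, (2 * D * (p x * ‖J x * u x + c * (f x : ℂ)‖ ^ 2)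
      + 2 * (‖u x‖ ^ 2 / φ x ^ 2)) :=
    setIntegral_mono_on (continuousOn_const.integrableOn_compact hSc)
      ((i1.const_mul _).add (i2.const_mul _)) hSc.measurableSet hpt
  rw [integral_add (f := fun x => 2 * D * (p x * ‖J x * u x + c * (f x : ℂ)‖ ^ 2))
    (g := fun x => 2 * (‖u x‖ ^ 2 / φ x ^ 2)) (i1.const_mul _) (i2.const_mul _), integral_const_mul,
    integral_const_mul, setIntegral_const, sink_vol L.norm_n hs0.le hh.le, smul_eq_mul] at hint
  have hK := Cu.K0_le H Fr hψ
  have hm1 : ∫ x in S, p x * ‖J x * u x + c * (f x : ℂ)‖ ^ 2 ≤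
      ∫ x in K0, p x * ‖J x * u x + c * (f x : ℂ)‖ ^ 2 := by
    refine setIntegral_mono_set (hψ.m_int H.pCΩ).integrableOn ?_ (LE.le.eventuallyLE hSK)
    refine (ae_restrict_iff' Fr.K0_compact.measurableSet).2 (ae_of_all _ fun x hx => ?_)
    have := H.ppos x (Fr.K0_sub hx)
    simp only [Pi.zero_apply]
    positivity
  have hm := hm1.trans hK
  set m := ∫ x, p x * ‖(χ x : ℂ) * (J x * u x + c * (f x : ℂ))‖ ^ 2 with hmdef
  set Y := ∫ x, η x * egs φ (abPot a) u x with hY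
  have hY0 : 0 ≤ Y := integral_nonneg fun x => mul_nonneg (Fr.η_range x).1 (egs_nonneg _ _ _ _)
  have hm0 : 0 ≤ m := m_nonneg H.ppos (Cu.testχ H hψ).1.2.2
  set I2 := ∫ x in S, ‖u x‖ ^ 2 / φ x ^ 2
  set I1 := ∫ x in S, p x * ‖J x * u x + c * (f x : ℂ)‖ ^ 2
  have h1 := mul_le_mul_of_nonneg_left hint hh.le
  have h2 : φ a * (2 * D * I1) ≤ 2 * D * m := by
    have : 2 * D * I1 ≤ 2 * D * m := mul_le_mul_of_nonneg_left hm (by positivity)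
    have h3 : 0 ≤ 2 * D * m := by positivity
    nlinarith
  have h3 : s0 / 32 * (φ a ^ 2 * ‖c‖ ^ 2) ≤ (2 * D + 2 * Ct) * (m + Y) := by
    have h4 : 0 ≤ Ct * m := by positivity
    have h5 : 0 ≤ D * Y := by positivity
    nlinarith
  have e : φ a ^ 2 * ‖c‖ ^ 2 = 32 / s0 * (s0 / 32 * (φ a ^ 2 * ‖c‖ ^ 2)) := by field_simp
  rw [e, mul_assoc]
  exact mul_le_mul_of_nonneg_left h3 (by positivity)

set_option maxHeartbeats 1000000 in
/-- The mass of `u` is bounded through `J u = ψ - c f` away from `b`, and by the Hardy inequality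
near `b`. -/
theorem mass_bound (H : Eig Ω p lam φ) (L : Loc Ω φ b n r0)
    (Fr : Frame Ω φ b n r0 η ζ K0 r2 M) :
    ∃ C, 0 < C ∧ ∀ (ε1 ρ : ℝ) (o : ℂ) (χ σ χ2 : ℂ → ℝ), Cut Ω φ b n r0 r2 ε1 ρ o χ σ χ2 →
      ∀ a J, Gauge Ω a o ρ J → ∀ u, Test (Ω \ {a}) u →
      ∀ (f : ℂ → ℝ) (c : ℂ), (∀ x ∈ Ω, |f x| ≤ |φ x|) → Test Ω (fun x => J x * u x + c * (f x : ℂ)) →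
      ∫ x, p x * ‖u x‖ ^ 2 ≤ C * ((∫ x, p x * ‖(χ x : ℂ) * (J x * u x + c * (f x : ℂ))‖ ^ 2) +
        ‖c‖ ^ 2 + ∫ x, η x * egs φ (abPot a) u x) := by
  obtain ⟨P0, hP0, hP⟩ := H.exists_bound
  obtain ⟨CH, hCH, hH⟩ := Fr.hardyσ H L
  have hr0 := L.r0_pos
  set v := volume.real Ω with hv
  have hv0 : 0 ≤ v := measureReal_nonneg
  set B := 2 + 2 * P0 ^ 2 * v with hB
  refine ⟨B * (1 + P0 ^ 2 * CH) + 16 * P0 ^ 2, by positivity, ?_⟩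
  intro ε1 ρ o χ σ χ2 Cu a J G u hu f c hf hψ
  have huΩ : Test Ω u := hu.mono sdiff_subset
  have hχψ := (Cu.testχ H hψ).1
  have hA := abPot_contOn hu
  obtain ⟨i3, h3⟩ := hH u (abPot a) (fun _ => 1) huΩ hA contDiff_const (by simp) (by simp)
  simp only [one_mul, mul_one] at i3 h3
  have i1 := huΩ.m_int H.pCΩ
  have i2 := hχψ.m_int H.pCΩ
  have i4 : Integrable (Ω.indicator fun _ => 2 * ‖c‖ ^ 2 * P0 ^ 2) := (H.int_indicator _).1
  have e4 : ∫ x, Ω.indicator (fun _ => 2 * ‖c‖ ^ 2 * P0 ^ 2) x = v * (2 * ‖c‖ ^ 2 * P0 ^ 2) := by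
    rw [integral_indicator H.isOpen.measurableSet, setIntegral_const, smul_eq_mul]
  have hpf : ∀ x ∈ Ω, r2 ≤ ‖x - b‖ → p x * ‖u x‖ ^ 2 ≤
      2 * (p x * ‖(χ x : ℂ) * (J x * u x + c * (f x : ℂ))‖ ^ 2) + 2 * ‖c‖ ^ 2 * P0 ^ 2 := by
    intro x hx hxb
    have hxo : ρ / 4 < ‖x - o‖ := by
      have := norm_sub_le_norm_sub_add_norm_sub x o b
      have h1 := Cu.o_dist
      have h2 := Cu.ρ_pos
      have h3 := Cu.ρ_le
      linarith
    have hJ := (G.far x hx hxo).1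
    rw [(Cu.χ_far x hx hxb).1, Complex.ofReal_one, one_mul]
    have e : J x * u x = (J x * u x + c * (f x : ℂ)) - c * (f x : ℂ) := by ring
    have h1 := norm_sq_two (J x * u x + c * (f x : ℂ)) (c * (f x : ℂ))
    rw [← e, norm_mul, hJ, one_mul, norm_mul, mul_pow, Complex.norm_real, Real.norm_eq_abs] at h1
    have hp := H.ppos x hx
    obtain ⟨h2, h3⟩ := hP x hx
    have h4 : |f x| ^ 2 ≤ P0 := by
      have := pow_le_pow_left₀ (abs_nonneg _) (hf x hx) 2
      rw [sq_abs (φ x)] at this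
      linarith
    have h5 : ‖c‖ ^ 2 * |f x| ^ 2 ≤ ‖c‖ ^ 2 * P0 := mul_le_mul_of_nonneg_left h4 (by positivity)
    have h6 := mul_le_mul_of_nonneg_left h1 hp.le
    have h7 : p x * (‖c‖ ^ 2 * |f x| ^ 2) ≤ P0 * (‖c‖ ^ 2 * P0) :=
      mul_le_mul h2 h5 (by positivity) hP0
    linarith
  set m := ∫ x, p x * ‖(χ x : ℂ) * (J x * u x + c * (f x : ℂ))‖ ^ 2 with hmdef
  set Y := ∫ x, η x * egs φ (abPot a) u x with hY
  set I := ∫ x, ζ x / φ x ^ 2 * ‖u x‖ ^ 2 with hI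
  have hY0 : 0 ≤ Y := integral_nonneg fun x => mul_nonneg (Fr.η_range x).1 (egs_nonneg _ _ _ _)
  have hm0 : 0 ≤ m := m_nonneg H.ppos hχψ.2.2
  have hout : ∀ x, x ∉ Ω → u x = 0 ∧ (χ x : ℂ) * (J x * u x + c * (f x : ℂ)) = 0 := fun x hx =>
    ⟨(off_supp fun h => hx (huΩ.2.2 h)).1,
      image_eq_zero_of_notMem_tsupport (f := fun x => (χ x : ℂ) * (J x * u x + c * (f x : ℂ)))
        fun h => hx (hχψ.2.2 h)⟩
  have hK0 : ∫ x in K0, p x * ‖u x‖ ^ 2 ≤ 2 * m + v * (2 * ‖c‖ ^ 2 * P0 ^ 2) := by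
    have i24 : Integrable (fun x => 2 * (p x * ‖(χ x : ℂ) * (J x * u x + c * (f x : ℂ))‖ ^ 2)
          + Ω.indicator (fun _ => 2 * ‖c‖ ^ 2 * P0 ^ 2) x) := (i2.const_mul 2).add i4
    calc ∫ x in K0, p x * ‖u x‖ ^ 2
        ≤ ∫ x in K0, (2 * (p x * ‖(χ x : ℂ) * (J x * u x + c * (f x : ℂ))‖ ^ 2)
          + Ω.indicator (fun _ => 2 * ‖c‖ ^ 2 * P0 ^ 2) x) := by
          refine setIntegral_mono_on i1.integrableOn i24.integrableOn Fr.K0_compact.measurableSet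
            fun x hx => ?_
          rw [indicator_of_mem (Fr.K0_sub hx)]
          exact hpf x (Fr.K0_sub hx) (Fr.K0_far x hx)
      _ ≤ ∫ x, (2 * (p x * ‖(χ x : ℂ) * (J x * u x + c * (f x : ℂ))‖ ^ 2)
          + Ω.indicator (fun _ => 2 * ‖c‖ ^ 2 * P0 ^ 2) x) := by
          refine setIntegral_le_integral i24 (ae_of_all _ fun x => ?_)
          simp only [Pi.zero_apply]
          by_cases hx : x ∈ Ω
          · have := H.ppos x hx
            rw [indicator_of_mem hx]; positivity
          · rw [(hout x hx).2, indicator_of_notMem hx]; simp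
      _ = _ := by
          rw [integral_add (f := fun x => 2 * (p x * ‖(χ x : ℂ) * (J x * u x + c * (f x : ℂ))‖ ^ 2))
            (g := fun x => Ω.indicator (fun _ => 2 * ‖c‖ ^ 2 * P0 ^ 2) x) (i2.const_mul 2) i4, e4,
            integral_const_mul]
  have hall : ∫ x, p x * ‖u x‖ ^ 2 ≤ 2 * m + v * (2 * ‖c‖ ^ 2 * P0 ^ 2) + P0 ^ 2 * I := by
    calc ∫ x, p x * ‖u x‖ ^ 2
        ≤ ∫ x, (2 * (p x * ‖(χ x : ℂ) * (J x * u x + c * (f x : ℂ))‖ ^ 2)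
          + Ω.indicator (fun _ => 2 * ‖c‖ ^ 2 * P0 ^ 2) x + P0 ^ 2 * (ζ x / φ x ^ 2 * ‖u x‖ ^ 2)) := by
          refine integral_mono i1 (((i2.const_mul 2).add i4).add (i3.const_mul _)) fun x => ?_
          simp only
          by_cases hx : x ∈ Ω
          · rw [indicator_of_mem hx]
            have hz := (Fr.ζ_range x).1
            have hp := H.ppos x hx
            by_cases hxb : r2 ≤ ‖x - b‖
            · have h1 : 0 ≤ P0 ^ 2 * (ζ x / φ x ^ 2 * ‖u x‖ ^ 2) := by positivity
              linarith [hpf x hx hxb]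
            · push Not at hxb
              have hr2 := Fr.r2_le
              have hφ := L.pos x hx (by linarith)
              obtain ⟨h2, h3⟩ := hP x hx
              rw [Fr.ζ_near x hxb]
              have h1 : p x ≤ P0 ^ 2 * (1 / φ x ^ 2) := by
                rw [mul_one_div, le_div_iff₀ (by positivity)]
                nlinarith
              have h4 := mul_le_mul_of_nonneg_right h1 (sq_nonneg ‖u x‖)
              have h5 : 0 ≤ 2 * (p x * ‖(χ x : ℂ) * (J x * u x + c * (f x : ℂ))‖ ^ 2) +
                2 * ‖c‖ ^ 2 * P0 ^ 2 := by positivity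
              linarith
          · rw [(hout x hx).2, indicator_of_notMem hx, (hout x hx).1]; simp
      _ = _ := by
          rw [integral_add (f := fun x => 2 * (p x * ‖(χ x : ℂ) * (J x * u x + c * (f x : ℂ))‖ ^ 2)
              + Ω.indicator (fun _ => 2 * ‖c‖ ^ 2 * P0 ^ 2) x)
            (g := fun x => P0 ^ 2 * (ζ x / φ x ^ 2 * ‖u x‖ ^ 2)) ((i2.const_mul 2).add i4)
            (i3.const_mul _),
            integral_add (f := fun x => 2 * (p x * ‖(χ x : ℂ) * (J x * u x + c * (f x : ℂ))‖ ^ 2))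
            (g := fun x => Ω.indicator (fun _ => 2 * ‖c‖ ^ 2 * P0 ^ 2) x) (i2.const_mul 2) i4, e4,
            integral_const_mul, integral_const_mul]
  have hc0 : 0 ≤ ‖c‖ ^ 2 := by positivity
  have hB1 : 2 * m + v * (2 * ‖c‖ ^ 2 * P0 ^ 2) ≤ B * (m + ‖c‖ ^ 2) := by
    have : 0 ≤ 2 * P0 ^ 2 * v * m := by positivity
    rw [hB]; nlinarith
  have h8 := mul_le_mul_of_nonneg_left (hK0.trans hB1) hCH
  have h9 := mul_le_mul_of_nonneg_left (h3.trans (add_le_add_left h8 _)) (sq_nonneg P0)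
  have h10 : 0 ≤ B * (1 + P0 ^ 2 * CH) * Y := by positivity
  have h11 : 0 ≤ 16 * P0 ^ 2 * (m + ‖c‖ ^ 2) := by positivity
  nlinarith

end

/-! ### Conclusion -/

section
variable {Ω : Set ℂ} {p : ℂ → ℝ} {lam : ℝ} {φ : ℂ → ℝ} {b n : ℂ} {r0 : ℝ}
variable {η ζ : ℂ → ℝ} {K0 : Set ℂ} {r2 M : ℝ}

theorem eigenvalueND_nonneg (hp : ∀ x ∈ Ω, 0 < p x) (hΩ : IsOpen Ω) (k : ℕ) :
    0 ≤ eigenvalueND Ω p k := by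
  refine Real.sInf_nonneg ?_
  rintro t ⟨V, -, -, rfl⟩
  refine Real.sSup_nonneg ?_
  rintro s ⟨u, -, -, rfl⟩
  refine div_nonneg (integral_nonneg fun x => ?_)
    (setIntegral_nonneg hΩ.measurableSet fun x hx => ?_)
  · rw [gradSqC_eq_kin]; exact kin_nonneg _ _ _
  · have := hp x hx; positivity

/-- The choice `ω = h²/(4 CS (2C + 1))` absorbs the error `2ω|c|²`. -/
theorem arith_final {C CS CM h c2 Qa m Y mu ω : ℝ} (hC : 0 < C) (hCS : 0 < CS) (hCM : 0 < CM)
    (hh : 0 < h) (hh1 : h ≤ 1) (hm : 0 ≤ m)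
    (hω : ω = h ^ 2 / (4 * (CS * (2 * C + 1))))
    (h1 : m ≤ C * (Qa + 2 * ω * c2)) (h2 : Y ≤ (C + 1) * (Qa + 2 * ω * c2))
    (h3 : h ^ 2 * c2 ≤ CS * (m + Y)) (h4 : mu ≤ CM * (m + c2 + Y)) :
    h ^ 2 * c2 ≤ 2 * (CS * (2 * C + 1)) * Qa ∧
    h ^ 2 * mu ≤ 2 * CM * (2 * C + 1 + CS * (2 * C + 1)) * Qa := by
  set C1 := CS * (2 * C + 1) with hC1
  have hC1p : 0 < C1 := by positivity
  set X := Qa + 2 * ω * c2 with hX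
  have hmY : m + Y ≤ (2 * C + 1) * X := by linarith
  have h5 : h ^ 2 * c2 ≤ C1 * X := by
    have := mul_le_mul_of_nonneg_left hmY hCS.le
    rw [hC1, mul_assoc]; linarith
  have hX0 : 0 ≤ X := by
    by_contra hneg; push Not at hneg; nlinarith
  have e : C1 * (2 * ω * c2) = h ^ 2 * c2 / 2 := by rw [hω]; field_simp; ring
  have h6 : X ≤ 2 * Qa := by
    have : C1 * X ≤ C1 * (2 * Qa) := by rw [hX] at h5 ⊢; nlinarith
    exact le_of_mul_le_mul_left this hC1p
  have h7 : C1 * X ≤ C1 * (2 * Qa) := mul_le_mul_of_nonneg_left h6 hC1p.le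
  refine ⟨by linarith, ?_⟩
  have hh2 : h ^ 2 ≤ 1 := by nlinarith
  have h8 : h ^ 2 * (m + Y) ≤ (2 * C + 1) * X := by
    have h9 : h ^ 2 * (m + Y) ≤ h ^ 2 * ((2 * C + 1) * X) :=
      mul_le_mul_of_nonneg_left hmY (by positivity)
    have h10 : 0 ≤ (2 * C + 1) * X := by positivity
    nlinarith
  have h11 := mul_le_mul_of_nonneg_left h4 (sq_nonneg h)
  have h12 : h ^ 2 * (m + c2 + Y) ≤ (2 * C + 1 + C1) * (2 * Qa) := by
    have h13 : (2 * C + 1) * X ≤ (2 * C + 1) * (2 * Qa) :=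
      mul_le_mul_of_nonneg_left h6 (by positivity)
    linarith
  have h14 := mul_le_mul_of_nonneg_left h12 hCM.le
  linarith

/-- The fixed cutoffs exist, and `K0` contains a ball at depth `s0` in the normal direction. -/
theorem exists_frame (L : Loc Ω φ b n r0) : ∃ η ζ K0 r2 M s0, Frame Ω φ b n r0 η ζ K0 r2 M ∧
    0 < s0 ∧ s0 ≤ r0 / 40 ∧ Metric.closedBall (b + (s0 : ℂ) * n) (s0 / 2) ⊆ K0 := by
  obtain ⟨η, h1, h2, h3, h4, h5⟩ := exists_eta L
  obtain ⟨ζ, K0, r2, M, s0, g1, g2, g3, g4, g5, g6, g7, g8, g9, g10, g11, g12, g13, hs⟩ :=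
    exists_zeta L
  exact ⟨η, ζ, K0, r2, M, s0,
    ⟨h1, h2, h3, h4, h5, g1, g2, g3, g4, g5, g6, g7, g8, g9, g10, g11, g12, g13⟩, hs⟩

set_option maxHeartbeats 1000000 in
/-- The theorem for an eigenfunction normalised as in `Loc`. -/
theorem main_core {k : ℕ} (H : Eig Ω p (eigenvalueND Ω p k) φ) (L : Loc Ω φ b n r0)
    (hs : IsSimplyConnected Ω) (hk : 1 ≤ k)
    (hgap : eigenvalueND Ω p k < eigenvalueND Ω p (k + 1)) :
    ∃ C > (0 : ℝ), ∃ δ > (0 : ℝ), ∀ a ∈ Ω, dist a b < δ →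
      eigenvalueND Ω p k + C * Metric.infDist a (frontier Ω) ^ 2 ≤ eigenvalueAB Ω p a k := by
  set lam := eigenvalueND Ω p k with hlam
  obtain ⟨η, ζ, K0, r2, M, s0, Fr, hs0, hs0r, hsK⟩ := exists_frame L
  have hr0 := L.r0_pos
  obtain ⟨g, hg⟩ : ∃ g, g = (eigenvalueND Ω p (k + 1) - lam) / 2 := ⟨_, rfl⟩
  have hg0 : 0 < g := by rw [hg]; linarith
  obtain ⟨ε1, C, hε1, hC, hcut⟩ := cutoff_bound H L Fr hg0
  obtain ⟨ρ, o, χ, σ, χ2, Ct⟩ := exists_cut L Fr.r2_pos Fr.r2_le hε1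
  obtain ⟨CS, hCS, hsink⟩ := sink_bound H L Fr hs0 hs0r hsK
  obtain ⟨CM, hCM, hmass⟩ := mass_bound H L Fr
  have hρ := Ct.ρ_pos
  set C2 := 2 * CM * (2 * C + 1 + CS * (2 * C + 1)) with hC2
  have hC2p : 0 < C2 := by positivity
  refine ⟨1 / (4 * C2), by positivity, min (s0 / 32) (min (ρ / 80) (1 / 2)), by positivity, ?_⟩
  intro a ha hab
  rw [dist_eq_norm, lt_min_iff, lt_min_iff] at hab
  obtain ⟨hab1, hab2, hab3⟩ := hab
  have hh : 0 < φ a := L.pos a ha (by linarith)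
  have hh2 := L.φ_le ha (by linarith)
  have hd := L.dist a ha (by linarith)
  have hd0 : 0 ≤ Metric.infDist a (frontier Ω) := Metric.infDist_nonneg
  have hao : ‖a - o‖ ≤ ρ / 8 := by
    have := norm_sub_le_norm_sub_add_norm_sub a b o
    rw [norm_sub_rev b o, Ct.o_dist] at this
    linarith
  have ha'o : ‖a - ((2 * φ a : ℝ) : ℂ) * n - o‖ ≤ ρ / 8 := by
    have h1 := norm_real_mul L.norm_n (s := 2 * φ a) (by positivity)
    have e : a - ((2 * φ a : ℝ) : ℂ) * n - o =
      ((a - b) - (o - b)) - ((2 * φ a : ℝ) : ℂ) * n := by ring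
    have h2 := norm_sub_le ((a - b) - (o - b)) (((2 * φ a : ℝ) : ℂ) * n)
    have h3 := norm_sub_le (a - b) (o - b)
    rw [e]
    rw [Ct.o_dist] at h3
    linarith
  obtain ⟨J, hJ1, hJ2, hJ3⟩ := exists_gauge H.isOpen hs hρ (L.down a ha (by linarith)) hao ha'o
    Ct.χ2_smooth Ct.χ2_range Ct.χ2_far Ct.χ2_near
  have G : Gauge Ω a o ρ J := ⟨hJ1, hJ2, hJ3⟩
  refine final_reduce H.isOpen H.pCΩ H.ppos ⟨a, ha⟩ hk fun V hV hT => ?_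
  have hTΩ : ∀ u ∈ V, Test Ω u := fun u hu => (hT u hu).mono sdiff_subset
  obtain ⟨K, hK, hKΩ, hVK, -⟩ := exists_common_support hV hk hTΩ
  obtain ⟨ω, hω⟩ : ∃ ω, ω = φ a ^ 2 / (4 * (CS * (2 * C + 1))) := ⟨_, rfl⟩
  have hω0 : 0 < ω := by rw [hω]; positivity
  obtain ⟨f, hfs, hf, ⟨N, hN, hKN, hfN⟩, hfφ, hf1, hf2⟩ := H.approx Fr.η_smooth Fr.η_range (Fr.η_ne L)
    (hK.union Fr.K0_compact) (union_subset hKΩ Fr.K0_sub) hω0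
  have hψ : ∀ z : V × ℂ, Test Ω (fun x => J x * (z.1 : ℂ → ℂ) x + z.2 * (f x : ℂ)) := by
    intro z
    have hJu := (Test.smul_smooth H.isOpen hJ1 (hTΩ _ z.1.2)).1
    have hcf := (Test.smul_smooth H.isOpen (f := fun _ => z.2) contDiffOn_const hf).1
    refine ⟨hJu.1.add hcf.1, hJu.2.1.add hcf.2.1, ?_⟩
    exact (tsupport_add _ _).trans (union_subset hJu.2.2 hcf.2.2)
  let T : V × ℂ →ₗ[ℂ] (ℂ → ℂ) :=
    { toFun := fun z x => (χ x : ℂ) * (J x * (z.1 : ℂ → ℂ) x + z.2 * (f x : ℂ))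
      map_add' := fun z w => by
        ext x; simp; ring
      map_smul' := fun r z => by
        ext x; simp; ring }
  obtain ⟨z, hz, hzT⟩ := minmax_test H.ppos hk hV T (fun z => (Ct.testχ H (hψ z)).1)
    (s := lam + g) (by rw [hg]; linarith)
  obtain ⟨⟨u, huV⟩, c⟩ := z
  have hu := hT u huV
  have hψz : Test Ω (fun x => J x * u x + c * (f x : ℂ)) := hψ ⟨⟨u, huV⟩, c⟩
  obtain ⟨hm, hZ⟩ := hcut ρ o χ σ χ2 Ct _ hψz hzT
  obtain ⟨k1, k2⟩ := key1 H L Fr Ct G hu hf hN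
    (((hVK u huV).trans subset_union_left).trans hKN) hfN c hf1 hf2 hC hm hZ
  have k3 := hsink ε1 ρ o χ σ χ2 Ct a ha hab1 (by linarith) J G u hu f c
    (fun x hx => hfN x (hKN (Or.inr hx))) hψz
  have k4 := hmass ε1 ρ o χ σ χ2 Ct a J G u hu f c hfφ hψz
  obtain ⟨r1, r2⟩ := arith_final hC hCS hCM hh (by linarith)
    (m_nonneg H.ppos (Ct.testχ H hψz).1.2.2) hω k1 k2 k3 k4
  refine ⟨u, huV, ?_, ?_⟩
  · rintro rfl
    have h0 : kin (abPot a) (0 : ℂ → ℂ) = 0 := by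
      ext x
      exact kin_off (by simp [tsupport, Function.support_zero])
    rw [h0] at r1
    simp at r1
    have h1 : φ a ^ 2 * ‖c‖ ^ 2 = 0 := le_antisymm r1 (by positivity)
    have h2 : c = 0 := by
      rcases mul_eq_zero.1 h1 with h | h
      · exact absurd h (by positivity)
      · simpa using h
    exact hz (by rw [h2]; rfl)
  · have hm0 := m_nonneg (u := u) H.ppos (hu.2.2.trans sdiff_subset)
    set mu := ∫ x, p x * ‖u x‖ ^ 2
    have h1 : Metric.infDist a (frontier Ω) ^ 2 ≤ 4 * φ a ^ 2 := by nlinarith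
    have h2 : 1 / (4 * C2) * Metric.infDist a (frontier Ω) ^ 2 * mu ≤
        1 / C2 * (φ a ^ 2 * mu) := by
      have h3 : 1 / (4 * C2) * Metric.infDist a (frontier Ω) ^ 2 ≤ 1 / (4 * C2) * (4 * φ a ^ 2) :=
        mul_le_mul_of_nonneg_left h1 (by positivity)
      have h4 := mul_le_mul_of_nonneg_right h3 hm0
      have e : 1 / (4 * C2) * (4 * φ a ^ 2) * mu = 1 / C2 * (φ a ^ 2 * mu) := by field_simp
      linarith
    have h5 := mul_le_mul_of_nonneg_left r2 (show 0 ≤ 1 / C2 by positivity)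
    rw [← mul_assoc (1 / C2) C2, one_div_mul_cancel hC2p.ne', one_mul] at h5
    linarith

end

/-- Convergence from above with rate `dist(a,∂Ω)²` when the pole approaches a boundary
point `b` at which no nodal line of `φ_k` ends: if `λ_k` is simple and the
eigenfunction `φ_k` has a zero of order `1` at `b ∈ ∂Ω` (it is `C¹` up to the boundary
near `b`, vanishes at `b`, and has nonvanishing gradient there), then
`λ_k^a ≥ λ_k + C·dist(a,∂Ω)²` for all `a ∈ Ω` close to `b`. -/
theorem eigenvalue_lower_bound_no_nodal_line
    (Ω : Set ℂ) (hΩopen : IsOpen Ω) (hΩbd : Bornology.IsBounded Ω)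
    (hΩsc : SimplyConnectedSpace Ω) (hΩbdry : HasSmoothBoundary Ω)
    (p : ℂ → ℝ) (hpC : ContDiffOn ℝ (⊤ : ℕ∞) p (closure Ω)) (hppos : ∀ x ∈ Ω, 0 < p x)
    (k : ℕ) (hk : 1 ≤ k)
    (hsimple₁ : 2 ≤ k → eigenvalueND Ω p (k - 1) < eigenvalueND Ω p k)
    (hsimple₂ : eigenvalueND Ω p k < eigenvalueND Ω p (k + 1))
    (φ : ℂ → ℝ) (hφ : IsDirichletEigenfunction Ω p (eigenvalueND Ω p k) φ)
    (b : ℂ) (hb : b ∈ frontier Ω)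
    (hzero : ∃ (U : Set ℂ) (g : ℂ → ℝ), U ∈ nhds b ∧ ContDiff ℝ 1 g ∧
      Set.EqOn g φ (closure Ω ∩ U) ∧ g b = 0 ∧ fderiv ℝ g b ≠ 0) :
    ∃ C > (0 : ℝ), ∃ δ > (0 : ℝ), ∀ a ∈ Ω, dist a b < δ →
      eigenvalueAB Ω p a k ≥
        eigenvalueND Ω p k + C * Metric.infDist a (frontier Ω) ^ 2 := by
  obtain ⟨-, hsm, hcont, h0, heq⟩ := hφ
  have H : Eig Ω p (eigenvalueND Ω p k) φ :=
    ⟨hΩopen, hΩbd, hpC.continuousOn, hppos, eigenvalueND_nonneg hppos hΩopen k, hsm, hcont, h0, heq⟩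
  have hz : HasBoundaryZero Ω φ b 1 := by
    obtain ⟨U, g, hU, hg, hgφ, hgb, hdg⟩ := hzero
    refine ⟨U, g, hU, by exact_mod_cast hg, hgφ, ?_, ?_⟩
    · intro j hj
      obtain rfl : j = 0 := by omega
      ext m
      simp [hgb]
    · intro h
      apply hdg
      ext v
      have := congrArg (fun L => L (fun _ => v)) h
      simpa [iteratedFDeriv_one_apply] using this
  obtain ⟨c, -, n, r, L⟩ := exists_loc hΩopen hb hΩbdry h0 hz
  exact main_core (H.scale c) L (show IsSimplyConnected Ω from hΩsc) hk hsimple₂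

end
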